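/- arXiv:2508.04209 — 6 statements merged into one kernel-verified Lean document; each statement's English description precedes it below -/
import Mathlib

section
/- Let G = (V,E) be a finite simple graph with |V| = n, and let k be an integer with 1 ≤ k ≤ n/2. Then the sum of the k largest eigenvalues of the Laplacian matrix of G is at most the sum of the 2k largest vertex degrees of G: ∑_{i=1}^{k} λ_i(L(G)) ≤ ∑_{i=1}^{2k} d_i(G). -/
open Finset

/-- The `i`-th largest entry (1-indexed, so `i = 1` gives the maximum) of a tuple
`f : Fin n → ℝ`, counted with multiplicity. Junk value `0` outside the range `1 ≤ i ≤ n`. -/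
noncomputable def ithLargest {n : ℕ} (f : Fin n → ℝ) (i : ℕ) : ℝ :=
  if h : 1 ≤ i ∧ i ≤ n then f (Tuple.sort f (Fin.rev ⟨i - 1, by omega⟩)) else 0

/-- The eigenvalues of the Laplacian matrix of a finite simple graph `G`
(as a tuple indexed by the vertices, with multiplicity). -/
noncomputable def lapEigs {n : ℕ} (G : SimpleGraph (Fin n)) [DecidableRel G.Adj] :
    Fin n → ℝ :=
  (SimpleGraph.posSemidef_lapMatrix ℝ G).isHermitian.eigenvalues

/-- The degree sequence of `G`, as a real-valued tuple indexed by the vertices. -/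
noncomputable def degTuple {n : ℕ} (G : SimpleGraph (Fin n)) [DecidableRel G.Adj] :
    Fin n → ℝ :=
  fun v => (G.degree v : ℝ)

theorem aux_top {n : ℕ} (f : Fin n → ℝ) (m : ℕ) (h1 : 1 ≤ m) (h2 : m ≤ n) :
    ∃ T : Finset (Fin n), T.card = m ∧
      ∑ i ∈ Finset.Icc 1 m, ithLargest f i = ∑ v ∈ T, f v ∧
      ∃ v0, (∀ v ∈ T, f v0 ≤ f v) ∧ (∀ v, v ∉ T → f v ≤ f v0) := by
  classical
  let e : Fin n ≃ Fin n := Fin.revPerm.trans (Tuple.sort f)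
  have he : ∀ j, e j = Tuple.sort f (Fin.rev j) := fun j => rfl
  have hmono : ∀ i j : Fin n, i ≤ j → f (e j) ≤ f (e i) := by
    intro i j hij
    rw [he, he]
    exact Tuple.monotone_sort f (Fin.rev_le_rev.mpr hij)
  let T0 : Finset (Fin n) := Finset.univ.filter (fun j => j.val < m)
  have hsum : ∑ i ∈ Finset.Icc 1 m, ithLargest f i = ∑ j ∈ T0, f (e j) := by
    symm
    refine Finset.sum_bij (fun j _ => j.val + 1) ?_ ?_ ?_ ?_
    · intro j hj
      simp only [T0, Finset.mem_filter, Finset.mem_univ, true_and] at hj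
      simp only [Finset.mem_Icc]; omega
    · intro a _ b _ h
      apply Fin.ext; omega
    · intro i hi
      simp only [Finset.mem_Icc] at hi
      refine ⟨⟨i - 1, by omega⟩, ?_, ?_⟩
      · simp only [T0, Finset.mem_filter, Finset.mem_univ, true_and]; omega
      · simp only []; omega
    · intro j hj
      have : 1 ≤ j.val + 1 ∧ j.val + 1 ≤ n := by omega
      rw [ithLargest, dif_pos this, he]
      rfl
  have hcard : T0.card = m := by
    have : T0 = (Finset.univ : Finset (Fin m)).map (Fin.castLEEmb h2) := by
      ext j
      simp only [T0, Finset.mem_filter, Finset.mem_univ, true_and, Finset.mem_map]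
      constructor
      · intro h; exact ⟨⟨j.val, h⟩, rfl⟩
      · rintro ⟨a, rfl⟩; exact a.2
    rw [this]; simp
  refine ⟨T0.map e.toEmbedding, by simp [hcard], by simp [hsum], e ⟨m - 1, by omega⟩, ?_, ?_⟩
  · intro v hv
    simp only [Finset.mem_map, T0, Finset.mem_filter, Finset.mem_univ, true_and] at hv
    obtain ⟨j, hj, rfl⟩ := hv
    apply hmono
    rw [Fin.le_def]; simp only []; omega
  · intro v hv
    obtain ⟨j, rfl⟩ := e.surjective v
    apply hmono
    have : ¬ (j.val < m) := by
      intro h; apply hv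
      simp only [Finset.mem_map, T0, Finset.mem_filter, Finset.mem_univ, true_and]
      exact ⟨j, h, rfl⟩
    rw [Fin.le_def]; simp only []; omega

theorem aux_weight {n : ℕ} (f w : Fin n → ℝ) (m : ℕ) (h1 : 1 ≤ m) (h2 : m ≤ n)
    (hf : ∀ v, 0 ≤ f v) (w0 : ∀ v, 0 ≤ w v) (w1 : ∀ v, w v ≤ 1) (hw : ∑ v, w v ≤ m) :
    ∑ v, f v * w v ≤ ∑ i ∈ Finset.Icc 1 m, ithLargest f i := by
  classical
  obtain ⟨T, hT, hs, v0, ha, hb⟩ := aux_top f m h1 h2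
  rw [hs]
  have e1 : ∑ v ∈ T, f v = ∑ v, if v ∈ T then f v else 0 := by simp
  have e2 : (m : ℝ) = ∑ v, if v ∈ T then (1 : ℝ) else 0 := by simp [hT]
  have key : ∑ v, (f v * w v - f v0 * w v) ≤
      ∑ v, ((if v ∈ T then f v else 0) - f v0 * (if v ∈ T then (1 : ℝ) else 0)) := by
    apply Finset.sum_le_sum
    intro v _
    by_cases h : v ∈ T
    · simp only [h, if_true]
      nlinarith [ha v h, w1 v]
    · simp only [h, if_false]
      nlinarith [hb v h, w0 v]
  rw [Finset.sum_sub_distrib, Finset.sum_sub_distrib, ← Finset.mul_sum, ← Finset.mul_sum,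
    ← e1, ← e2] at key
  nlinarith [mul_le_mul_of_nonneg_left hw (hf v0)]

theorem aux_proj {n : ℕ} (P : Fin n → Fin n → ℝ) (hs : ∀ u v, P u v = P v u)
    (hP : ∀ u v, ∑ t, P u t * P v t = P u v) :
    ∃ w : Fin n → ℝ, (∀ v, 0 ≤ w v) ∧ (∀ v, w v ≤ 1) ∧ ∑ v, w v ≤ 2 * ∑ v, P v v ∧
      ∀ u v, u ≠ v → P u u + P v v - 2 * P u v ≤ w u + w v := by
  classical
  have hsq : ∀ u, ∑ t, P u t ^ 2 = P u u := by
    intro u; rw [← hP u u]; exact Finset.sum_congr rfl (fun t _ => sq _)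
  have a0 : ∀ u, 0 ≤ P u u := by
    intro u; rw [← hsq u]; exact Finset.sum_nonneg (fun t _ => sq_nonneg _)
  have a1 : ∀ u, P u u ≤ 1 := by
    intro u
    have : P u u ^ 2 ≤ P u u := by
      conv_rhs => rw [← hsq u]
      exact Finset.single_le_sum (f := fun t => P u t ^ 2) (fun t _ => sq_nonneg _)
        (Finset.mem_univ u)
    nlinarith
  have cs : ∀ u v, P u v ^ 2 ≤ P u u * P v v := by
    intro u v
    rw [← hP u v, ← hsq u, ← hsq v]
    exact Finset.sum_mul_sq_le_sq_mul_sq _ _ _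
  have m2 : ∀ u v, u ≠ v → P u u + P v v - 2 * P u v ≤ 2 := by
    intro u v huv
    have e : ∑ t, (P u t - P v t) ^ 2 = P u u + P v v - 2 * P u v := by
      rw [← hsq u, ← hsq v, ← hP u v, Finset.mul_sum, ← Finset.sum_add_distrib,
        ← Finset.sum_sub_distrib]
      exact Finset.sum_congr rfl (fun t _ => by ring)
    have h2 : ∑ t ∈ ({u, v} : Finset (Fin n)), (P u t - P v t) ^ 2 ≤
        ∑ t, (P u t - P v t) ^ 2 :=
      Finset.sum_le_sum_of_subset_of_nonneg (Finset.subset_univ _)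
        (fun t _ _ => sq_nonneg _)
    rw [Finset.sum_pair huv, e, hs v u] at h2
    nlinarith [sq_nonneg ((P u u - P u v) + (P u v - P v v))]
  have m3 : ∀ u v, P u u + P v v - 2 * P u v ≤ 2 * P u u + 2 * P v v := by
    intro u v
    have h1 := cs u v
    have : |2 * P u v| ≤ P u u + P v v := by
      apply abs_le_of_sq_le_sq _ (by linarith [a0 u, a0 v])
      nlinarith [sq_nonneg (P u u - P v v)]
    linarith [(abs_le.mp this).1]
  let g : Fin n → Fin n → ℝ := fun u v =>
    (P u v ^ 2 / P u u) * ((2 * P u u - 1) / (1 - P u u))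
  let H : Finset (Fin n) := Finset.univ.filter (fun u => 1 / 2 < P u u)
  have hH : ∀ u, u ∈ H ↔ 1 / 2 < P u u := by intro u; simp [H]
  have g0 : ∀ u ∈ H, ∀ v, 0 ≤ g u v := by
    intro u hu v
    have := (hH u).1 hu
    apply mul_nonneg
    · exact div_nonneg (sq_nonneg _) (a0 u)
    · exact div_nonneg (by linarith) (by linarith [a1 u])
  have off : ∀ u, ∑ v ∈ Finset.univ.erase u, P u v ^ 2 = P u u * (1 - P u u) := by
    intro u
    have := Finset.add_sum_erase Finset.univ (fun v => P u v ^ 2) (Finset.mem_univ u)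
    simp only [hsq] at this
    linarith
  have gsum : ∀ u ∈ H, ∑ v ∈ Hᶜ, g u v ≤ 2 * P u u - 1 := by
    intro u hu
    have hu' := (hH u).1 hu
    have h1 : ∑ v ∈ Hᶜ, g u v ≤ ∑ v ∈ Finset.univ.erase u, g u v := by
      apply Finset.sum_le_sum_of_subset_of_nonneg
      · intro v hv
        simp only [Finset.mem_erase, Finset.mem_univ, and_true]
        rintro rfl
        exact (Finset.mem_compl.1 hv) hu
      · intro v _ _; exact g0 u hu v
    refine h1.trans ?_
    simp only [g]
    rw [← Finset.sum_mul, ← Finset.sum_div, off]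
    rcases eq_or_lt_of_le (a1 u) with h | h
    · simp [h]
    · have : P u u ≠ 0 := by linarith
      have : 1 - P u u ≠ 0 := by linarith
      apply le_of_eq; field_simp
  have gb : ∀ u ∈ H, ∀ v, u ≠ v → P u u - 1 - 2 * P u v - P v v ≤ g u v := by
    intro u hu v huv
    have hu' := (hH u).1 hu
    rcases eq_or_lt_of_le (a1 u) with h | h
    · have h3 : P u v ^ 2 ≤ ∑ v ∈ Finset.univ.erase u, P u v ^ 2 :=
        Finset.single_le_sum (f := fun t => P u t ^ 2) (fun t _ => sq_nonneg _)
          (by simp [huv.symm])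
      rw [off, h] at h3
      have h4 : P u v = 0 := by nlinarith
      simp only [g, h, h4]
      norm_num; exact a0 v
    · have hb : P u v ^ 2 / P u u ≤ P v v := by
        rw [div_le_iff₀ (by linarith)]; linarith [cs u v]
      have key : g u v - (P u u - 1 - 2 * P u v - P u v ^ 2 / P u u) =
          ((1 - P u u) + P u v) ^ 2 / (1 - P u u) := by
        have : P u u ≠ 0 := by linarith
        have : 1 - P u u ≠ 0 := by linarith
        simp only [g]; field_simp; ring
      have : 0 ≤ ((1 - P u u) + P u v) ^ 2 / (1 - P u u) :=
        div_nonneg (sq_nonneg _) (by linarith)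
      linarith
  let w : Fin n → ℝ := fun v =>
    if v ∈ H then 1 else min 1 (2 * P v v + ∑ u ∈ H, g u v)
  have wH : ∀ v, v ∈ H → w v = 1 := fun v h => by simp [w, h]
  have wL : ∀ v, v ∉ H → w v = min 1 (2 * P v v + ∑ u ∈ H, g u v) := fun v h => by simp [w, h]
  have gs0 : ∀ v, 0 ≤ ∑ u ∈ H, g u v := fun v => Finset.sum_nonneg (fun u hu => g0 u hu v)
  have wlow : ∀ v, v ∉ H → 2 * P v v ≤ w v := by
    intro v hv
    rw [wL v hv]
    apply le_min
    · have := mt (hH v).2 hv; linarith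
    · linarith [gs0 v]
  have hl : ∀ u v, u ∈ H → v ∉ H → P u u + P v v - 2 * P u v ≤ w u + w v := by
    intro u v hu hv
    have huv : u ≠ v := by rintro rfl; exact hv hu
    rw [wH u hu, wL v hv]
    have : P u u + P v v - 2 * P u v - 1 ≤ min 1 (2 * P v v + ∑ u ∈ H, g u v) := by
      apply le_min
      · linarith [m2 u v huv]
      · have := gb u hu v huv
        have h2 := Finset.single_le_sum (f := fun u => g u v) (fun t ht => g0 t ht v) hu
        linarith
    linarith
  refine ⟨w, ?_, ?_, ?_, ?_⟩
  · intro v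
    by_cases h : v ∈ H
    · rw [wH v h]; norm_num
    · linarith [wlow v h, a0 v]
  · intro v
    by_cases h : v ∈ H
    · rw [wH v h]
    · rw [wL v h]; exact min_le_left _ _
  · rw [← Finset.sum_add_sum_compl H, ← Finset.sum_add_sum_compl H (fun v => P v v)]
    have s1 : ∑ v ∈ Hᶜ, w v ≤ ∑ v ∈ Hᶜ, (2 * P v v + ∑ u ∈ H, g u v) := by
      apply Finset.sum_le_sum
      intro v hv
      rw [wL v (Finset.mem_compl.1 hv)]; exact min_le_right _ _
    rw [Finset.sum_add_distrib, ← Finset.mul_sum, Finset.sum_comm] at s1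
    have s2 : ∑ u ∈ H, ∑ v ∈ Hᶜ, g u v ≤ ∑ u ∈ H, (2 * P u u - w u) := by
      apply Finset.sum_le_sum
      intro u hu
      rw [wH u hu]; exact gsum u hu
    rw [Finset.sum_sub_distrib, ← Finset.mul_sum] at s2
    linarith
  · intro u v huv
    by_cases hu : u ∈ H <;> by_cases hv : v ∈ H
    · rw [wH u hu, wH v hv]; linarith [m2 u v huv]
    · exact hl u v hu hv
    · have := hl v u hv hu
      rw [hs v u] at this; linarith
    · linarith [m3 u v, wlow u hu, wlow v hv]

theorem aux_quad {n : ℕ} (G : SimpleGraph (Fin n)) [DecidableRel G.Adj] (i : Fin n) :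
    lapEigs G i = (∑ u, ∑ v, if G.Adj u v then
      ((SimpleGraph.posSemidef_lapMatrix ℝ G).isHermitian.eigenvectorBasis i u -
       (SimpleGraph.posSemidef_lapMatrix ℝ G).isHermitian.eigenvectorBasis i v) ^ 2 else 0) / 2 := by
  set hA := (SimpleGraph.posSemidef_lapMatrix ℝ G).isHermitian with hAdef
  have h1 := SimpleGraph.lapMatrix_toLinearMap₂' ℝ G (fun u => hA.eigenvectorBasis i u)
  rw [← h1, Matrix.toLinearMap₂'_apply']
  have h2 := hA.mulVec_eigenvectorBasis i
  have h3 : (fun u => hA.eigenvectorBasis i u) = ⇑(hA.eigenvectorBasis i) := rfl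
  rw [h3, h2, dotProduct_smul]
  have h4 : (hA.eigenvectorBasis i : Fin n → ℝ) ⬝ᵥ (hA.eigenvectorBasis i) = 1 := by
    have := hA.eigenvectorBasis.orthonormal.1 i
    have h5 := EuclideanSpace.real_norm_sq_eq (hA.eigenvectorBasis i)
    rw [this] at h5
    simp only [dotProduct, ← sq]
    rw [← h5]; norm_num
  rw [h4]
  simp [lapEigs, hA]

theorem sum_lapEigs_le_sum_degrees {n : ℕ} (G : SimpleGraph (Fin n)) [DecidableRel G.Adj]
    (k : ℕ) (hk1 : 1 ≤ k) (hk2 : k ≤ n / 2) :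
    ∑ i ∈ Finset.Icc 1 k, ithLargest (lapEigs G) i ≤
      ∑ i ∈ Finset.Icc 1 (2 * k), ithLargest (degTuple G) i := by
  classical
  obtain ⟨S, hS, hsum, -⟩ := aux_top (lapEigs G) k hk1 (by omega)
  rw [hsum]
  let b := (SimpleGraph.posSemidef_lapMatrix ℝ G).isHermitian.eigenvectorBasis
  have orth : ∀ i j, ∑ t, b i t * b j t = if i = j then 1 else 0 := by
    intro i j
    have := orthonormal_iff_ite.1 b.orthonormal i j
    rw [← this, PiLp.inner_apply]
    apply Finset.sum_congr rfl
    intro t _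
    simp [mul_comm]
  let P : Fin n → Fin n → ℝ := fun u v => ∑ i ∈ S, b i u * b i v
  have hs : ∀ u v, P u v = P v u := by
    intro u v
    exact Finset.sum_congr rfl (fun i _ => mul_comm _ _)
  have hP : ∀ u v, ∑ t, P u t * P v t = P u v := by
    intro u v
    simp only [P, Finset.sum_mul_sum]
    rw [Finset.sum_comm]
    apply Finset.sum_congr rfl
    intro i hi
    rw [Finset.sum_comm]
    have : ∀ j ∈ S, ∑ t, b i u * b i t * (b j v * b j t) =
        if i = j then b i u * b j v else 0 := by
      intro j _
      have h := orth i j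
      calc _ = b i u * b j v * ∑ t, b i t * b j t := by
            rw [Finset.mul_sum]; exact Finset.sum_congr rfl (fun t _ => by ring)
        _ = _ := by rw [h]; simp
    rw [Finset.sum_congr rfl this]
    simp [hi]
  have htr : ∑ v, P v v = k := by
    simp only [P]
    rw [Finset.sum_comm]
    simp [orth, hS]
  obtain ⟨w, w0, w1, hw, hM⟩ := aux_proj P hs hP
  rw [htr] at hw
  refine le_trans ?_ (aux_weight (degTuple G) w (2 * k) (by omega) (by omega)
    (fun v => Nat.cast_nonneg _) w0 w1 (by push_cast; exact hw))
  have e1 : ∑ i ∈ S, lapEigs G i =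
      (∑ u, ∑ v, if G.Adj u v then P u u + P v v - 2 * P u v else 0) / 2 := by
    rw [Finset.sum_congr rfl (fun i _ => aux_quad G i), ← Finset.sum_div, Finset.sum_comm]
    congr 1
    apply Finset.sum_congr rfl; intro u _
    rw [Finset.sum_comm]
    apply Finset.sum_congr rfl; intro v _
    split_ifs
    · simp only [P]
      rw [Finset.mul_sum, ← Finset.sum_add_distrib, ← Finset.sum_sub_distrib]
      apply Finset.sum_congr rfl; intro i _
      simp only [b]; ring
    · simp
  have e2 : ∑ u, ∑ v, (if G.Adj u v then w u else 0) = ∑ v, degTuple G v * w v := by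
    apply Finset.sum_congr rfl; intro u _
    rw [← Finset.sum_filter, Finset.sum_const, nsmul_eq_mul, ← SimpleGraph.neighborFinset_eq_filter]
    rfl
  have e3 : ∑ u, ∑ v, (if G.Adj u v then w v else 0) = ∑ v, degTuple G v * w v := by
    rw [Finset.sum_comm, ← e2]
    simp only [G.adj_comm]
  have e4 : ∑ u, ∑ v, (if G.Adj u v then P u u + P v v - 2 * P u v else 0) ≤
      ∑ u, ∑ v, ((if G.Adj u v then w u else 0) + (if G.Adj u v then w v else 0)) := by
    apply Finset.sum_le_sum; intro u _
    apply Finset.sum_le_sum; intro v _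
    split_ifs with h
    · exact hM u v h.ne
    · simp
  simp only [Finset.sum_add_distrib] at e4
  rw [e2, e3] at e4
  rw [e1]
  linarith
end

section
/- Let k ≥ 1 and let G = (V,E) be a finite simple graph with |V| ≥ k. Then ∑_{i=1}^{k} λ_i(L(G)) ≤ |E| + k². -/
open Finset

lemma aux_poly (A B : ℝ) (hA : 0 ≤ A) (hB : 0 ≤ B) (hA1 : A ≤ 1) (hB1 : B ≤ 1) :
    A * B ≤ (5/4 * (A + B) - 3/2 * (A * B)) * (1/2 - 1/2 * (A + B) + 3/2 * (A * B)) := by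
  have h1 : 0 ≤ A * B := mul_nonneg hA hB
  have h2 : 0 ≤ (1 - A) * (1 - B) := mul_nonneg (by linarith) (by linarith)
  have h3 : 4 * (A * B) ≤ (A + B) ^ 2 := by nlinarith [sq_nonneg (A - B)]
  have h4 : 0 ≤ A * (1 - B) := mul_nonneg hA (by linarith)
  have h5 : 0 ≤ B * (1 - A) := mul_nonneg hB (by linarith)
  nlinarith [mul_nonneg h1 h2, mul_nonneg h1 h4, mul_nonneg h1 h5, mul_nonneg h2 h4, mul_nonneg h2 h5, mul_nonneg h4 h5, mul_nonneg h1 h1, mul_nonneg h2 h2, sq_nonneg (A - B), sq_nonneg (A + B - 1), mul_nonneg h1 (sq_nonneg (A-B)), mul_nonneg h2 (sq_nonneg (A-B)), sq_nonneg (A*B - (1-A)*(1-B)), sq_nonneg (A+B-2*A*B)]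

noncomputable def auxPhi (a : ℝ) : ℝ := 5/4 * (1 - a)⁻¹ - 3/4

lemma auxPhi_nonneg {a : ℝ} (h0 : 0 ≤ a) (h1 : a < 1) : 0 ≤ auxPhi a := by
  have : 1 ≤ (1 - a)⁻¹ := (one_le_inv₀ (by linarith)).2 (by linarith)
  unfold auxPhi; linarith

lemma auxPhi_mul (a : ℝ) (h1 : a ≤ 1) : (a - a ^ 2) * auxPhi a ≤ a / 2 + 3/4 * a ^ 2 := by
  unfold auxPhi
  rcases h1.eq_or_lt with rfl | h
  · norm_num
  · have : 1 - a ≠ 0 := by linarith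
    apply le_of_eq
    field_simp
    ring

lemma aux_pt (a b g : ℝ) (ha : 0 ≤ a) (hb : 0 ≤ b) (ha1 : a ≤ 1) (hb1 : b ≤ 1)
    (hga : a ^ 2 + g ^ 2 ≤ a) (hgb : b ^ 2 + g ^ 2 ≤ b) :
    0 ≤ 3/2 * (a * b) + g ^ 2 * (auxPhi a + auxPhi b) ∧
    a + b - 1 - 2 * g ≤ 3/2 * (a * b) + g ^ 2 * (auxPhi a + auxPhi b) := by
  have hab := mul_nonneg ha hb
  rcases ha1.eq_or_lt with rfl | ha'
  · have : g = 0 := by nlinarith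
    subst this
    constructor <;> nlinarith
  rcases hb1.eq_or_lt with rfl | hb'
  · have : g = 0 := by nlinarith
    subst this
    constructor <;> nlinarith
  refine ⟨?_, ?_⟩
  · have := auxPhi_nonneg ha ha'
    have := auxPhi_nonneg hb hb'
    positivity
  obtain ⟨A, rfl⟩ : ∃ A, a = 1 - A := ⟨1 - a, by ring⟩
  obtain ⟨B, rfl⟩ : ∃ B, b = 1 - B := ⟨1 - b, by ring⟩
  have hA : 0 < A := by linarith
  have hB : 0 < B := by linarith
  have hp := aux_poly A B hA.le hB.le (by linarith) (by linarith)
  have hAB : 0 < A * B := by positivity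
  set N := 5/4 * (A + B) - 3/2 * (A * B) with hN
  set c := 1/2 - 1/2 * (A + B) + 3/2 * (A * B) with hc
  have hNpos : 0 < N := by nlinarith
  have key : 0 ≤ c * (A * B) + g ^ 2 * N + 2 * g * (A * B) := by
    have : 0 ≤ N * (c * (A * B) + g ^ 2 * N + 2 * g * (A * B)) := by
      have e : N * (c * (A * B) + g ^ 2 * N + 2 * g * (A * B))
        = (N * g + A * B) ^ 2 + A * B * (N * c - A * B) := by ring
      rw [e]
      have := mul_nonneg hAB.le (sub_nonneg.2 hp)
      positivity
    exact nonneg_of_mul_nonneg_right this hNpos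
  have e2 : 3/2 * ((1 - A) * (1 - B)) + g ^ 2 * (auxPhi (1 - A) + auxPhi (1 - B))
      - (1 - A + (1 - B) - 1 - 2 * g) = (c * (A * B) + g ^ 2 * N + 2 * g * (A * B)) / (A * B) := by
    unfold auxPhi
    rw [hN, hc]
    have e3 : 1 - (1 - A) = A := by ring
    have e4 : 1 - (1 - B) = B := by ring
    rw [e3, e4]
    field_simp
    ring
  have := div_nonneg key hAB.le
  linarith

/-- Sum over pairs for a projection matrix. -/
lemma aux_sum {n : ℕ} (P : Fin n → Fin n → ℝ) (k : ℝ) (hk : 2 ≤ k)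
    (hsymm : ∀ u v, P u v = P v u) (hidem : ∀ u, ∑ v, P u v ^ 2 = P u u)
    (htr : ∑ u, P u u = k) (G : SimpleGraph (Fin n)) [DecidableRel G.Adj] :
    ∑ u, ∑ v, (if G.Adj u v then P u u + P v v - 1 - 2 * P u v else 0) ≤ 2 * k ^ 2 := by
  have hle : ∀ u v, u ≠ v → P u u ^ 2 + P u v ^ 2 ≤ P u u := by
    intro u v huv
    conv_rhs => rw [← hidem u]
    rw [← Finset.sum_pair huv (f := fun v => P u v ^ 2)]
    exact Finset.sum_le_sum_of_subset_of_nonneg (Finset.subset_univ _) (fun _ _ _ => sq_nonneg _)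
  have hsq : ∀ u, P u u ^ 2 ≤ P u u := by
    intro u
    conv_rhs => rw [← hidem u]
    exact Finset.single_le_sum (f := fun v => P u v ^ 2) (fun _ _ => sq_nonneg _) (Finset.mem_univ u)
  have h0 : ∀ u, 0 ≤ P u u := fun u => (sq_nonneg _).trans (hsq u)
  have h1 : ∀ u, P u u ≤ 1 := fun u => by nlinarith [hsq u, h0 u]
  have step : ∀ u v, (if G.Adj u v then P u u + P v v - 1 - 2 * P u v else 0) ≤
      (if u = v then 0 else 3/2 * (P u u * P v v) + P u v ^ 2 * (auxPhi (P u u) + auxPhi (P v v))) := by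
    intro u v
    by_cases huv : u = v
    · subst huv; simp
    · have hv := hle v u (Ne.symm huv)
      rw [hsymm v u] at hv
      have := aux_pt (P u u) (P v v) (P u v) (h0 u) (h0 v) (h1 u) (h1 v) (hle u v huv) hv
      rw [if_neg huv]
      split_ifs
      · exact this.2
      · exact this.1
  have e1 : ∀ u v, (if u = v then 0 else 3/2 * (P u u * P v v) + P u v ^ 2 * (auxPhi (P u u) + auxPhi (P v v)))
      = 3/2 * (P u u * P v v) + P u v ^ 2 * auxPhi (P u u) + P v u ^ 2 * auxPhi (P v v)
        - (if u = v then 3/2 * (P u u) ^ 2 + 2 * (P u u ^ 2 * auxPhi (P u u)) else 0) := by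
    intro u v
    by_cases huv : u = v
    · subst huv; simp; ring
    · simp only [if_neg huv]; rw [hsymm v u]; ring
  have s1 : ∑ u, ∑ v, 3/2 * (P u u * P v v) = 3/2 * k ^ 2 := by
    simp_rw [← Finset.mul_sum, htr, ← Finset.sum_mul, htr]; ring
  have s2 : ∑ u, ∑ v, P u v ^ 2 * auxPhi (P u u) = ∑ u, P u u * auxPhi (P u u) := by
    simp_rw [← Finset.sum_mul, hidem]
  have s3 : ∑ u, ∑ v, P v u ^ 2 * auxPhi (P v v) = ∑ u, P u u * auxPhi (P u u) := by
    rw [Finset.sum_comm, s2]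
  calc _ ≤ ∑ u, ∑ v, (if u = v then 0 else 3/2 * (P u u * P v v) + P u v ^ 2 * (auxPhi (P u u) + auxPhi (P v v))) :=
        Finset.sum_le_sum fun u _ => Finset.sum_le_sum fun v _ => step u v
    _ = 3/2 * k ^ 2 + ∑ u, (2 * ((P u u - P u u ^ 2) * auxPhi (P u u)) - 3/2 * (P u u) ^ 2) := by
        simp_rw [e1, Finset.sum_sub_distrib, Finset.sum_add_distrib, s1, s2, s3]
        simp only [Finset.sum_ite_eq, Finset.mem_univ, if_true]
        simp only [sub_mul, mul_sub, Finset.sum_sub_distrib, Finset.sum_add_distrib, ← Finset.mul_sum]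
        ring
    _ ≤ 3/2 * k ^ 2 + ∑ u, P u u := by
        gcongr with u
        have := auxPhi_mul (P u u) (h1 u)
        linarith
    _ ≤ 2 * k ^ 2 := by rw [htr]; nlinarith

lemma aux_deg {n : ℕ} (G : SimpleGraph (Fin n)) [DecidableRel G.Adj] {u v : Fin n}
    (h : G.Adj u v) : (G.degree u : ℝ) + G.degree v ≤ G.edgeFinset.card + 1 := by
  have h1 := Finset.card_union_add_card_inter (G.incidenceFinset u) (G.incidenceFinset v)
  have h2 : (G.incidenceFinset u ∪ G.incidenceFinset v).card ≤ G.edgeFinset.card :=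
    Finset.card_le_card (Finset.union_subset (G.incidenceFinset_subset u) (G.incidenceFinset_subset v))
  have h3 : (G.incidenceFinset u ∩ G.incidenceFinset v).card ≤ 1 := by
    rw [← Finset.card_singleton s(u, v)]
    refine Finset.card_le_card fun e he => ?_
    rw [Finset.mem_inter, G.mem_incidenceFinset, G.mem_incidenceFinset] at he
    have := G.incidenceSet_inter_incidenceSet_subset h.ne he
    simpa using this
  rw [G.card_incidenceFinset_eq_degree, G.card_incidenceFinset_eq_degree] at h1
  have : G.degree u + G.degree v ≤ G.edgeFinset.card + 1 := by omega
  exact_mod_cast this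

lemma aux_edges {n : ℕ} (G : SimpleGraph (Fin n)) [DecidableRel G.Adj] :
    ∑ u, ∑ v, (if G.Adj u v then (1:ℝ) else 0) = 2 * G.edgeFinset.card := by
  have h := G.sum_degrees_eq_twice_card_edges
  have h2 : (∑ u, (G.degree u : ℝ)) = 2 * G.edgeFinset.card := by exact_mod_cast h
  rw [← h2]
  refine Finset.sum_congr rfl fun u _ => ?_
  rw [Finset.sum_boole, ← G.card_neighborFinset_eq_degree, G.neighborFinset_eq_filter]

/-- Largest eigenvalue. -/
lemma aux_one {n : ℕ} (G : SimpleGraph (Fin n)) [DecidableRel G.Adj] (x : Fin n → ℝ) (l : ℝ)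
    (hx : ∑ u, x u ^ 2 = 1)
    (hl : l = (∑ u, ∑ v, if G.Adj u v then (x u - x v) ^ 2 else 0) / 2)
    (heig : ∀ u, l * x u = ∑ v, if G.Adj u v then x u - x v else 0) :
    l ≤ G.edgeFinset.card + 1 := by
  have hl0 : 0 ≤ l := by
    rw [hl]
    refine div_nonneg (Finset.sum_nonneg fun u _ => Finset.sum_nonneg fun v _ => ?_) (by norm_num)
    split_ifs
    · positivity
    · exact le_rfl
  have hcs : ∀ u, (l * x u) ^ 2 ≤ ∑ v, if G.Adj u v then (G.degree u : ℝ) * (x u - x v) ^ 2 else 0 := by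
    intro u
    rw [heig u, ← Finset.sum_filter, ← Finset.sum_filter, ← Finset.mul_sum,
      ← G.card_neighborFinset_eq_degree, G.neighborFinset_eq_filter]
    exact sq_sum_le_card_mul_sum_sq
  have h1 : l ^ 2 ≤ ∑ u, ∑ v, if G.Adj u v then (G.degree u : ℝ) * (x u - x v) ^ 2 else 0 := by
    have : l ^ 2 = ∑ u, (l * x u) ^ 2 := by
      simp only [mul_pow]
      rw [← Finset.mul_sum, hx, mul_one]
    rw [this]
    exact Finset.sum_le_sum fun u _ => hcs u
  have h2 : ∑ u, ∑ v, (if G.Adj u v then (G.degree u : ℝ) * (x u - x v) ^ 2 else 0)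
      = ∑ u, ∑ v, (if G.Adj u v then (G.degree v : ℝ) * (x u - x v) ^ 2 else 0) := by
    rw [Finset.sum_comm]
    refine Finset.sum_congr rfl fun u _ => Finset.sum_congr rfl fun v _ => ?_
    simp only [G.adj_comm v u]
    split_ifs
    · ring
    · rfl
  have h3 : 2 * l ^ 2 ≤ (G.edgeFinset.card + 1) * (2 * l) := by
    have e : 2 * l = ∑ u, ∑ v, if G.Adj u v then (x u - x v) ^ 2 else 0 := by rw [hl]; ring
    rw [e, Finset.mul_sum]
    calc 2 * l ^ 2 ≤ (∑ u, ∑ v, (if G.Adj u v then (G.degree u : ℝ) * (x u - x v) ^ 2 else 0))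
          + ∑ u, ∑ v, (if G.Adj u v then (G.degree v : ℝ) * (x u - x v) ^ 2 else 0) := by
          rw [← h2]; linarith
      _ ≤ _ := by
          rw [← Finset.sum_add_distrib]
          simp only [Finset.mul_sum]
          refine Finset.sum_le_sum fun u _ => ?_
          rw [← Finset.sum_add_distrib]
          refine Finset.sum_le_sum fun v _ => ?_
          split_ifs with h
          · rw [← add_mul]
            exact mul_le_mul_of_nonneg_right (aux_deg G h) (sq_nonneg _)
          · simp
  rcases hl0.eq_or_lt with h | h
  · rw [← h]; exact add_nonneg (Nat.cast_nonneg _) zero_le_one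
  · nlinarith

lemma aux_main {n k : ℕ} (G : SimpleGraph (Fin n)) [DecidableRel G.Adj] (hk : 1 ≤ k)
    (x : Fin k → Fin n → ℝ) (l : Fin k → ℝ)
    (hx : ∀ i j, ∑ u, x i u * x j u = if i = j then 1 else 0)
    (heig : ∀ i u, l i * x i u = ∑ v, if G.Adj u v then x i u - x i v else 0)
    (hl : ∀ i, l i = (∑ u, ∑ v, if G.Adj u v then (x i u - x i v) ^ 2 else 0) / 2) :
    ∑ i, l i ≤ G.edgeFinset.card + (k : ℝ) ^ 2 := by
  rcases hk.eq_or_lt with rfl | hk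
  · have := aux_one G (x 0) (l 0) (by simpa [sq] using hx 0 0) (hl 0) (heig 0)
    simpa using this
  · let P : Fin n → Fin n → ℝ := fun u v => ∑ i, x i u * x i v
    have hP := aux_sum P k (by exact_mod_cast hk) (fun u v => by simp only [P, mul_comm]) ?_ ?_ G
    · have e : 2 * ∑ i, l i = ∑ u, ∑ v, (if G.Adj u v then P u u + P v v - 2 * P u v else 0) := by
        simp_rw [hl, ← Finset.sum_div]
        rw [mul_div_cancel₀ _ (two_ne_zero), Finset.sum_comm]
        refine Finset.sum_congr rfl fun u _ => ?_
        rw [Finset.sum_comm]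
        refine Finset.sum_congr rfl fun v _ => ?_
        split_ifs
        · simp only [P, Finset.mul_sum]
          rw [← Finset.sum_add_distrib, ← Finset.sum_sub_distrib]
          exact Finset.sum_congr rfl fun i _ => by ring
        · simp
      have e2 : ∑ u, ∑ v, (if G.Adj u v then P u u + P v v - 1 - 2 * P u v else 0)
          = 2 * ∑ i, l i - 2 * G.edgeFinset.card := by
        rw [e, ← aux_edges, ← Finset.sum_sub_distrib]
        refine Finset.sum_congr rfl fun u _ => ?_
        rw [← Finset.sum_sub_distrib]
        refine Finset.sum_congr rfl fun v _ => ?_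
        split_ifs
        · ring
        · ring
      linarith
    · intro u
      have : ∀ v, P u v ^ 2 = ∑ i, ∑ j, x i u * x j u * (x i v * x j v) := by
        intro v
        simp only [P, sq, Finset.sum_mul_sum]
        exact Finset.sum_congr rfl fun i _ => Finset.sum_congr rfl fun j _ => by ring
      simp_rw [this]
      rw [Finset.sum_comm]
      refine Finset.sum_congr rfl fun i _ => ?_
      rw [Finset.sum_comm]
      simp_rw [← Finset.mul_sum, hx]
      simp
    · simp only [P]
      rw [Finset.sum_comm]
      simp [hx]

/-- for `k ≥ 1` and a finite simple graph `G = (V,E)` with `|V| ≥ k`,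
`∑_{i=1}^k λ_i(L(G)) ≤ |E| + k²`. -/
theorem sum_lapEigs_le_card_edges_add_k_sq {n : ℕ} (G : SimpleGraph (Fin n))
    [DecidableRel G.Adj] (k : ℕ) (hk1 : 1 ≤ k) (hk2 : k ≤ n) :
    ∑ i ∈ Finset.Icc 1 k, ithLargest (lapEigs G) i ≤
      (G.edgeFinset.card : ℝ) + (k : ℝ) ^ 2 := by
  let e : Fin k → Fin n := fun i => Tuple.sort (lapEigs G) (Fin.rev ⟨i, by omega⟩)
  have he : Function.Injective e := by
    intro i j h
    have := Fin.rev_injective ((Tuple.sort (lapEigs G)).injective h)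
    simpa [Fin.ext_iff] using this
  have hsum : ∑ i ∈ Finset.Icc 1 k, ithLargest (lapEigs G) i = ∑ i, lapEigs G (e i) := by
    rw [← Finset.Ico_succ_right_eq_Icc, Finset.sum_Ico_eq_sum_range]
    simp only [Order.succ_eq_add_one, Nat.add_sub_cancel]
    rw [Finset.sum_range]
    refine Finset.sum_congr rfl fun i _ => ?_
    have : 1 ≤ 1 + (i : ℕ) ∧ 1 + (i : ℕ) ≤ n := by omega
    rw [ithLargest, dif_pos this]
    simp [e]
  rw [hsum]
  set hH := (SimpleGraph.posSemidef_lapMatrix ℝ G).isHermitian with hHdef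
  let w : Fin n → Fin n → ℝ := fun j u => hH.eigenvectorBasis j u
  have how : ∀ i j, ∑ u, w i u * w j u = if i = j then 1 else 0 := by
    intro i j
    have := orthonormal_iff_ite.1 hH.eigenvectorBasis.orthonormal i j
    rw [← this, PiLp.inner_apply]
    simp [w, mul_comm]
  have heig : ∀ j u, lapEigs G j * w j u = ∑ v, if G.Adj u v then w j u - w j v else 0 := by
    intro j u
    have := congrFun (hH.mulVec_eigenvectorBasis j) u
    rw [SimpleGraph.lapMatrix_mulVec_apply] at this
    rw [← Finset.sum_filter, ← G.neighborFinset_eq_filter, Finset.sum_sub_distrib,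
      Finset.sum_const, G.card_neighborFinset_eq_degree, nsmul_eq_mul]
    simpa [w, lapEigs] using this.symm
  have hl : ∀ j, lapEigs G j =
      (∑ u, ∑ v, if G.Adj u v then (w j u - w j v) ^ 2 else 0) / 2 := by
    intro j
    rw [← SimpleGraph.lapMatrix_toLinearMap₂' ℝ G (w j), Matrix.toLinearMap₂'_apply']
    have : (G.lapMatrix ℝ).mulVec (w j) = lapEigs G j • w j := hH.mulVec_eigenvectorBasis j
    rw [this, dotProduct_smul]
    have h1 : w j ⬝ᵥ w j = 1 := by simpa [dotProduct] using how j j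
    simp [h1]
  refine aux_main G hk1 (fun i => w (e i)) (fun i => lapEigs G (e i)) ?_ (fun i => heig _) (fun i => hl _)
  intro i j
  rw [how]
  simp [he.eq_iff]
end

section
/- Let G = (V,E) be a finite simple graph with |V| = n, and let k be an integer with 1 ≤ k ≤ (n−1)/2. Then ∑_{i=1}^{k} λ_i(L(G)) ≤ |E| + (1/2)( ∑_{i=1}^{2k} min{d_i(G), k} − ∑_{i=2k+1}^{n} max{0, d_i(G) − k} ). -/
open Finset

section
open Matrix

/-- quantity matrix -/
noncomputable def gmM {α β : Type} [Fintype α] [Fintype β] [DecidableEq α] [DecidableEq β]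
    (A : Matrix α β ℝ) : Matrix (α ⊕ β) (α ⊕ β) ℝ :=
  Matrix.fromBlocks (Matrix.diagonal (fun u => ∑ v, A u v) - Matrix.of (fun _ _ => 1)) (-A) (-Aᵀ)
    (Matrix.diagonal (fun v => (∑ u, A u v) - Fintype.card α))

section
variable {α β : Type} [Fintype α] [Fintype β] [DecidableEq α] [DecidableEq β]

/-- M-matrix positivity -/
lemma gm_mmat (d : α → ℝ) (hd : ∀ u, 0 ≤ d u) (H : Matrix α α ℝ) (hH1 : ∀ u v, H u v ≤ 1)
    (hH0 : ∀ u v, 0 ≤ H u v)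
    (ε : ℝ) (hε : 0 < ε) (hεN : ε * Fintype.card α < 1) (x : α → ℝ)
    (hx : ∀ u, 0 ≤ (x ᵥ* (1 + ε • (Matrix.diagonal d - H))) u) : ∀ u, 0 ≤ x u := by
  by_contra! hcon
  obtain ⟨u0, hu0⟩ := hcon
  obtain ⟨u, -, hu⟩ := Finset.exists_min_image Finset.univ x ⟨u0, Finset.mem_univ _⟩
  have hneg : x u < 0 := lt_of_le_of_lt (hu u0 (Finset.mem_univ _)) hu0
  have h1 := hx u
  have h2 : (x ᵥ* (1 + ε • (Matrix.diagonal d - H))) u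
      = x u + ε * (x u * d u - ∑ v, x v * H v u) := by
    rw [Matrix.vecMul_add, Matrix.vecMul_one, Matrix.vecMul_smul, Matrix.vecMul_sub]
    simp only [Pi.add_apply, Pi.smul_apply, Pi.sub_apply, Matrix.vecMul_diagonal]
    simp [Matrix.vecMul, dotProduct]
  rw [h2] at h1
  have h3 : Fintype.card α * x u ≤ ∑ v, x v * H v u := by
    have : ∑ v : α, x u ≤ ∑ v, x v * H v u := by
      apply Finset.sum_le_sum
      intro v _
      have := hu v (Finset.mem_univ _)
      nlinarith [hH0 v u, hH1 v u]
    simpa using this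
  have h4 : x u * d u ≤ 0 := mul_nonpos_of_nonpos_of_nonneg hneg.le (hd u)
  nlinarith

lemma gm_inv (d : α → ℝ) (hd : ∀ u, 0 ≤ d u) (H : Matrix α α ℝ) (hH1 : ∀ u v, H u v ≤ 1)
    (hH0 : ∀ u v, 0 ≤ H u v)
    (ε : ℝ) (hε : 0 < ε) (hεN : ε * Fintype.card α < 1) :
    IsUnit (1 + ε • (Matrix.diagonal d - H)) := by
  rw [← Matrix.vecMul_injective_iff_isUnit]
  have key := gm_mmat d hd H hH1 hH0 ε hε hεN
  intro x y hxy
  have hxy' : x ᵥ* (1 + ε • (Matrix.diagonal d - H)) = y ᵥ* (1 + ε • (Matrix.diagonal d - H)) := hxy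
  have h1 := key (x - y) (by intro u; rw [Matrix.sub_vecMul, hxy']; simp)
  have h2 := key (y - x) (by intro u; rw [Matrix.sub_vecMul, hxy']; simp)
  ext u
  have a := h1 u
  have b := h2 u
  simp at a b
  linarith

/-- The invariant set. -/
def gmK (W : Matrix β α ℝ) : Prop := (∀ v u, 0 ≤ W v u) ∧ ∀ u, ∑ v, W v u ≤ 1

lemma gm_step (A : Matrix α β ℝ) (hA0 : ∀ u v, 0 ≤ A u v) (hA1 : ∀ u v, A u v ≤ 1)
    (ε : ℝ) (hε : 0 < ε) (hεN : ε * Fintype.card α < 1) (W : Matrix β α ℝ) (hW : gmK W) :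
    ∃ W' : Matrix β α ℝ, gmK W' ∧
      W' * (1 + ε • (Matrix.diagonal (fun u => ∑ v, A u v) - Matrix.of (fun _ _ => 1) + A * W))
       = W + ε • (Aᵀ + Matrix.diagonal (fun v => (∑ u, A u v) - Fintype.card α) * W) := by
  obtain ⟨hW0, hW1⟩ := hW
  set d : α → ℝ := fun u => ∑ v, A u v with hd
  set H : Matrix α α ℝ := Matrix.of (fun _ _ => 1) - A * W with hH
  have hd0 : ∀ u, 0 ≤ d u := fun u => Finset.sum_nonneg fun v _ => hA0 u v
  have hAW0 : ∀ u v, 0 ≤ (A * W) u v := fun u v => by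
    rw [Matrix.mul_apply]; exact Finset.sum_nonneg fun w _ => mul_nonneg (hA0 _ _) (hW0 _ _)
  have hAW1 : ∀ u v, (A * W) u v ≤ 1 := fun u v => by
    rw [Matrix.mul_apply]
    refine le_trans (Finset.sum_le_sum fun w _ => ?_) (hW1 v)
    nlinarith [hA0 u w, hA1 u w, hW0 w v]
  have hH1 : ∀ u v, H u v ≤ 1 := fun u v => by simp [hH]; exact hAW0 u v
  have hH0 : ∀ u v, 0 ≤ H u v := fun u v => by simp [hH]; exact hAW1 u v
  have hBeq : Matrix.diagonal d - Matrix.of (fun _ _ => 1) + A * W = Matrix.diagonal d - H := by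
    rw [hH]; abel
  rw [hBeq]
  set B := 1 + ε • (Matrix.diagonal d - H) with hB
  set Gm := W + ε • (Aᵀ + Matrix.diagonal (fun v => (∑ u, A u v) - Fintype.card α) * W) with hG
  have hBu : IsUnit B := gm_inv d hd0 H hH1 hH0 ε hε hεN
  have key := gm_mmat d hd0 H hH1 hH0 ε hε hεN
  have hWB : (Gm * B⁻¹) * B = Gm := by
    rw [Matrix.mul_assoc, Matrix.nonsing_inv_mul _ ((Matrix.isUnit_iff_isUnit_det _).1 hBu),
      Matrix.mul_one]
  have hGe : ∀ v u, Gm v u = W v u + ε * (A u v + ((∑ u, A u v) - Fintype.card α) * W v u) := by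
    intro v u
    simp [hG, Matrix.diagonal_mul]
    ring
  refine ⟨Gm * B⁻¹, ⟨?_, ?_⟩, hWB⟩
  · intro v
    refine key ((Gm * B⁻¹) v) ?_
    intro u
    rw [← hB]
    have : ((Gm * B⁻¹) v ᵥ* B) u = Gm v u := by
      rw [← Matrix.mul_apply_eq_vecMul, hWB]
    rw [this, hGe]
    have h1 : 0 ≤ ∑ u, A u v := Finset.sum_nonneg fun u _ => hA0 u v
    have h2 : 0 ≤ (1 - ε * Fintype.card α) * W v u := mul_nonneg (by linarith) (hW0 v u)
    have h3 : 0 ≤ ε * A u v := mul_nonneg hε.le (hA0 u v)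
    have h4 : 0 ≤ ε * ((∑ u, A u v) * W v u) := mul_nonneg hε.le (mul_nonneg h1 (hW0 v u))
    nlinarith
  · intro u
    have := key (fun u => 1 - ∑ v, (Gm * B⁻¹) v u) ?_ u
    · linarith
    intro u
    rw [← hB]
    have e1 : (fun u => 1 - ∑ v, (Gm * B⁻¹) v u) = (fun _ => (1:ℝ)) - (fun _ => (1:ℝ)) ᵥ* (Gm * B⁻¹) := by
      ext u; simp [Matrix.vecMul, dotProduct]
    rw [e1, Matrix.sub_vecMul, Matrix.vecMul_vecMul, hWB]
    have e2 : ((fun _ => (1:ℝ)) ᵥ* Gm) u = ∑ v, Gm v u := by simp [Matrix.vecMul, dotProduct]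
    have e3 : ((fun _ => (1:ℝ)) ᵥ* B) u = 1 + ε * (d u - (Fintype.card α - ∑ v, (∑ u, A u v) * W v u)) := by
      rw [hB, Matrix.vecMul_add, Matrix.vecMul_one, Matrix.vecMul_smul, Matrix.vecMul_sub]
      have : ((fun _ => (1:ℝ)) ᵥ* H) u = Fintype.card α - ∑ v, (∑ u, A u v) * W v u := by
        simp only [hH, Matrix.vecMul, dotProduct, Matrix.sub_apply, Matrix.of_apply, one_mul,
          Finset.sum_sub_distrib, Matrix.mul_apply]
        rw [Finset.sum_comm]
        simp [Finset.sum_mul]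
      simp [Matrix.vecMul_diagonal, this]
    have e4 : ∑ v, Gm v u = (∑ v, W v u) + ε * (d u + ∑ v, (∑ u, A u v) * W v u - Fintype.card α * ∑ v, W v u) := by
      simp only [hGe, Finset.sum_add_distrib, ← Finset.mul_sum, sub_mul, Finset.sum_sub_distrib, hd]
      ring
    rw [Pi.sub_apply, e2, e3, e4]
    have := mul_nonneg (sub_nonneg.2 (hW1 u)) (by linarith : 0 ≤ 1 - ε * Fintype.card α)
    nlinarith

/-- Iterates stay in the invariant set. -/
lemma gm_iter (A : Matrix α β ℝ) (hA0 : ∀ u v, 0 ≤ A u v) (hA1 : ∀ u v, A u v ≤ 1)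
    (ε : ℝ) (hε : 0 < ε) (hεN : ε * Fintype.card α < 1) (j : ℕ) :
    ∃ (W : Matrix β α ℝ) (Y : Matrix α α ℝ), gmK W ∧
      (1 + ε • gmM A) ^ j * Matrix.fromRows (1 : Matrix α α ℝ) (0 : Matrix β α ℝ) =
        Matrix.fromRows Y (-(W * Y)) := by
  induction j with
  | zero => exact ⟨0, 1, ⟨by simp, by simp⟩, by simp⟩
  | succ j ih =>
    obtain ⟨W, Y, hW, hj⟩ := ih
    obtain ⟨W', hW', h'⟩ := gm_step A hA0 hA1 ε hε hεN W hW
    refine ⟨W', (1 + ε • (Matrix.diagonal (fun u => ∑ v, A u v) - Matrix.of (fun _ _ => 1) + A * W)) * Y, hW', ?_⟩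
    rw [pow_succ', Matrix.mul_assoc, hj, ← Matrix.mul_assoc, h', gmM]
    rw [Matrix.add_mul, Matrix.one_mul, Matrix.smul_mul, Matrix.fromBlocks_mul_fromRows]
    ext i a
    rcases i with i | i
    · simp [Matrix.add_mul, Matrix.mul_assoc]
      ring
    · simp only [Matrix.add_apply, Matrix.smul_apply, Matrix.fromRows_apply_inr, Matrix.add_mul,
        Matrix.smul_mul, Matrix.neg_apply, smul_eq_mul, Matrix.mul_neg, Matrix.neg_mul, Matrix.mul_assoc]
      ring

lemma gm_limit (A : Matrix α β ℝ) (hA0 : ∀ u v, 0 ≤ A u v) (hA1 : ∀ u v, A u v ≤ 1)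
    (Φ : Matrix (α ⊕ β) (α ⊕ β) ℝ) (μ : α ⊕ β → ℝ) (hΦ : Φᵀ * Φ = 1)
    (hM : gmM A = Φ * Matrix.diagonal μ * Φᵀ)
    (hpos : ∀ a, 0 ≤ μ (Sum.inl a)) (hneg : ∀ b, μ (Sum.inr b) < 0)
    (R : Matrix α α ℝ) (hR : Φ.toBlocks₁₁ * R = 1) : gmK (-(Φ.toBlocks₂₁ * R)) := by
  have hR' : R * Φ.toBlocks₁₁ = 1 := mul_eq_one_comm.1 hR
  obtain ⟨c, hc⟩ : ∃ c : ℝ, ∀ i, |μ i| ≤ c := by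
    refine ⟨∑ i, |μ i|, fun i => Finset.single_le_sum (f := fun i => |μ i|) (fun _ _ => abs_nonneg _) (Finset.mem_univ i)⟩
  set c' := max c 0
  set N : ℝ := (Fintype.card α : ℝ) with hN
  have hN0 : 0 ≤ N := by positivity
  have hc'0 : 0 ≤ c' := le_max_right _ _
  obtain ⟨ε, hε, hεN, hεc⟩ : ∃ ε : ℝ, 0 < ε ∧ ε * N < 1 ∧ ε * c' < 1 := by
    refine ⟨1 / (N + c' + 1), by positivity, ?_, ?_⟩
    · rw [div_mul_eq_mul_div, div_lt_one (by positivity)]; linarith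
    · rw [div_mul_eq_mul_div, div_lt_one (by positivity)]; linarith
  set ν : α ⊕ β → ℝ := fun i => 1 + ε * μ i with hν
  have hν0 : ∀ i, 0 < ν i := by
    intro i
    have h1 := neg_abs_le (μ i)
    have h2 : |μ i| ≤ c' := (hc i).trans (le_max_left _ _)
    have : -(ε * c') ≤ ε * μ i := by nlinarith
    simp only [hν]; linarith
  have hΦ' : Φ * Φᵀ = 1 := mul_eq_one_comm.1 hΦ
  have hT : (1 + ε • gmM A) = Φ * Matrix.diagonal ν * Φᵀ := by
    have : Matrix.diagonal ν = 1 + ε • Matrix.diagonal μ := by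
      ext i j
      by_cases h : i = j
      · subst h; simp [hν]
      · simp [h]
    rw [this, hM, Matrix.mul_add, Matrix.add_mul, Matrix.mul_one, hΦ']
    simp
  have hTj : ∀ j : ℕ, (1 + ε • gmM A) ^ j = Φ * Matrix.diagonal (fun i => ν i ^ j) * Φᵀ := by
    intro j
    induction j with
    | zero => simp [hΦ']
    | succ j ih =>
      rw [pow_succ, ih, hT]
      calc Φ * Matrix.diagonal (fun i => ν i ^ j) * Φᵀ * (Φ * Matrix.diagonal ν * Φᵀ)
          = Φ * Matrix.diagonal (fun i => ν i ^ j) * (Φᵀ * Φ) * Matrix.diagonal ν * Φᵀ := by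
            simp only [Matrix.mul_assoc]
        _ = _ := by
            rw [hΦ, Matrix.mul_one, Matrix.mul_assoc Φ, Matrix.diagonal_mul_diagonal]
            simp [pow_succ]
  choose W Y hWK hWY using gm_iter A hA0 hA1 ε hε hεN
  set Ψ := Φ.toBlocks₁₁ with hΨ
  -- auxiliary right factors
  set Rj : ℕ → Matrix α α ℝ := fun j => Rᵀ * Matrix.diagonal (fun a => (ν (Sum.inl a) ^ j)⁻¹) * R with hRj
  have hX : ∀ j, Matrix.fromRows (Y j) (-(W j * Y j)) * Rj j =
      Φ * Matrix.diagonal (fun i => ν i ^ j) * Matrix.fromRows (Ψᵀ * Rj j) (Φ.toBlocks₁₂ᵀ * Rj j) := by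
    intro j
    rw [← hWY, hTj, Matrix.mul_assoc, Matrix.mul_assoc, ]
    congr 1
    ext i a
    rcases i with i | i
    · simp [Matrix.fromRows_mul, Matrix.mul_apply, Fintype.sum_sum_type, hΨ, Matrix.toBlocks₁₁]
    · simp [Matrix.fromRows_mul, Matrix.mul_apply, Fintype.sum_sum_type, Matrix.toBlocks₁₂]
  have hΨR : ∀ j, Ψᵀ * Rj j = Matrix.diagonal (fun a => (ν (Sum.inl a) ^ j)⁻¹) * R := by
    intro j
    rw [hRj]
    simp only
    rw [← Matrix.mul_assoc, ← Matrix.mul_assoc, ← Matrix.transpose_mul, hR']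
    simp
  have hentry : ∀ i a, Filter.Tendsto (fun j => (Matrix.fromRows (Y j) (-(W j * Y j)) * Rj j) i a)
      Filter.atTop (nhds (∑ l, Φ i (Sum.inl l) * R l a)) := by
    intro i a
    have e : ∀ j, (Matrix.fromRows (Y j) (-(W j * Y j)) * Rj j) i a =
        ∑ l, Φ i (Sum.inl l) * R l a + ∑ b, ∑ l, Φ i (Sum.inr b) * (Φ.toBlocks₁₂ᵀ * Rᵀ) b l * R l a
          * (ν (Sum.inr b) / ν (Sum.inl l)) ^ j := by
      intro j
      rw [hX, hΨR, Matrix.mul_apply, Fintype.sum_sum_type]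
      congr 1
      · apply Finset.sum_congr rfl
        intro l _
        have : ν (Sum.inl l) ^ j ≠ 0 := pow_ne_zero _ (hν0 _).ne'
        simp only [Matrix.mul_diagonal, Matrix.fromRows_apply_inl, Matrix.diagonal_mul]
        field_simp
      · apply Finset.sum_congr rfl
        intro b _
        simp only [Matrix.mul_diagonal, Matrix.fromRows_apply_inr, hRj]
        rw [← Matrix.mul_assoc, ← Matrix.mul_assoc, Matrix.mul_apply, Finset.mul_sum]
        apply Finset.sum_congr rfl
        intro l _
        rw [Matrix.mul_diagonal, div_pow]
        ring
    simp only [e]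
    have : Filter.Tendsto (fun j : ℕ => ∑ l, Φ i (Sum.inl l) * R l a + ∑ b, ∑ l, Φ i (Sum.inr b) * (Φ.toBlocks₁₂ᵀ * Rᵀ) b l * R l a
          * (ν (Sum.inr b) / ν (Sum.inl l)) ^ j) Filter.atTop
          (nhds (∑ l, Φ i (Sum.inl l) * R l a + ∑ b : β, ∑ l : α, Φ i (Sum.inr b) * (Φ.toBlocks₁₂ᵀ * Rᵀ) b l * R l a * 0)) := by
      refine tendsto_const_nhds.add (tendsto_finsetSum _ fun b _ => tendsto_finsetSum _ fun l _ => ?_)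
      refine tendsto_const_nhds.mul (tendsto_pow_atTop_nhds_zero_of_lt_one (div_nonneg (hν0 _).le (hν0 _).le) ?_)
      rw [div_lt_one (hν0 _)]
      have := hpos l
      have := hneg b
      simp only [hν]
      nlinarith
    simpa using this
  set X : ℕ → Matrix α α ℝ := fun j => Y j * Rj j with hXd
  have hX1 : ∀ u a, Filter.Tendsto (fun j => (X j - 1) u a) Filter.atTop (nhds 0) := by
    intro u a
    have h := hentry (Sum.inl u) a
    have e1 : ∑ l, Φ (Sum.inl u) (Sum.inl l) * R l a = (1 : Matrix α α ℝ) u a := by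
      rw [← hR, Matrix.mul_apply]; rfl
    rw [e1] at h
    have := h.sub_const ((1 : Matrix α α ℝ) u a)
    simpa [Matrix.fromRows_mul] using this
  have hX2 : ∀ v a, Filter.Tendsto (fun j => (W j * X j) v a) Filter.atTop (nhds ((-(Φ.toBlocks₂₁ * R)) v a)) := by
    intro v a
    have h := (hentry (Sum.inr v) a).neg
    have e1 : (Φ.toBlocks₂₁ * R) v a = ∑ l, Φ (Sum.inr v) (Sum.inl l) * R l a := by
      rw [Matrix.mul_apply]; rfl
    rw [Matrix.neg_apply, e1]
    simpa [Matrix.fromRows_mul, hXd, Matrix.mul_assoc] using h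
  have hWle : ∀ j v u, W j v u ≤ 1 := fun j v u =>
    (Finset.single_le_sum (f := fun v => W j v u) (fun v _ => (hWK j).1 v u) (Finset.mem_univ v)).trans ((hWK j).2 u)
  have hlim : ∀ v a, Filter.Tendsto (fun j => W j v a) Filter.atTop (nhds ((-(Φ.toBlocks₂₁ * R)) v a)) := by
    intro v a
    have h0 : Filter.Tendsto (fun j => (W j * (X j - 1 : Matrix α α ℝ) : Matrix β α ℝ) v a) Filter.atTop (nhds 0) := by
      simp only [Matrix.mul_apply]
      rw [show (0:ℝ) = ∑ u : α, 0 by simp]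
      refine tendsto_finsetSum _ fun u _ => ?_
      refine squeeze_zero_norm (a := fun j => |(X j - 1) u a|) ?_ (by simpa using (hX1 u a).abs)
      intro j
      rw [Real.norm_eq_abs, abs_mul, abs_of_nonneg ((hWK j).1 v u)]
      nlinarith [hWle j v u, abs_nonneg ((X j - 1) u a)]
    have := (hX2 v a).sub h0
    refine (Filter.Tendsto.congr ?_ (by simpa only [sub_zero] using this))
    intro j
    rw [← Matrix.sub_apply, ← Matrix.mul_sub]
    simp
  refine ⟨fun v u => ge_of_tendsto' (hlim v u) fun j => (hWK j).1 v u, fun u => ?_⟩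
  exact le_of_tendsto' (tendsto_finsetSum _ fun v _ => hlim v u) fun j => (hWK j).2 u

lemma gm_case (A : Matrix α β ℝ) (hA0 : ∀ u v, 0 ≤ A u v) (hA1 : ∀ u v, A u v ≤ 1)
    (hD : ∀ v, ∑ u, A u v < Fintype.card α)
    (Φ : Matrix (α ⊕ β) (α ⊕ β) ℝ) (μ : α ⊕ β → ℝ) (hΦ : Φᵀ * Φ = 1)
    (hM : gmM A = Φ * Matrix.diagonal μ * Φᵀ)
    (hpos : ∀ a, 0 ≤ μ (Sum.inl a)) (hneg : ∀ b, μ (Sum.inr b) < 0) :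
    ∑ a, μ (Sum.inl a) ≤ ∑ u, ∑ v, A u v := by
  have hMΦ : gmM A * Φ = Φ * Matrix.diagonal μ := by
    rw [hM, Matrix.mul_assoc, hΦ, Matrix.mul_one]
  have hb11 : (Matrix.diagonal (fun u => ∑ v, A u v) - Matrix.of (fun _ _ => 1)) * Φ.toBlocks₁₁ - A * Φ.toBlocks₂₁
      = Φ.toBlocks₁₁ * Matrix.diagonal (fun a => μ (Sum.inl a)) := by
    ext u a
    have := congrFun (congrFun hMΦ (Sum.inl u)) (Sum.inl a)
    rw [Matrix.mul_diagonal, Matrix.mul_apply, Fintype.sum_sum_type] at this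
    rw [Matrix.mul_diagonal]
    simpa [gmM, Matrix.mul_apply, Matrix.toBlocks₁₁, Matrix.toBlocks₂₁, ← sub_eq_add_neg] using this
  have hb21 : -(Aᵀ * Φ.toBlocks₁₁) + Matrix.diagonal (fun v => (∑ u, A u v) - Fintype.card α) * Φ.toBlocks₂₁
      = Φ.toBlocks₂₁ * Matrix.diagonal (fun a => μ (Sum.inl a)) := by
    ext u a
    have := congrFun (congrFun hMΦ (Sum.inr u)) (Sum.inl a)
    rw [Matrix.mul_diagonal, Matrix.mul_apply, Fintype.sum_sum_type] at this
    rw [Matrix.mul_diagonal]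
    simpa [gmM, Matrix.mul_apply, Matrix.toBlocks₁₁, Matrix.toBlocks₂₁] using this
  have horth : Φ.toBlocks₁₁ᵀ * Φ.toBlocks₁₁ + Φ.toBlocks₂₁ᵀ * Φ.toBlocks₂₁ = 1 := by
    ext u a
    have := congrFun (congrFun hΦ (Sum.inl u)) (Sum.inl a)
    rw [Matrix.mul_apply, Fintype.sum_sum_type] at this
    simpa [Matrix.mul_apply, Matrix.toBlocks₁₁, Matrix.toBlocks₂₁, Matrix.one_apply] using this
  have hunit : IsUnit Φ.toBlocks₁₁ := by
    rw [← Matrix.mulVec_injective_iff_isUnit]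
    rw [← Matrix.coe_mulVecLin, injective_iff_map_eq_zero]
    intro x hx
    rw [Matrix.mulVecLin_apply] at hx
    set z := Φ.toBlocks₂₁ *ᵥ x with hz
    have h1 : z ⬝ᵥ z = x ⬝ᵥ x := by
      have := congrArg (fun B => x ⬝ᵥ (B *ᵥ x)) horth
      simp only [Matrix.add_mulVec, ← Matrix.mulVec_mulVec, hx, Matrix.one_mulVec, Matrix.mulVec_zero, zero_add] at this
      rw [← this, ← hz, Matrix.dotProduct_mulVec x, Matrix.vecMul_transpose]
    have h2 : (fun v => (∑ u, A u v) - Fintype.card α) * z = Φ.toBlocks₂₁ *ᵥ (fun a => μ (Sum.inl a) * x a) := by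
      have := congrArg (fun B => B *ᵥ x) hb21
      simp only [Matrix.add_mulVec, Matrix.neg_mulVec, ← Matrix.mulVec_mulVec, hx, Matrix.mulVec_zero, neg_zero, zero_add, ← hz] at this
      have e1 : Matrix.diagonal (fun a => μ (Sum.inl a)) *ᵥ x = fun a => μ (Sum.inl a) * x a := by
        ext a; simp [Matrix.mulVec_diagonal]
      rw [e1] at this
      rw [← this]
      ext v; simp [Matrix.mulVec_diagonal]
    have h3 : Φ.toBlocks₁₁ *ᵥ (fun a => μ (Sum.inl a) * x a) = - (A *ᵥ z) := by
      have := congrArg (fun B => B *ᵥ x) hb11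
      simp only [Matrix.sub_mulVec, ← Matrix.mulVec_mulVec, hx, Matrix.mulVec_zero, ← hz] at this
      have e1 : Matrix.diagonal (fun a => μ (Sum.inl a)) *ᵥ x = fun a => μ (Sum.inl a) * x a := by
        ext a; simp [Matrix.mulVec_diagonal]
      rw [e1] at this
      rw [← this]
      simp
    have h4 : z ⬝ᵥ ((fun v => (∑ u, A u v) - Fintype.card α) * z) = x ⬝ᵥ (fun a => μ (Sum.inl a) * x a) := by
      have := congrArg (fun B => x ⬝ᵥ (B *ᵥ (fun a => μ (Sum.inl a) * x a))) horth
      simp only [Matrix.add_mulVec, ← Matrix.mulVec_mulVec, Matrix.one_mulVec, dotProduct_add] at this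
      rw [← this, h2, ← h2, Matrix.dotProduct_mulVec, Matrix.dotProduct_mulVec x Φ.toBlocks₂₁ᵀ, Matrix.vecMul_transpose, Matrix.vecMul_transpose, hx]
      simp [hz]
    have h5 : 0 ≤ x ⬝ᵥ (fun a => μ (Sum.inl a) * x a) := by
      apply Finset.sum_nonneg
      intro a _
      have := mul_nonneg (hpos a) (mul_self_nonneg (x a))
      linarith
    have h6 : ∀ v, z v * ((∑ u, A u v - Fintype.card α) * z v) ≤ 0 := fun v => by
      have := mul_nonneg (sub_nonneg.2 (hD v).le) (mul_self_nonneg (z v))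
      linarith
    have h7 : ∑ v, z v * ((∑ u, A u v - Fintype.card α) * z v) = 0 :=
      le_antisymm (Finset.sum_nonpos fun v _ => h6 v) (by rw [← h4] at h5; exact h5)
    have h8 := (Finset.sum_eq_zero_iff_of_nonpos (fun v _ => h6 v)).1 h7
    have h9 : z = 0 := by
      ext v
      have := h8 v (Finset.mem_univ v)
      have h := (sub_neg.2 (hD v)).ne
      simpa [h] using this
    rw [h9] at h1
    simp at h1
    exact dotProduct_self_eq_zero.1 h1.symm
  have hdet := (Matrix.isUnit_iff_isUnit_det _).1 hunit
  have hR := Matrix.mul_nonsing_inv _ hdet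
  have hK := gm_limit A hA0 hA1 Φ μ hΦ hM hpos hneg _ hR
  set R := (Φ.toBlocks₁₁)⁻¹
  set W := -(Φ.toBlocks₂₁ * R) with hW
  have h1 : Matrix.diagonal (fun u => ∑ v, A u v) - Matrix.of (fun _ _ => 1) + A * W
      = Φ.toBlocks₁₁ * Matrix.diagonal (fun a => μ (Sum.inl a)) * R := by
    rw [← hb11, Matrix.sub_mul, Matrix.mul_assoc, hR, Matrix.mul_one, hW]
    simp [Matrix.mul_assoc, sub_eq_add_neg]
  have h2 := congrArg Matrix.trace h1
  rw [Matrix.trace_mul_comm, ← Matrix.mul_assoc, Matrix.nonsing_inv_mul _ hdet, Matrix.one_mul,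
    Matrix.trace_add, Matrix.trace_sub, Matrix.trace_diagonal, Matrix.trace_diagonal] at h2
  rw [← h2]
  have h3 : (Matrix.of (fun _ _ => 1) : Matrix α α ℝ).trace = Fintype.card α := by
    simp [Matrix.trace]
  have h4 : (A * W).trace ≤ Fintype.card α := by
    have : ∀ u, (A * W) u u ≤ 1 := by
      intro u
      rw [Matrix.mul_apply]
      refine le_trans (Finset.sum_le_sum fun v _ => ?_) (hK.2 u)
      nlinarith [hA0 u v, hA1 u v, hK.1 v u]
    simpa [Matrix.trace] using Finset.sum_le_sum (fun u (_ : u ∈ Finset.univ) => this u)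
  linarith

/-- contraction-type condition -/
def gmP {ι : Type} [Fintype ι] (P : Matrix ι ι ℝ) : Prop :=
  ∀ x : ι → ℝ, 0 ≤ x ⬝ᵥ (P *ᵥ x) ∧ x ⬝ᵥ (P *ᵥ x) ≤ x ⬝ᵥ x

section
variable {ι : Type} [Fintype ι] [DecidableEq ι]

lemma gm_spec' (M : Matrix ι ι ℝ) (hM : M.IsHermitian) :
    ∃ Φ : Matrix ι ι ℝ, Φᵀ * Φ = 1 ∧ M = Φ * Matrix.diagonal hM.eigenvalues * Φᵀ := by
  refine ⟨hM.eigenvectorUnitary, ?_, ?_⟩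
  · have := Unitary.coe_star_mul_self hM.eigenvectorUnitary
    simpa [Matrix.star_eq_conjTranspose, Matrix.conjTranspose_eq_transpose_of_trivial] using this
  · have := hM.spectral_theorem
    rw [Unitary.conjStarAlgAut_apply] at this
    simpa [Matrix.star_eq_conjTranspose, Matrix.conjTranspose_eq_transpose_of_trivial, Function.comp_def] using this

lemma gm_quad (M Φ : Matrix ι ι ℝ) (μ : ι → ℝ) (hM : M = Φ * Matrix.diagonal μ * Φᵀ) (x : ι → ℝ) :
    x ⬝ᵥ (M *ᵥ x) = ∑ i, μ i * ((Φᵀ *ᵥ x) i) ^ 2 := by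
  rw [hM, ← Matrix.mulVec_mulVec, ← Matrix.mulVec_mulVec, Matrix.dotProduct_mulVec,
    ← Matrix.mulVec_transpose]
  simp only [dotProduct, Matrix.mulVec_diagonal]
  exact Finset.sum_congr rfl fun i _ => by ring

lemma gm_quad_neg (M Φ : Matrix ι ι ℝ) (μ : ι → ℝ) (hΦ : Φᵀ * Φ = 1)
    (hM : M = Φ * Matrix.diagonal μ * Φᵀ) (x : ι → ℝ)
    (hx : x ≠ 0) (h : ∀ i, 0 ≤ μ i → (Φᵀ *ᵥ x) i = 0) : x ⬝ᵥ (M *ᵥ x) < 0 := by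
  rw [gm_quad M Φ μ hM]
  have hne : ∃ i, (Φᵀ *ᵥ x) i ≠ 0 := by
    by_contra! hc
    apply hx
    have h0 : Φᵀ *ᵥ x = 0 := funext hc
    have := congrArg (fun y => Φ *ᵥ y) h0
    simpa [Matrix.mulVec_mulVec, mul_eq_one_comm.1 hΦ] using this
  obtain ⟨i, hi⟩ := hne
  apply Finset.sum_neg'
  · intro j _
    by_cases hj : 0 ≤ μ j
    · simp [h j hj]
    · exact mul_nonpos_of_nonpos_of_nonneg (not_le.1 hj).le (sq_nonneg _)
  · refine ⟨i, Finset.mem_univ _, ?_⟩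
    have : μ i < 0 := by
      by_contra hc
      exact hi (h i (not_lt.1 hc))
    exact mul_neg_of_neg_of_pos this (by positivity)

lemma gm_tr (P M Φ : Matrix ι ι ℝ) (hP : gmP P) (μ : ι → ℝ) (hΦ : Φᵀ * Φ = 1)
    (hM : M = Φ * Matrix.diagonal μ * Φᵀ) : (P * M).trace ≤ ∑ i, max (μ i) 0 := by
  have h1 : (P * M).trace = ∑ i, (Φᵀ * P * Φ) i i * μ i := by
    rw [hM, ← Matrix.mul_assoc, Matrix.trace_mul_comm, ← Matrix.mul_assoc, ← Matrix.mul_assoc]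
    simp [Matrix.trace, Matrix.mul_diagonal]
  rw [h1]
  apply Finset.sum_le_sum
  intro i _
  have h2 : (Φᵀ * P * Φ) i i = (Φ.col i) ⬝ᵥ (P *ᵥ (Φ.col i)) := by
    rw [Matrix.mul_assoc]
    simp only [Matrix.mul_apply, dotProduct, Matrix.mulVec, Matrix.col_apply, Matrix.transpose_apply]
  have h3 : (Φ.col i) ⬝ᵥ (Φ.col i) = 1 := by
    have := congrFun (congrFun hΦ i) i
    simpa [Matrix.mul_apply, dotProduct] using this
  have := hP (Φ.col i)
  rw [h3, ← h2] at this
  rcases le_total 0 (μ i) with h | h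
  · rw [max_eq_left h]; nlinarith
  · rw [max_eq_right h]; nlinarith
end

lemma gmM_symm (A : Matrix α β ℝ) : (gmM A).IsHermitian := by
  rw [Matrix.IsHermitian, Matrix.conjTranspose_eq_transpose_of_trivial, gmM, Matrix.fromBlocks_transpose]
  congr 1
  · ext u v; simp [Matrix.diagonal_apply]; grind
  · simp

lemma gm_exists_ker {ι κ : Type} [Fintype ι] [Fintype κ] (h : Fintype.card κ < Fintype.card ι)
    (B : Matrix κ ι ℝ) : ∃ x : ι → ℝ, x ≠ 0 ∧ B *ᵥ x = 0 := by
  classical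
  have : LinearMap.ker B.mulVecLin ≠ ⊥ := LinearMap.ker_ne_bot_of_finrank_lt (by simpa using h)
  obtain ⟨x, hx, hx0⟩ := (Submodule.ne_bot_iff _).1 this
  exact ⟨x, hx0, by simpa using hx⟩

lemma gm_count_le (A : Matrix α β ℝ) (hD : ∀ v, ∑ u, A u v < Fintype.card α)
    (Φ : Matrix (α ⊕ β) (α ⊕ β) ℝ) (μ : α ⊕ β → ℝ)
    (hM : gmM A = Φ * Matrix.diagonal μ * Φᵀ) :
    Fintype.card {i // 0 ≤ μ i} ≤ Fintype.card α := by
  by_contra! hc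
  have hcard : Fintype.card ({i // ¬ 0 ≤ μ i} ⊕ α) < Fintype.card (α ⊕ β) := by
    have h := Fintype.card_subtype_compl (fun i => 0 ≤ μ i)
    have h' := Fintype.card_subtype_le (fun i => 0 ≤ μ i)
    rw [Fintype.card_sum, h]
    omega
  obtain ⟨x, hx, hBx⟩ := gm_exists_ker hcard
    (Matrix.of fun k i => Sum.elim (fun l => Φ i l.1) (fun u => if Sum.inl u = i then 1 else 0) k)
  have h1 : ∀ i, ¬ 0 ≤ μ i → (Φᵀ *ᵥ x) i = 0 := by
    intro i hi
    have := congrFun hBx (Sum.inl ⟨i, hi⟩)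
    simpa [Matrix.mulVec, dotProduct] using this
  have h2 : ∀ u, x (Sum.inl u) = 0 := by
    intro u
    have := congrFun hBx (Sum.inr u)
    simpa [Matrix.mulVec, dotProduct] using this
  have h3 : 0 ≤ x ⬝ᵥ (gmM A *ᵥ x) := by
    rw [gm_quad _ Φ μ hM]
    apply Finset.sum_nonneg
    intro i _
    by_cases hi : 0 ≤ μ i
    · positivity
    · simp [h1 i hi]
  have h4 : x ⬝ᵥ (gmM A *ᵥ x) = ∑ v, ((∑ u, A u v) - Fintype.card α) * x (Sum.inr v) ^ 2 := by
    simp only [dotProduct, Fintype.sum_sum_type, h2, zero_mul, Finset.sum_const_zero, zero_add]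
    apply Finset.sum_congr rfl
    intro v _
    have : (gmM A *ᵥ x) (Sum.inr v) = ((∑ u, A u v) - Fintype.card α) * x (Sum.inr v) := by
      simp [Matrix.mulVec, dotProduct, Fintype.sum_sum_type, h2, gmM, Matrix.diagonal_apply]
    rw [this]; ring
  rw [h4] at h3
  apply hx
  have h6 : ∀ v ∈ Finset.univ, ((∑ u, A u v) - Fintype.card α) * x (Sum.inr v) ^ 2 ≤ 0 := fun v _ =>
    mul_nonpos_of_nonpos_of_nonneg (sub_nonpos.2 (hD v).le) (sq_nonneg _)
  have h7 := (Finset.sum_eq_zero_iff_of_nonpos h6).1 (le_antisymm (Finset.sum_nonpos h6) h3)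
  ext i
  rcases i with u | v
  · exact h2 u
  · have := h7 v (Finset.mem_univ v)
    have h := (sub_neg.2 (hD v)).ne
    simpa [h] using this

lemma gm_of_count (A : Matrix α β ℝ) (hA0 : ∀ u v, 0 ≤ A u v) (hA1 : ∀ u v, A u v ≤ 1)
    (hD : ∀ v, ∑ u, A u v < Fintype.card α)
    (Φ : Matrix (α ⊕ β) (α ⊕ β) ℝ) (μ : α ⊕ β → ℝ) (hΦ : Φᵀ * Φ = 1)
    (hM : gmM A = Φ * Matrix.diagonal μ * Φᵀ)
    (hc : Fintype.card {i // 0 ≤ μ i} = Fintype.card α)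
    (P : Matrix (α ⊕ β) (α ⊕ β) ℝ) (hP : gmP P) :
    (P * gmM A).trace ≤ ∑ u, ∑ v, A u v := by
  have hc2 : Fintype.card {i // ¬ 0 ≤ μ i} = Fintype.card β := by
    rw [Fintype.card_subtype_compl, hc, Fintype.card_sum]; omega
  let e1 : α ≃ {i // 0 ≤ μ i} := Fintype.equivOfCardEq hc.symm
  let e2 : β ≃ {i // ¬ 0 ≤ μ i} := Fintype.equivOfCardEq hc2.symm
  let σ : α ⊕ β ≃ α ⊕ β := (Equiv.sumCongr e1 e2).trans (Equiv.sumCompl (fun i => 0 ≤ μ i))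
  have hΦ' : (Φ.submatrix id σ)ᵀ * (Φ.submatrix id σ) = 1 := by
    rw [Matrix.transpose_submatrix, Matrix.submatrix_mul _ _ _ _ _ Function.bijective_id |>.symm, hΦ]
    simp
  have hM' : gmM A = (Φ.submatrix id σ) * Matrix.diagonal (μ ∘ σ) * (Φ.submatrix id σ)ᵀ := by
    rw [hM, ← Matrix.submatrix_diagonal_equiv, Matrix.transpose_submatrix, Matrix.submatrix_mul_equiv,
      Matrix.submatrix_mul_equiv]
    simp
  have hpos : ∀ a, 0 ≤ (μ ∘ σ) (Sum.inl a) := fun a => (e1 a).2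
  have hneg : ∀ b, (μ ∘ σ) (Sum.inr b) < 0 := fun b => not_le.1 (e2 b).2
  have h1 := gm_case A hA0 hA1 hD _ _ hΦ' hM' hpos hneg
  refine (gm_tr P _ _ hP _ hΦ' hM').trans (le_trans (le_of_eq ?_) h1)
  rw [Fintype.sum_sum_type]
  simp only [max_eq_left (hpos _), max_eq_right (hneg _).le]
  simp

lemma gm_compl (A : Matrix α β ℝ) :
    (gmM (Matrix.of fun v u => 1 - A u v)).submatrix Sum.swap Sum.swap
      = - gmM A - Matrix.of (fun _ _ => 1) := by
  ext i j
  rcases i with i | i <;> rcases j with j | j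
  · by_cases h : i = j
    · subst h; simp [gmM]
    · simp [gmM, h]
  · simp [gmM]
  · simp [gmM]
  · by_cases h : i = j
    · subst h; simp [gmM]
    · simp [gmM, h]

lemma gm_one_left (A : Matrix α β ℝ) :
    (Matrix.of (fun _ _ => 1)) * gmM A = (-(Fintype.card α : ℝ)) • Matrix.of (fun _ _ => 1) := by
  ext i j
  rcases j with j | j
  · simp [gmM, Matrix.mul_apply, Fintype.sum_sum_type, Matrix.diagonal_apply]
    ring
  · simp [gmM, Matrix.mul_apply, Fintype.sum_sum_type, Matrix.diagonal_apply]
    ring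

lemma gm_one_right (A : Matrix α β ℝ) :
    gmM A * (Matrix.of (fun _ _ => 1)) = (-(Fintype.card α : ℝ)) • Matrix.of (fun _ _ => 1) := by
  have h := congrArg Matrix.transpose (gm_one_left A)
  have h2 : (gmM A)ᵀ = gmM A := by
    have := gmM_symm A
    rwa [Matrix.IsHermitian, Matrix.conjTranspose_eq_transpose_of_trivial] at this
  have h3 : (Matrix.of (fun _ _ => 1) : Matrix (α ⊕ β) (α ⊕ β) ℝ)ᵀ = Matrix.of (fun _ _ => 1) := rfl
  rw [Matrix.transpose_mul, h2, Matrix.transpose_smul, h3] at h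
  exact h

lemma gm_trace (A : Matrix α β ℝ) : (gmM A).trace =
    2 * (∑ u, ∑ v, A u v) - Fintype.card α - Fintype.card α * Fintype.card β := by
  simp only [gmM, Matrix.trace, Matrix.diag, Fintype.sum_sum_type, Matrix.fromBlocks_apply₁₁,
    Matrix.fromBlocks_apply₂₂, Matrix.sub_apply, Matrix.diagonal_apply_eq, Matrix.of_apply,
    Finset.sum_sub_distrib]
  have e : ∑ v, ∑ u, A u v = ∑ u, ∑ v, A u v := Finset.sum_comm
  rw [e]
  simp
  ring

lemma gm_trJ {ι : Type} [Fintype ι] (P : Matrix ι ι ℝ) (hP : gmP P) :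
    0 ≤ (P * Matrix.of (fun _ _ => 1)).trace := by
  have := (hP (fun _ => 1)).1
  simpa [Matrix.trace, Matrix.mul_apply, dotProduct, Matrix.mulVec] using this

lemma gm_dual [Nonempty α] (A : Matrix α β ℝ)
    (h : ∀ Q : Matrix (β ⊕ α) (β ⊕ α) ℝ, gmP Q →
      (Q * gmM (Matrix.of fun v u => 1 - A u v)).trace ≤ ∑ v, ∑ u, (1 - A u v))
    (P : Matrix (α ⊕ β) (α ⊕ β) ℝ) (hP : gmP P) :
    (P * gmM A).trace ≤ ∑ u, ∑ v, A u v := by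
  set J : Matrix (α ⊕ β) (α ⊕ β) ℝ := Matrix.of (fun _ _ => 1) with hJ
  set n : ℝ := (Fintype.card (α ⊕ β) : ℝ) with hn
  set N : ℝ := (Fintype.card α : ℝ) with hN
  have hn0 : 0 < n := by
    rw [hn]; exact_mod_cast Fintype.card_pos
  obtain ⟨Pi0, hPi0⟩ : ∃ X : Matrix (α ⊕ β) (α ⊕ β) ℝ, X = 1 - n⁻¹ • J := ⟨_, rfl⟩
  have hJJ : J * J = n • J := by
    ext i j; simp [hJ, Matrix.mul_apply, hn]
  have hPi0J : Pi0 * J = 0 := by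
    rw [hPi0, Matrix.sub_mul, Matrix.smul_mul, hJJ, smul_smul, inv_mul_cancel₀ hn0.ne']; simp
  have hPi0t : Pi0ᵀ = Pi0 := by
    rw [hPi0, Matrix.transpose_sub, Matrix.transpose_smul]; simp [hJ]; rfl
  have hPi0Pi0 : Pi0 * Pi0 = Pi0 := by
    nth_rewrite 2 [hPi0]
    rw [Matrix.mul_sub, Matrix.mul_smul, hPi0J]; simp
  have hJM : J * gmM A = (-N) • J := gm_one_left A
  have hMJ : gmM A * J = (-N) • J := gm_one_right A
  have hPi0M : Pi0 * gmM A * Pi0 = gmM A + (N * n⁻¹) • J := by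
    have h1 : Pi0 * gmM A = gmM A + (N * n⁻¹) • J := by
      rw [hPi0, Matrix.sub_mul, Matrix.smul_mul, hJM, smul_smul, Matrix.one_mul]
      rw [show n⁻¹ * -N = -(N * n⁻¹) by ring, neg_smul]; simp
    rw [h1]
    nth_rewrite 1 [hPi0]
    have h2 : Pi0 * gmM A * J = 0 := by
      rw [Matrix.mul_assoc, hMJ, Matrix.mul_smul, hPi0J, smul_zero]
    rw [Matrix.mul_sub, Matrix.mul_smul, ← h1, h2]; simp
  set Q' := Pi0 * (1 - P) * Pi0 with hQ'
  have hQ'P : gmP Q' := by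
    intro x
    have e : x ⬝ᵥ (Q' *ᵥ x) = (Pi0 *ᵥ x) ⬝ᵥ (Pi0 *ᵥ x) - (Pi0 *ᵥ x) ⬝ᵥ (P *ᵥ (Pi0 *ᵥ x)) := by
      rw [hQ', ← Matrix.mulVec_mulVec, ← Matrix.mulVec_mulVec, Matrix.dotProduct_mulVec,
        ← Matrix.mulVec_transpose, hPi0t, Matrix.sub_mulVec 1 P, dotProduct_sub, Matrix.one_mulVec]
    have e2 : (Pi0 *ᵥ x) ⬝ᵥ (Pi0 *ᵥ x) = x ⬝ᵥ (Pi0 *ᵥ x) := by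
      rw [Matrix.dotProduct_mulVec, ← Matrix.mulVec_transpose, hPi0t, Matrix.mulVec_mulVec, hPi0Pi0, dotProduct_comm]
    have e3 : 0 ≤ (x - Pi0 *ᵥ x) ⬝ᵥ (x - Pi0 *ᵥ x) := Finset.sum_nonneg fun i _ => mul_self_nonneg _
    rw [sub_dotProduct, dotProduct_sub, dotProduct_sub, e2, dotProduct_comm (Pi0 *ᵥ x) x] at e3
    have := hP (Pi0 *ᵥ x)
    rw [e]
    constructor
    · linarith
    · linarith
  have hswap : ∀ B : Matrix (α ⊕ β) (α ⊕ β) ℝ, B.submatrix (Sum.swap : β ⊕ α → α ⊕ β) Sum.swap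
      = B.submatrix (Equiv.sumComm β α) (Equiv.sumComm β α) := fun B => rfl
  have hQP : gmP (Q'.submatrix (Equiv.sumComm β α) (Equiv.sumComm β α)) := by
    intro x
    have := hQ'P (x ∘ Sum.swap)
    simp only [dotProduct, Matrix.mulVec, Fintype.sum_sum_type] at this ⊢
    simp only [Matrix.submatrix_apply, Equiv.sumComm_apply, Sum.swap_inl, Sum.swap_inr, Function.comp] at this ⊢
    simp only [add_comm] at this ⊢
    exact this
  have h1 := h _ hQP
  have h2 : ((Q'.submatrix (Equiv.sumComm β α) (Equiv.sumComm β α)) *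
      gmM (Matrix.of fun v u => 1 - A u v)).trace = (Q' * (-gmM A - J)).trace := by
    rw [← gm_compl A]
    have e : ∀ B : Matrix (β ⊕ α) (β ⊕ α) ℝ, B =
      (B.submatrix (Sum.swap : α ⊕ β → β ⊕ α) Sum.swap).submatrix (Equiv.sumComm β α) (Equiv.sumComm β α) := by
      intro B; ext i j; simp
    conv_lhs => rw [e (gmM (Matrix.of fun v u => 1 - A u v))]
    rw [Matrix.submatrix_mul_equiv]
    simp [Matrix.trace, Fintype.sum_sum_type, add_comm]
  rw [h2] at h1
  have h3 : (Q' * (-gmM A - J)).trace = - ((1 - P) * (gmM A + (N * n⁻¹) • J)).trace := by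
    rw [← hPi0M, hQ', Matrix.mul_assoc (Pi0 * (1 - P)), Matrix.mul_sub Pi0 (-gmM A) J, hPi0J, sub_zero, Matrix.mul_neg,
      Matrix.mul_neg, Matrix.trace_neg, Matrix.mul_assoc Pi0, Matrix.trace_mul_comm Pi0]
    simp only [Matrix.mul_assoc]
  have h4 : J.trace = n := by simp [hJ, Matrix.trace, hn]
  have h5 := gm_trJ P hP
  have h6 := gm_trace A
  rw [h3, Matrix.sub_mul, Matrix.one_mul, Matrix.trace_sub, Matrix.trace_add, Matrix.trace_smul, h4,
    Matrix.mul_add, Matrix.trace_add, Matrix.mul_smul, Matrix.trace_smul, h6, smul_eq_mul, smul_eq_mul,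
    mul_assoc N, inv_mul_cancel₀ hn0.ne'] at h1
  have h7 : ∑ v, ∑ u, (1 - A u v) = N * Fintype.card β - ∑ u, ∑ v, A u v := by
    simp only [Finset.sum_sub_distrib]
    have e : ∑ v, ∑ u, A u v = ∑ u, ∑ v, A u v := Finset.sum_comm
    rw [e]
    simp [hN, mul_comm]
  rw [h7] at h1
  have h8 : 0 ≤ N * n⁻¹ * (P * J).trace := by
    have : 0 ≤ N := by rw [hN]; positivity
    positivity
  linarith

lemma gm_strict [Nonempty α] [Nonempty β] (A : Matrix α β ℝ) (hA0 : ∀ u v, 0 < A u v)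
    (hA1 : ∀ u v, A u v < 1) (P : Matrix (α ⊕ β) (α ⊕ β) ℝ) (hP : gmP P) :
    (P * gmM A).trace ≤ ∑ u, ∑ v, A u v := by
  set B : Matrix β α ℝ := Matrix.of fun v u => 1 - A u v with hB
  have hD : ∀ v, ∑ u, A u v < Fintype.card α := by
    intro v
    have : ∑ u, A u v < ∑ u : α, (1:ℝ) := Finset.sum_lt_sum_of_nonempty Finset.univ_nonempty fun u _ => hA1 u v
    simpa using this
  have hD' : ∀ u, ∑ v, B v u < Fintype.card β := by
    intro u
    have : ∑ v, B v u < ∑ v : β, (1:ℝ) := Finset.sum_lt_sum_of_nonempty Finset.univ_nonempty fun v _ => by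
      simp [hB, hA0 u v]
    simpa using this
  obtain ⟨Φ, hΦ, hM⟩ := gm_spec' _ (gmM_symm A)
  obtain ⟨Φ', hΦ', hM'⟩ := gm_spec' _ (gmM_symm B)
  set μ := (gmM_symm A).eigenvalues
  set μ' := (gmM_symm B).eigenvalues
  have c1 := gm_count_le A hD Φ μ hM
  have c2 := gm_count_le B hD' Φ' μ' hM'
  rcases c1.eq_or_lt with c1 | c1
  · exact gm_of_count A (fun u v => (hA0 u v).le) (fun u v => (hA1 u v).le) hD Φ μ hΦ hM c1 P hP
  rcases c2.eq_or_lt with c2 | c2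
  · refine gm_dual A ?_ P hP
    intro Q hQ
    exact gm_of_count B (fun u v => by simp [hB, (hA1 v u).le]) (fun u v => by simp [hB, (hA0 v u).le])
      hD' Φ' μ' hΦ' hM' c2 Q hQ
  exfalso
  have hcard : Fintype.card ({i // 0 ≤ μ i} ⊕ {i // 0 ≤ μ' i} ⊕ Unit) < Fintype.card (α ⊕ β) := by
    simp only [Fintype.card_sum, Fintype.card_unit]; omega
  obtain ⟨x, hx, hBx⟩ := gm_exists_ker hcard
    (Matrix.of fun k i => Sum.elim (fun l => Φ i l.1) (Sum.elim (fun l => Φ' i.swap l.1) (fun _ => 1)) k)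
  have h1 : ∀ i, 0 ≤ μ i → (Φᵀ *ᵥ x) i = 0 := by
    intro i hi
    have := congrFun hBx (Sum.inl ⟨i, hi⟩)
    simpa [Matrix.mulVec, dotProduct] using this
  have h2 : ∀ i, 0 ≤ μ' i → (Φ'ᵀ *ᵥ (x ∘ Sum.swap)) i = 0 := by
    intro i hi
    have := congrFun hBx (Sum.inr (Sum.inl ⟨i, hi⟩))
    simpa [Matrix.mulVec, dotProduct, add_comm] using this
  have h3 : ∑ i, x i = 0 := by
    have := congrFun hBx (Sum.inr (Sum.inr ()))
    simpa [Matrix.mulVec, dotProduct] using this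
  have q1 := gm_quad_neg _ Φ μ hΦ hM x hx h1
  have q2 := gm_quad_neg _ Φ' μ' hΦ' hM' (x ∘ Sum.swap) (by
    intro h
    apply hx
    ext i
    have := congrFun h i.swap
    simpa using this) h2
  have q3 : (x ∘ Sum.swap) ⬝ᵥ (gmM B *ᵥ (x ∘ Sum.swap)) = x ⬝ᵥ ((-gmM A - Matrix.of (fun _ _ => 1)) *ᵥ x) := by
    rw [← gm_compl A]
    simp only [dotProduct, Matrix.mulVec, Fintype.sum_sum_type, Matrix.submatrix_apply, Sum.swap_inl, Sum.swap_inr, Function.comp, hB]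
    simp only [add_comm]
  have q4 : x ⬝ᵥ ((Matrix.of (fun _ _ => (1:ℝ))) *ᵥ x) = 0 := by
    simp only [dotProduct, Matrix.mulVec, Matrix.of_apply, one_mul, h3]; simp
  rw [q3, Matrix.sub_mulVec, Matrix.neg_mulVec, dotProduct_sub, dotProduct_neg, q4] at q2
  linarith

lemma gm_affine (A B : Matrix α β ℝ) (t : ℝ) :
    gmM ((1 - t) • A + t • B) = (1 - t) • gmM A + t • gmM B := by
  ext i j
  rcases i with i | i <;> rcases j with j | j
  · by_cases h : i = j
    · subst h; simp [gmM, Finset.sum_add_distrib, ← Finset.mul_sum]; ring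
    · simp [gmM, h]; ring
  · simp [gmM]; ring
  · simp [gmM]; ring
  · by_cases h : i = j
    · subst h; simp [gmM, Finset.sum_add_distrib, ← Finset.mul_sum]; ring
    · simp [gmM, h]

theorem gm_split (A : Matrix α β ℝ) (hA0 : ∀ u v, 0 ≤ A u v)
    (hA1 : ∀ u v, A u v ≤ 1) (P : Matrix (α ⊕ β) (α ⊕ β) ℝ) (hP : gmP P) :
    (P * gmM A).trace ≤ ∑ u, ∑ v, A u v := by
  rcases isEmpty_or_nonempty α with hα | hα
  · have : gmM A = 0 := by
      ext i j
      rcases i with i | i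
      · exact isEmptyElim i
      rcases j with j | j
      · exact isEmptyElim j
      · simp [gmM]
    rw [this]; simp
  rcases isEmpty_or_nonempty β with hβ | hβ
  · have : gmM A = - Matrix.of (fun _ _ => 1) := by
      ext i j
      rcases i with i | i
      · rcases j with j | j
        · simp [gmM]
        · exact isEmptyElim j
      · exact isEmptyElim i
    rw [this, Matrix.mul_neg, Matrix.trace_neg]
    have := gm_trJ P hP
    simpa using this
  set B : Matrix α β ℝ := Matrix.of fun _ _ => 1 / 2 with hB
  set a := ∑ u, ∑ v, A u v - (P * gmM A).trace with ha
  set b := ∑ u, ∑ v, B u v - (P * gmM B).trace with hb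
  have key : ∀ t : ℝ, 0 < t → t < 1 → 0 ≤ (1 - t) * a + t * b := by
    intro t h0 h1
    have := gm_strict ((1 - t) • A + t • B) (fun u v => by
      have := mul_nonneg (sub_nonneg.2 h1.le) (hA0 u v)
      simp [hB]; linarith) (fun u v => by
      have := mul_le_mul_of_nonneg_left (hA1 u v) (sub_nonneg.2 h1.le)
      simp [hB]; linarith) P hP
    rw [gm_affine, Matrix.mul_add, Matrix.trace_add, Matrix.mul_smul, Matrix.mul_smul,
      Matrix.trace_smul, Matrix.trace_smul] at this
    simp only [Matrix.add_apply, Matrix.smul_apply, smul_eq_mul, Finset.sum_add_distrib, ← Finset.mul_sum] at this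
    rw [ha, hb]
    linarith
  suffices 0 ≤ a by rw [ha] at this; linarith
  by_contra! hneg
  have hbpos : 0 < b := by
    have := key (1 / 2) (by norm_num) (by norm_num)
    linarith
  have := key ((-a) / (2 * (b - a))) (div_pos (by linarith) (by linarith)) (by
    rw [div_lt_one (by linarith)]; linarith)
  have hne : b - a ≠ 0 := by linarith
  have e : (1 - (-a) / (2 * (b - a))) * a + (-a) / (2 * (b - a)) * b = a / 2 := by
    field_simp; ring
  rw [e] at this
  linarith

end

lemma gm_ith {n : ℕ} (f : Fin n → ℝ) (m : ℕ) (hm : m ≤ n) :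
    ∃ H : Finset (Fin n), H.card = m ∧ (∀ u ∈ H, ∀ v ∉ H, f v ≤ f u) ∧
      (∀ g : ℝ → ℝ, ∑ i ∈ Finset.Icc 1 m, g (ithLargest f i) = ∑ u ∈ H, g (f u)) ∧
      (∀ g : ℝ → ℝ, ∑ i ∈ Finset.Icc (m + 1) n, g (ithLargest f i) = ∑ u ∈ Hᶜ, g (f u)) := by
  obtain ⟨τ, hτ⟩ : ∃ τ : Fin n ≃ Fin n, ∀ i, τ i = Tuple.sort f (Fin.rev i) :=
    ⟨Fin.revPerm.trans (Tuple.sort f), fun i => rfl⟩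
  have hval : ∀ i : Fin n, ithLargest f (i.val + 1) = f (τ i) := by
    intro i
    have h : 1 ≤ i.val + 1 ∧ i.val + 1 ≤ n := by omega
    rw [ithLargest, dif_pos h, hτ]
    rfl
  have hanti : ∀ i j : Fin n, i ≤ j → f (τ j) ≤ f (τ i) := by
    intro i j hij
    rw [hτ, hτ]
    exact Tuple.monotone_sort f (Fin.rev_le_rev.2 hij)
  have hmem : ∀ u, u ∈ (Finset.univ.filter (fun i : Fin n => i.val < m)).map τ.toEmbedding ↔
      (τ.symm u).val < m := by
    intro u
    simp only [Finset.mem_map, Finset.mem_filter, Finset.mem_univ, true_and, Equiv.coe_toEmbedding]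
    constructor
    · rintro ⟨a, ha, rfl⟩; simpa using ha
    · intro h; exact ⟨_, h, by simp⟩
  refine ⟨(Finset.univ.filter (fun i : Fin n => i.val < m)).map τ.toEmbedding, ?_, ?_, ?_, ?_⟩
  · rw [Finset.card_map, Fin.card_filter_val_lt, min_eq_right hm]
  · intro u hu v hv
    rw [hmem] at hu hv
    have := hanti (τ.symm u) (τ.symm v) (by rw [Fin.le_def]; omega)
    simpa using this
  · intro g
    symm
    refine Finset.sum_bij (fun u _ => (τ.symm u).val + 1) ?_ ?_ ?_ ?_
    · intro u hu
      rw [hmem] at hu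
      simp only [Finset.mem_Icc]; omega
    · intro u _ v _ h
      exact τ.symm.injective (Fin.ext (by omega))
    · intro i hi
      simp only [Finset.mem_Icc] at hi
      refine ⟨τ ⟨i - 1, by omega⟩, ?_, ?_⟩
      · rw [hmem]; simp; omega
      · simp; omega
    · intro u _
      rw [hval]; simp
  · intro g
    symm
    refine Finset.sum_bij (fun u _ => (τ.symm u).val + 1) ?_ ?_ ?_ ?_
    · intro u hu
      rw [Finset.mem_compl, hmem] at hu
      simp only [Finset.mem_Icc]; omega
    · intro u _ v _ h
      exact τ.symm.injective (Fin.ext (by omega))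
    · intro i hi
      simp only [Finset.mem_Icc] at hi
      refine ⟨τ ⟨i - 1, by omega⟩, ?_, ?_⟩
      · rw [Finset.mem_compl, hmem]; simp; omega
      · simp; omega
    · intro u _
      rw [hval]; simp

section
variable {ι : Type} [Fintype ι] [DecidableEq ι]

/-- weighted Laplacian -/
noncomputable def gmLap (W : Matrix ι ι ℝ) : Matrix ι ι ℝ :=
  Matrix.diagonal (fun u => ∑ v, W u v) - W

lemma gm_s (P : Matrix ι ι ℝ) (hP : gmP P) (u v : ι) :
    0 ≤ P u u + P v v - P u v - P v u ∧ P u u + P v v - P u v - P v u ≤ 2 := by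
  have h := hP (Pi.single u 1 - Pi.single v 1)
  have e : (Pi.single u 1 - Pi.single v 1) ⬝ᵥ (P *ᵥ (Pi.single u 1 - Pi.single v 1)) =
      P u u + P v v - P u v - P v u := by
    simp [Matrix.mulVec_sub, sub_dotProduct, dotProduct_sub]; ring
  rw [e] at h
  refine ⟨h.1, h.2.trans ?_⟩
  by_cases huv : u = v
  · subst huv; simp
  · simp [sub_dotProduct, dotProduct_sub, huv, Ne.symm huv]; norm_num

lemma gm_lap_tr (P W : Matrix ι ι ℝ) (hW : ∀ u v, W u v = W v u) :
    2 * (P * gmLap W).trace = ∑ u, ∑ v, W u v * (P u u + P v v - P u v - P v u) := by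
  have h1 : (P * gmLap W).trace = ∑ u, ∑ v, W u v * (P u u - P u v) := by
    rw [gmLap, Matrix.mul_sub, Matrix.trace_sub]
    simp only [Matrix.trace, Matrix.diag, Matrix.mul_diagonal, Matrix.mul_apply (M := P) (N := W)]
    rw [← Finset.sum_sub_distrib]
    refine Finset.sum_congr rfl fun u _ => ?_
    rw [Finset.mul_sum, ← Finset.sum_sub_distrib]
    refine Finset.sum_congr rfl fun v _ => ?_
    rw [hW v u]; ring
  have h2 : (P * gmLap W).trace = ∑ u, ∑ v, W u v * (P v v - P v u) := by
    rw [h1, Finset.sum_comm]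
    refine Finset.sum_congr rfl fun u _ => Finset.sum_congr rfl fun v _ => ?_
    rw [hW v u]
  rw [two_mul]
  nth_rewrite 1 [h1]
  rw [h2, ← Finset.sum_add_distrib]
  refine Finset.sum_congr rfl fun u _ => ?_
  rw [← Finset.sum_add_distrib]
  refine Finset.sum_congr rfl fun v _ => ?_
  ring

lemma gm_mono (P W W' B : Matrix ι ι ℝ) (hP : gmP P) (hW : ∀ u v, W u v = W v u)
    (hW' : ∀ u v, W' u v = W' v u) (hB : ∀ u v, 0 ≤ B u v) (h : ∀ u v, W u v ≤ W' u v + B u v) :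
    (P * gmLap W).trace ≤ (P * gmLap W').trace + ∑ u, ∑ v, B u v := by
  have h1 := gm_lap_tr P W hW
  have h2 := gm_lap_tr P W' hW'
  have h3 : ∑ u, ∑ v, W u v * (P u u + P v v - P u v - P v u) ≤
      ∑ u, ∑ v, (W' u v * (P u u + P v v - P u v - P v u) + 2 * B u v) := by
    refine Finset.sum_le_sum fun u _ => Finset.sum_le_sum fun v _ => ?_
    have hs := gm_s P hP u v
    have i1 := mul_le_mul_of_nonneg_right (h u v) hs.1
    have i2 := mul_le_mul_of_nonneg_left hs.2 (hB u v)
    linarith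
  simp only [Finset.sum_add_distrib, ← Finset.mul_sum] at h3
  linarith

lemma gm_proj (Φ : Matrix ι ι ℝ) (hΦ : Φᵀ * Φ = 1) (I : Finset ι) :
    gmP (Φ * Matrix.diagonal (fun i => if i ∈ I then 1 else 0) * Φᵀ) ∧
    (Φ * Matrix.diagonal (fun i => if i ∈ I then (1:ℝ) else 0) * Φᵀ).trace = I.card := by
  constructor
  · intro x
    rw [gm_quad _ Φ _ rfl]
    have h1 : x ⬝ᵥ x = ∑ i, (fun _ => (1:ℝ)) i * ((Φᵀ *ᵥ x) i) ^ 2 := by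
      rw [← gm_quad 1 Φ (fun _ => (1:ℝ))]
      · simp
      · rw [Matrix.diagonal_one, Matrix.mul_one, mul_eq_one_comm.1 hΦ]
    rw [h1]
    constructor
    · refine Finset.sum_nonneg fun i _ => ?_
      split_ifs <;> positivity
    · refine Finset.sum_le_sum fun i _ => ?_
      split_ifs
      · simp
      · simp only [zero_mul, one_mul]; positivity
  · rw [Matrix.trace_mul_comm, ← Matrix.mul_assoc, hΦ, Matrix.one_mul]
    simp [Matrix.trace]

lemma gm_proj_tr (Φ L : Matrix ι ι ℝ) (μ : ι → ℝ) (hΦ : Φᵀ * Φ = 1)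
    (hL : L = Φ * Matrix.diagonal μ * Φᵀ) (I : Finset ι) :
    ((Φ * Matrix.diagonal (fun i => if i ∈ I then (1:ℝ) else 0) * Φᵀ) * L).trace = ∑ i ∈ I, μ i := by
  have : (Φ * Matrix.diagonal (fun i => if i ∈ I then (1:ℝ) else 0) * Φᵀ) * L =
      Φ * (Matrix.diagonal (fun i => if i ∈ I then (1:ℝ) else 0) * Matrix.diagonal μ) * Φᵀ := by
    rw [hL]
    calc _ = Φ * Matrix.diagonal (fun i => if i ∈ I then (1:ℝ) else 0) * (Φᵀ * Φ) * Matrix.diagonal μ * Φᵀ := by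
          simp only [Matrix.mul_assoc]
      _ = _ := by rw [hΦ, Matrix.mul_one]; simp only [Matrix.mul_assoc]
  rw [this, Matrix.trace_mul_comm, ← Matrix.mul_assoc, hΦ, Matrix.one_mul, Matrix.diagonal_mul_diagonal]
  simp [Matrix.trace]
end

section
variable {α β : Type} [Fintype α] [Fintype β] [DecidableEq α] [DecidableEq β]

lemma gm_lap_eq (A : Matrix α β ℝ) :
    gmLap (Matrix.fromBlocks (Matrix.of fun _ _ => 1) A Aᵀ 0) =
      gmM A + (Fintype.card α : ℝ) • (1 : Matrix (α ⊕ β) (α ⊕ β) ℝ) := by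
  ext i j
  rcases i with i | i <;> rcases j with j | j
  · by_cases h : i = j
    · subst h; simp [gmM, gmLap, Fintype.sum_sum_type]; ring
    · simp [gmM, gmLap, h]
  · simp [gmM, gmLap]
  · simp [gmM, gmLap]
  · by_cases h : i = j
    · subst h; simp [gmM, gmLap, Fintype.sum_sum_type]
    · simp [gmM, gmLap, h]

lemma gm_sum (W : Matrix (α ⊕ β) (α ⊕ β) ℝ) (hW : ∀ u v, W u v = W v u) (hW0 : ∀ u v, 0 ≤ W u v)
    (hW1 : ∀ u v, W u v ≤ 1) (P : Matrix (α ⊕ β) (α ⊕ β) ℝ) (hP : gmP P) :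
    (P * gmLap W).trace ≤ Fintype.card α * P.trace + ∑ v : β, ∑ i, W (Sum.inr v) i := by
  have h1 := gm_mono P W (Matrix.fromBlocks (Matrix.of fun _ _ => 1) W.toBlocks₁₂ W.toBlocks₁₂ᵀ 0)
    (Matrix.fromBlocks 0 0 0 W.toBlocks₂₂) hP hW
    (by rintro (u | u) (v | v) <;> simp)
    (by rintro (u | u) (v | v) <;> simp [Matrix.toBlocks₂₂, hW0])
    (by
      rintro (u | u) (v | v)
      · simp [hW1]
      · simp [Matrix.toBlocks₁₂]
      · simp [Matrix.toBlocks₁₂, hW (Sum.inr u)]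
      · simp [Matrix.toBlocks₂₂])
  rw [gm_lap_eq, Matrix.mul_add, Matrix.trace_add, Matrix.mul_smul, Matrix.mul_one, Matrix.trace_smul,
    smul_eq_mul] at h1
  have h2 := gm_split W.toBlocks₁₂ (fun u v => hW0 _ _) (fun u v => hW1 _ _) P hP
  have hc : ∑ u : α, ∑ v : β, W.toBlocks₁₂ u v = ∑ v : β, ∑ u : α, W.toBlocks₁₂ u v := Finset.sum_comm
  rw [hc] at h2
  simp only [Fintype.sum_sum_type, Matrix.fromBlocks_apply₁₁, Matrix.fromBlocks_apply₁₂,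
    Matrix.fromBlocks_apply₂₁, Matrix.fromBlocks_apply₂₂, Matrix.zero_apply, Finset.sum_const_zero,
    zero_add] at h1
  have h3 : ∑ v : β, ∑ i, W (Sum.inr v) i =
      ∑ v : β, ∑ u : α, W.toBlocks₁₂ u v + ∑ v : β, ∑ v' : β, W.toBlocks₂₂ v v' := by
    rw [← Finset.sum_add_distrib]
    refine Finset.sum_congr rfl fun v _ => ?_
    rw [Fintype.sum_sum_type]
    congr 1
    refine Finset.sum_congr rfl fun u _ => ?_
    rw [hW]; rfl
  rw [h3]
  linarith
end

lemma gm_graph {n : ℕ} (G : SimpleGraph (Fin n)) [DecidableRel G.Adj] (k : ℕ)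
    (P : Matrix (Fin n) (Fin n) ℝ) (hP : gmP P) (htr : P.trace = k) :
    (P * G.lapMatrix ℝ).trace ≤ ∑ u, min (G.degree u : ℝ) k := by
  classical
  have hdeg : ∀ u, ∑ v, G.adjMatrix ℝ u v = (G.degree u : ℝ) := by
    intro u
    simp only [SimpleGraph.adjMatrix_apply, Finset.sum_boole]
    rw [← SimpleGraph.card_neighborFinset_eq_degree, SimpleGraph.neighborFinset_eq_filter]
  have hL : G.lapMatrix ℝ = gmLap (G.adjMatrix ℝ) := by
    rw [SimpleGraph.lapMatrix, gmLap, SimpleGraph.degMatrix]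
    simp only [hdeg]
  let e : {u : Fin n // k ≤ G.degree u} ⊕ {u : Fin n // ¬ k ≤ G.degree u} ≃ Fin n :=
    Equiv.sumCompl (fun u => k ≤ G.degree u)
  have hPe : gmP (P.submatrix e e) := by
    intro x
    have h := hP (x ∘ e.symm)
    have e1 : x ⬝ᵥ (P.submatrix e e *ᵥ x) = (x ∘ e.symm) ⬝ᵥ (P *ᵥ (x ∘ e.symm)) := by
      simp only [dotProduct, Matrix.mulVec]
      rw [← Equiv.sum_comp e]
      refine Finset.sum_congr rfl fun i _ => ?_
      rw [← Equiv.sum_comp e (fun j => P (e i) j * (x ∘ e.symm) j)]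
      simp
    have e2 : x ⬝ᵥ x = (x ∘ e.symm) ⬝ᵥ (x ∘ e.symm) := by
      simp only [dotProduct]
      rw [← Equiv.sum_comp e]
      simp
    rw [e1, e2]; exact h
  have hLe : (gmLap (G.adjMatrix ℝ)).submatrix e e = gmLap ((G.adjMatrix ℝ).submatrix e e) := by
    rw [gmLap, gmLap, Matrix.submatrix_sub, Pi.sub_apply, Pi.sub_apply, Matrix.submatrix_diagonal_equiv]
    congr 2
    ext i
    simp only [Function.comp, Matrix.submatrix_apply]
    rw [← Equiv.sum_comp e]
  have htre : ∀ M : Matrix (Fin n) (Fin n) ℝ, (M.submatrix e e).trace = M.trace := by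
    intro M
    simp only [Matrix.trace, Matrix.diag, Matrix.submatrix_apply]
    exact Equiv.sum_comp e (fun i => M i i)
  have h := gm_sum ((G.adjMatrix ℝ).submatrix e e)
    (fun u v => by simp [SimpleGraph.adjMatrix_apply, G.adj_comm])
    (fun u v => by simp only [Matrix.submatrix_apply, SimpleGraph.adjMatrix_apply]; split_ifs <;> norm_num)
    (fun u v => by simp only [Matrix.submatrix_apply, SimpleGraph.adjMatrix_apply]; split_ifs <;> norm_num)
    _ hPe
  rw [← hLe, Matrix.submatrix_mul_equiv, htre, htre, htr, ← hL] at h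
  refine h.trans (le_of_eq ?_)
  rw [← Equiv.sum_comp e, Fintype.sum_sum_type]
  congr 1
  · have : ∀ x : {u : Fin n // k ≤ G.degree u}, min (G.degree (e (Sum.inl x)) : ℝ) k = k := by
      intro x
      exact min_eq_right (by exact_mod_cast x.2)
    simp only [this]
    simp
  · refine Finset.sum_congr rfl fun x _ => ?_
    have : min (G.degree (e (Sum.inr x)) : ℝ) k = G.degree (e (Sum.inr x)) := 
      min_eq_left (by exact_mod_cast (not_le.1 x.2).le)
    rw [this, ← hdeg]
    simp only [Matrix.submatrix_apply]
    exact Equiv.sum_comp e (fun i => G.adjMatrix ℝ (e (Sum.inr x)) i)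

lemma gm_A {n : ℕ} (G : SimpleGraph (Fin n)) [DecidableRel G.Adj]
    (Φ : Matrix (Fin n) (Fin n) ℝ) (μ : Fin n → ℝ) (hΦ : Φᵀ * Φ = 1)
    (hL : G.lapMatrix ℝ = Φ * Matrix.diagonal μ * Φᵀ) (hμ : ∀ i, 0 ≤ μ i)
    (I H : Finset (Fin n)) (hH : H.card = 2 * I.card) (hne : H.Nonempty)
    (hord : ∀ u ∈ H, ∀ v ∉ H, (G.degree v : ℝ) ≤ G.degree u) :
    ∑ i ∈ I, μ i ≤ ∑ u ∈ H, (G.degree u : ℝ) := by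
  have hcol : ∀ j, ∑ u, Φ u j ^ 2 = 1 := by
    intro j
    have := congrFun (congrFun hΦ j) j
    simpa [Matrix.mul_apply, sq] using this
  have heig : ∀ j, G.lapMatrix ℝ *ᵥ (fun u => Φ u j) = fun u => μ j * Φ u j := by
    intro j
    have h1 : G.lapMatrix ℝ * Φ = Φ * Matrix.diagonal μ := by
      rw [hL, Matrix.mul_assoc, hΦ, Matrix.mul_one]
    ext u
    have := congrFun (congrFun h1 u) j
    rw [Matrix.mul_diagonal, Matrix.mul_apply] at this
    rw [mul_comm (μ j), ← this]; rfl
  have hdiag : ∀ u, (G.degree u : ℝ) = ∑ j, μ j * Φ u j ^ 2 := by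
    intro u
    have h1 : G.lapMatrix ℝ u u = G.degree u := by
      simp [SimpleGraph.lapMatrix, SimpleGraph.degMatrix, SimpleGraph.adjMatrix_apply]
    rw [← h1, hL, Matrix.mul_apply]
    refine Finset.sum_congr rfl fun j _ => ?_
    rw [Matrix.mul_diagonal, Matrix.transpose_apply]; ring
  have hj : ∀ j, ∑ u, μ j * Φ u j ^ 2 / G.degree u ≤ 2 := by
    intro j
    rcases (hμ j).eq_or_lt with h0 | h0
    · simp [← h0]
    have h1 : ∀ u, μ j * (μ j * Φ u j ^ 2 / G.degree u) ≤
        ∑ v, if G.Adj u v then (Φ u j - Φ v j) ^ 2 else 0 := by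
      intro u
      have h2 := congrFun (heig j) u
      rw [SimpleGraph.lapMatrix_mulVec_apply] at h2
      have h3 : μ j * Φ u j = ∑ v ∈ G.neighborFinset u, (Φ u j - Φ v j) := by
        rw [← h2, Finset.sum_sub_distrib]; simp
      have h4 := sq_sum_le_card_mul_sum_sq (s := G.neighborFinset u) (f := fun v => Φ u j - Φ v j)
      rw [← h3, SimpleGraph.card_neighborFinset_eq_degree] at h4
      have h5 : (∑ v, if G.Adj u v then (Φ u j - Φ v j) ^ 2 else 0) =
          ∑ v ∈ G.neighborFinset u, (Φ u j - Φ v j) ^ 2 := by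
        rw [SimpleGraph.neighborFinset_eq_filter, Finset.sum_filter]
      rw [h5]
      have h6 : 0 ≤ ∑ v ∈ G.neighborFinset u, (Φ u j - Φ v j) ^ 2 :=
        Finset.sum_nonneg fun _ _ => sq_nonneg _
      have h7 : μ j * (μ j * Φ u j ^ 2 / G.degree u) = (μ j * Φ u j) ^ 2 / G.degree u := by ring
      rw [h7]
      exact div_le_of_le_mul₀ (by positivity) h6 (h4.trans_eq (mul_comm _ _))
    have h8 := SimpleGraph.lapMatrix_toLinearMap₂' ℝ G (fun u => Φ u j)
    rw [Matrix.toLinearMap₂'_apply', heig j] at h8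
    have h9 : (fun u => Φ u j) ⬝ᵥ (fun u => μ j * Φ u j) = μ j := by
      have : (fun u => Φ u j) ⬝ᵥ (fun u => μ j * Φ u j) = μ j * ∑ u, Φ u j ^ 2 := by
        rw [dotProduct, Finset.mul_sum]
        exact Finset.sum_congr rfl fun _ _ => by ring
      rw [this, hcol, mul_one]
    rw [h9] at h8
    have h10 := Finset.sum_le_sum (s := Finset.univ) fun u _ => h1 u
    rw [← Finset.mul_sum] at h10
    have : μ j * ∑ u, μ j * Φ u j ^ 2 / G.degree u ≤ μ j * 2 := by
      refine h10.trans ?_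
      linarith
    exact le_of_mul_le_mul_left this h0
  obtain ⟨F, hF⟩ : ∃ F : Fin n → ℝ, ∀ u, F u = ∑ j ∈ I, μ j * Φ u j ^ 2 := ⟨_, fun _ => rfl⟩
  have hF0 : ∀ u, 0 ≤ F u := fun u => by
    rw [hF]; exact Finset.sum_nonneg fun j _ => mul_nonneg (hμ j) (sq_nonneg _)
  have hF1 : ∀ u, F u ≤ G.degree u := fun u => by
    rw [hF, hdiag]
    exact Finset.sum_le_sum_of_subset_of_nonneg (Finset.subset_univ _)
      fun j _ _ => mul_nonneg (hμ j) (sq_nonneg _)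
  have hFsum : ∑ u, F u = ∑ i ∈ I, μ i := by
    simp only [hF]
    rw [Finset.sum_comm]
    refine Finset.sum_congr rfl fun j _ => ?_
    rw [← Finset.mul_sum, hcol, mul_one]
  obtain ⟨t, ht⟩ : ∃ t : Fin n → ℝ, ∀ u, t u = F u / G.degree u := ⟨_, fun _ => rfl⟩
  have ht0 : ∀ u, 0 ≤ t u := fun u => by rw [ht]; exact div_nonneg (hF0 u) (by positivity)
  have ht1 : ∀ u, t u ≤ 1 := fun u => by
    rw [ht]; exact div_le_one_of_le₀ (hF1 u) (by positivity)
  have htF : ∀ u, t u * G.degree u = F u := by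
    intro u
    rw [ht]
    by_cases h : (G.degree u : ℝ) = 0
    · have h1 := hF0 u
      have h2 := hF1 u
      rw [h] at h2 ⊢
      linarith
    · exact div_mul_cancel₀ _ h
  have htsum : ∑ u, t u ≤ H.card := by
    have : ∑ u, t u = ∑ j ∈ I, ∑ u, μ j * Φ u j ^ 2 / G.degree u := by
      rw [Finset.sum_comm]
      refine Finset.sum_congr rfl fun u _ => ?_
      rw [ht, hF, Finset.sum_div]
    rw [this]
    refine (Finset.sum_le_sum fun j _ => hj j).trans ?_
    rw [hH]; simp [mul_comm]
  obtain ⟨u0, hu0, hmin⟩ := Finset.exists_min_image H (fun u => (G.degree u : ℝ)) hne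
  have hkey : 0 ≤ ∑ u, ((if u ∈ H then 1 else 0) - t u) * ((G.degree u : ℝ) - G.degree u0) := by
    refine Finset.sum_nonneg fun u _ => ?_
    split_ifs with hu
    · exact mul_nonneg (sub_nonneg.2 (ht1 u)) (sub_nonneg.2 (hmin u hu))
    · exact mul_nonneg_of_nonpos_of_nonpos (by linarith [ht0 u]) (sub_nonpos.2 (hord u0 hu0 u hu))
  have hexp : ∑ u, ((if u ∈ H then 1 else 0) - t u) * ((G.degree u : ℝ) - G.degree u0) =
      ∑ u ∈ H, (G.degree u : ℝ) - ∑ u, F u - (G.degree u0 : ℝ) * (H.card - ∑ u, t u) := by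
    have e1 : ∀ u, ((if u ∈ H then 1 else 0) - t u) * ((G.degree u : ℝ) - G.degree u0) =
        (if u ∈ H then (G.degree u : ℝ) else 0) - F u
          - (G.degree u0 : ℝ) * ((if u ∈ H then 1 else 0) - t u) := by
      intro u
      rw [← htF]
      split_ifs <;> ring
    simp only [e1, Finset.sum_sub_distrib, ← Finset.mul_sum]
    simp
  rw [hexp, hFsum] at hkey
  have : 0 ≤ (G.degree u0 : ℝ) * (H.card - ∑ u, t u) := mul_nonneg (by positivity) (sub_nonneg.2 htsum)
  linarith

end

/-- for a graph `G` on `n` vertices and `1 ≤ k ≤ (n-1)/2`,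
`∑_{i=1}^k λ_i(L(G)) ≤ |E| + (1/2)(∑_{i=1}^{2k} min{d_i(G),k} − ∑_{i=2k+1}^{n} max{0, d_i(G)−k})`. -/
theorem sum_lapEigs_le_of_degrees {n : ℕ} (G : SimpleGraph (Fin n)) [DecidableRel G.Adj]
    (k : ℕ) (hk1 : 1 ≤ k) (hk2 : k ≤ (n - 1) / 2) :
    ∑ i ∈ Finset.Icc 1 k, ithLargest (lapEigs G) i ≤
      (G.edgeFinset.card : ℝ) +
        (1 / 2) * ((∑ i ∈ Finset.Icc 1 (2 * k), min (ithLargest (degTuple G) i) (k : ℝ)) -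
          ∑ i ∈ Finset.Icc (2 * k + 1) n, max 0 (ithLargest (degTuple G) i - (k : ℝ))) := by
  obtain ⟨I, hI, -, hIs, -⟩ := gm_ith (lapEigs G) k (by omega)
  obtain ⟨H, hH, hord, hHs, hHc⟩ := gm_ith (degTuple G) (2 * k) (by omega)
  have hl := hIs id
  simp only [id] at hl
  rw [hl, hHs (fun x => min x (k : ℝ)), hHc (fun x => max 0 (x - (k : ℝ)))]
  obtain ⟨Φ, hΦ, hL⟩ := gm_spec' _ (SimpleGraph.posSemidef_lapMatrix ℝ G).isHermitian
  change G.lapMatrix ℝ = Φ * Matrix.diagonal (lapEigs G) * Φ.transpose at hL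
  have hA := gm_A G Φ (lapEigs G) hΦ hL (SimpleGraph.posSemidef_lapMatrix ℝ G).eigenvalues_nonneg I H
    (by omega) (Finset.card_pos.1 (by omega)) hord
  have hp := gm_proj Φ hΦ I
  have hB := gm_graph G k _ hp.1 (by rw [hp.2, hI])
  rw [gm_proj_tr Φ _ _ hΦ hL I] at hB
  have hE : 2 * (G.edgeFinset.card : ℝ) = ∑ u, (G.degree u : ℝ) := by
    exact_mod_cast (SimpleGraph.sum_degrees_eq_twice_card_edges G).symm
  rw [← Finset.sum_add_sum_compl H] at hE hB
  have hmm : ∑ u ∈ Hᶜ, max 0 (degTuple G u - (k : ℝ)) =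
      ∑ u ∈ Hᶜ, (G.degree u : ℝ) - ∑ u ∈ Hᶜ, min (G.degree u : ℝ) k := by
    rw [← Finset.sum_sub_distrib]
    refine Finset.sum_congr rfl fun u _ => ?_
    rw [degTuple]
    rcases le_total (G.degree u : ℝ) k with h | h
    · rw [min_eq_left h, max_eq_left (by linarith)]; ring
    · rw [min_eq_right h, max_eq_right (by linarith)]
  rw [hmm]
  have hd : ∑ u ∈ H, min (degTuple G u) (k : ℝ) = ∑ u ∈ H, min (G.degree u : ℝ) k := rfl
  rw [hd]
  linarith
end

section
/- Let G = (V,E) be a finite simple graph with |V| = n, and let k be an integer with 1 ≤ k ≤ n−1. Then ∑_{i=1}^{k} λ_i(L(G)) ≤ |E| + C(k+1, 2) + min{ C(n−k−1, 2), C(k, 2) }, where C(a,b) denotes the binomial coefficient a choose b. -/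
open Finset

lemma pair_poly0 (a b : ℝ) (ha : 0 ≤ a) (hb : 0 ≤ b) (ha1 : a ≤ 1) (hb1 : b ≤ 1) :
    (1-a)*(1-b) ≤ (1-(a+b)+3/2*(a*b)) * (1+(a+b)/4-3/2*(a*b)) := by
  set σ := a+b with hσ
  set π := a*b with hπ
  have h0 : 0 ≤ π := mul_nonneg ha hb
  have h1 : σ - 1 ≤ π := by nlinarith
  have h2 : 4*π ≤ σ^2 := by nlinarith [sq_nonneg (a-b)]
  have h3 : 0 ≤ σ := by positivity
  have h4 : σ ≤ 2 := by linarith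
  have key : (1-a)*(1-b) = 1 - σ + π := by rw [hσ, hπ]; ring
  rw [key]
  clear_value σ π
  have e : 0 ≤ σ*(2-σ)*(8-12*σ+9*σ^2) := by
    have : 0 ≤ 8-12*σ+9*σ^2 := by nlinarith [sq_nonneg (3*σ-2)]
    have := mul_nonneg (mul_nonneg h3 (sub_nonneg.2 h4)) this
    exact this
  -- concave in π
  have hd : 0 ≤ σ^2/4 - π := by linarith
  suffices 0 ≤ σ/4 - σ^2/4 + 15/8*σ*π - 9/4*π^2 - π by nlinarith
  rcases le_total σ 1 with h | h
  · rcases h3.eq_or_lt with h5 | h5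
    · have : π = 0 := by subst h5; nlinarith
      subst this; subst h5; norm_num
    · have hE : 0 ≤ σ/64*(16-32*σ+30*σ^2-9*σ^3) := by nlinarith
      have g0 : 0 ≤ σ/4 - σ^2/4 := by nlinarith
      have : 0 ≤ (σ^2/4)*(σ/4 - σ^2/4 + 15/8*σ*π - 9/4*π^2 - π) := by
        have := mul_nonneg hd g0
        have := mul_nonneg h0 hE
        have := mul_nonneg (mul_nonneg h0 hd) (sq_nonneg σ)
        nlinarith
      exact nonneg_of_mul_nonneg_right this (by positivity)
  · rcases h4.eq_or_lt with h5 | h5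
    · have : π = 1 := by subst h5; nlinarith
      subst this; subst h5; norm_num
    · have hE : 0 ≤ σ/64*(16-32*σ+30*σ^2-9*σ^3) := by nlinarith
      have g0 : 0 ≤ (σ-1)*(5/8-5/8*(σ-1)) := mul_nonneg (by linarith) (by linarith)
      have hp : 0 ≤ π - (σ-1) := by linarith
      have hw : 0 < σ^2/4-(σ-1) := by nlinarith
      have : 0 ≤ (σ^2/4-(σ-1))*(σ/4 - σ^2/4 + 15/8*σ*π - 9/4*π^2 - π) := by
        have h1 := mul_nonneg hd g0
        have h2 := mul_nonneg hp hE
        have h3 := mul_nonneg (mul_nonneg hp hd) hw.le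
        nlinarith
      exact nonneg_of_mul_nonneg_right this hw

lemma pair_poly (a b l : ℝ) (hl : 3/2 ≤ l) (ha : 0 ≤ a) (hb : 0 ≤ b) (ha1 : a ≤ 1) (hb1 : b ≤ 1) :
    (1-a)*(1-b) ≤ (1-a-b+l*(a*b)) * ((1/2+l/2*a)*(1-b)+(1/2+l/2*b)*(1-a)) := by
  have h0 := pair_poly0 a b ha hb ha1 hb1
  have hab : 0 ≤ a*b := mul_nonneg ha hb
  have h1 : 1-(a+b)+3/2*(a*b) ≤ 1-a-b+l*(a*b) := by nlinarith
  have h2 : 1+(a+b)/4-3/2*(a*b) ≤ (1/2+l/2*a)*(1-b)+(1/2+l/2*b)*(1-a) := by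
    nlinarith [mul_nonneg ha (sub_nonneg.2 hb1), mul_nonneg hb (sub_nonneg.2 ha1)]
  have h3 : 0 ≤ 1-(a+b)+3/2*(a*b) := by
    nlinarith [mul_nonneg (sub_nonneg.2 ha1) (sub_nonneg.2 hb1)]
  have h4 : 0 ≤ (1/2+l/2*a)*(1-b)+(1/2+l/2*b)*(1-a) := by
    have := sub_nonneg.2 ha1
    have := sub_nonneg.2 hb1
    have : 0 ≤ l := by linarith
    positivity
  calc _ ≤ _ := h0
    _ ≤ _ := mul_le_mul_of_nonneg_left h2 h3
    _ ≤ _ := mul_le_mul_of_nonneg_right h1 h4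

lemma pair_bound (a b l r : ℝ) (hl : 3/2 ≤ l) (ha : 0 ≤ a) (hb : 0 ≤ b) (ha1 : a < 1) (hb1 : b < 1) :
    a + b - 2*r - 1 ≤ l*(a*b) + ((1/2+l/2*a)/(1-a) + (1/2+l/2*b)/(1-b))*r^2 := by
  have hp := pair_poly a b l hl ha hb ha1.le hb1.le
  have xa : 0 < 1-a := by linarith
  have xb : 0 < 1-b := by linarith
  have hl0 : 0 < l := by linarith
  set F := (1/2+l/2*a)/(1-a) + (1/2+l/2*b)/(1-b) with hF
  have hF0 : 0 < F := by positivity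
  have hFe : F*((1-a)*(1-b)) = (1/2+l/2*a)*(1-b)+(1/2+l/2*b)*(1-a) := by
    rw [hF]; field_simp
  have hAF : 1 ≤ (1-a-b+l*(a*b))*F := by
    rw [← hFe] at hp
    have hx : 0 < (1-a)*(1-b) := by positivity
    have : 1 * ((1-a)*(1-b)) ≤ ((1-a-b+l*(a*b))*F) * ((1-a)*(1-b)) := by linarith
    exact le_of_mul_le_mul_right this hx
  have : 0 ≤ F*(F*r^2+2*r+(1-a-b+l*(a*b))) := by nlinarith [sq_nonneg (F*r+1)]
  have := nonneg_of_mul_nonneg_right this hF0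
  linarith

lemma proj_bound {n : ℕ} (H : SimpleGraph (Fin n)) [DecidableRel H.Adj]
    (R : Fin n → Fin n → ℝ) (hs : ∀ u w, R u w = R w u)
    (hd : ∀ u, ∑ w, R u w ^ 2 ≤ R u u) (ht : 2 ≤ ∑ u, R u u) :
    ∑ u, ∑ w, (if H.Adj u w then (R u u + R w w - 2 * R u w - 1) else 0) ≤
      2 * (∑ u, R u u)^2 := by
  set τ := ∑ u, R u u with hτ
  set l : ℝ := 2 - 1/τ with hl
  have hl1 : 3/2 ≤ l := by
    have : 1/τ ≤ 1/2 := one_div_le_one_div_of_le (by norm_num) ht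
    linarith
  have hlτ : l*τ = 2*τ-1 := by rw [hl]; field_simp
  have hp0 : ∀ u, 0 ≤ R u u := fun u => (Finset.sum_nonneg fun w _ => sq_nonneg _).trans (hd u)
  have hle : ∀ u w, u ≠ w → R u u ^2 + R u w ^2 ≤ R u u := fun u w h => by
    refine le_trans ?_ (hd u)
    rw [← Finset.sum_pair (f := fun w => R u w ^2) h]
    exact Finset.sum_le_sum_of_subset_of_nonneg (Finset.subset_univ _) (fun _ _ _ => sq_nonneg _)
  have hsq : ∀ u, R u u ^2 ≤ R u u := fun u =>
    (Finset.single_le_sum (f := fun w => R u w ^2) (fun _ _ => sq_nonneg _) (Finset.mem_univ u)).trans (hd u)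
  have hp1 : ∀ u, R u u ≤ 1 := fun u => by nlinarith [hsq u, hp0 u]
  set φ : Fin n → ℝ := fun u => (1/2+l/2*R u u)/(1-R u u) with hφ
  have hφ0 : ∀ u, 0 ≤ φ u := fun u => by
    have := hp0 u
    have := sub_nonneg.2 (hp1 u)
    have : 0 ≤ l := by linarith
    simp only [hφ]; positivity
  have hφb : ∀ u, φ u * (R u u - R u u ^2) ≤ R u u/2 + l/2*R u u^2 := fun u => by
    rcases (hp1 u).eq_or_lt with h | h
    · simp [hφ, h]; linarith
    · have : (0:ℝ) < 1 - R u u := by linarith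
      simp only [hφ]
      apply le_of_eq
      field_simp
  have hpair : ∀ u w, (if H.Adj u w then (R u u + R w w - 2 * R u w - 1) else 0) ≤
      l * (R u u * R w w) + (φ u + φ w) * R u w ^2
        - (if u = w then l * R u u ^2 + 2 * φ u * R u u^2 else 0) := fun u w => by
    by_cases h : u = w
    · subst h; simp; nlinarith
    · simp only [h, if_false, sub_zero]
      have hn : 0 ≤ l * (R u u * R w w) + (φ u + φ w) * R u w ^2 := by
        have := hp0 u
        have := hp0 w
        have := hφ0 u
        have := hφ0 w
        have : 0 ≤ l := by linarith
        positivity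
      split_ifs
      · rcases (hp1 u).eq_or_lt with h1 | h1
        · have h2 := hle u w h
          have h3 : R u w = 0 := by
            rw [h1] at h2
            exact pow_eq_zero_iff (two_ne_zero) |>.1 (le_antisymm (by linarith) (sq_nonneg _))
          rw [h3, h1]; nlinarith [hp0 w]
        · rcases (hp1 w).eq_or_lt with h4 | h4
          · have h2 := hle w u (Ne.symm h)
            have h3 : R u w = 0 := by
              rw [h4] at h2
              rw [hs]
              exact pow_eq_zero_iff (two_ne_zero) |>.1 (le_antisymm (by linarith) (sq_nonneg _))
            rw [h3, h4]; nlinarith [hp0 u]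
          · exact pair_bound _ _ l _ hl1 (hp0 u) (hp0 w) h1 h4
      · exact hn
  refine (Finset.sum_le_sum fun u _ => Finset.sum_le_sum fun w _ => hpair u w).trans ?_
  have e1 : ∑ u, ∑ w, (l * (R u u * R w w) + (φ u + φ w) * R u w ^2
        - (if u = w then l * R u u ^2 + 2 * φ u * R u u^2 else 0)) =
      l * τ^2 + 2 * ∑ u, φ u * ∑ w, R u w ^2 - ∑ u, (l * R u u ^2 + 2 * φ u * R u u^2) := by
    simp only [Finset.sum_sub_distrib, Finset.sum_add_distrib, Finset.sum_ite_eq, Finset.mem_univ,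
      if_true, add_mul]
    have : ∑ u, ∑ w, φ w * R u w ^2 = ∑ u, ∑ w, φ u * R u w ^2 := by
      rw [Finset.sum_comm]
      exact Finset.sum_congr rfl fun u _ => Finset.sum_congr rfl fun w _ => by rw [hs]
    rw [this, sq τ, hτ, Finset.sum_mul_sum]
    simp only [Finset.mul_sum]
    rw [← Finset.sum_add_distrib, ← Finset.sum_add_distrib]
    congr 1
    rw [Finset.sum_add_distrib, Finset.sum_add_distrib]
    congr 1
    rw [← Finset.sum_add_distrib]
    refine Finset.sum_congr rfl fun u _ => ?_
    rw [← Finset.sum_add_distrib]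
    exact Finset.sum_congr rfl fun w _ => by ring
  rw [e1]
  have e2 : 2 * ∑ u, φ u * ∑ w, R u w ^2 - ∑ u, (l * R u u ^2 + 2 * φ u * R u u^2) ≤ ∑ u, R u u := by
    rw [Finset.mul_sum, ← Finset.sum_sub_distrib]
    refine Finset.sum_le_sum fun u _ => ?_
    have := mul_le_mul_of_nonneg_left (hd u) (hφ0 u)
    have := hφb u
    nlinarith
  rw [← hτ] at e2
  nlinarith


noncomputable def QF {n : ℕ} (H : SimpleGraph (Fin n)) [DecidableRel H.Adj] (x : Fin n → ℝ) : ℝ :=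
  ∑ u, ∑ w, if H.Adj u w then (x u - x w)^2 else 0

lemma QF_eq {n : ℕ} (H : SimpleGraph (Fin n)) [DecidableRel H.Adj] (x : Fin n → ℝ) :
    QF H x = 2 * (x ⬝ᵥ (H.lapMatrix ℝ).mulVec x) := by
  have := SimpleGraph.lapMatrix_toLinearMap₂' ℝ H x
  rw [Matrix.toLinearMap₂'_apply'] at this
  rw [this, QF]; ring

lemma deg_add_le {n : ℕ} (H : SimpleGraph (Fin n)) [DecidableRel H.Adj] (u v : Fin n)
    (h : H.Adj u v) : H.degree u + H.degree v ≤ H.edgeFinset.card + 1 := by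
  rw [← H.card_incidenceFinset_eq_degree, ← H.card_incidenceFinset_eq_degree,
    ← Finset.card_union_add_card_inter]
  refine Nat.add_le_add (Finset.card_le_card ?_) ?_
  · exact Finset.union_subset (H.incidenceFinset_subset u) (H.incidenceFinset_subset v)
  · have : Nonempty (Sym2 (Fin n)) := ⟨s(u,v)⟩
    rw [Finset.card_le_one_iff_subset_singleton]
    refine ⟨s(u,v), fun e he => ?_⟩
    simp only [Finset.mem_inter, SimpleGraph.mem_incidenceFinset] at he
    have := H.incidenceSet_inter_incidenceSet_subset h.ne ⟨he.1, he.2⟩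
    simpa using this

lemma eig_le {n : ℕ} (H : SimpleGraph (Fin n)) [DecidableRel H.Adj] (x : Fin n → ℝ) (hx : x ≠ 0)
    (μ : ℝ) (h : (H.lapMatrix ℝ).mulVec x = μ • x) : μ ≤ H.edgeFinset.card + 1 := by
  have hlap : ∀ u, μ * x u = ∑ w ∈ H.neighborFinset u, (x u - x w) := fun u => by
    have := congrFun h u
    rw [SimpleGraph.lapMatrix_mulVec_apply] at this
    simp only [Pi.smul_apply, smul_eq_mul] at this
    rw [← this, Finset.sum_sub_distrib]; simp
  by_cases hz : ∀ u w, H.Adj u w → x u = x w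
  · obtain ⟨u, hu⟩ := Function.ne_iff.1 hx
    have : μ * x u = 0 := by
      rw [hlap u]
      exact Finset.sum_eq_zero fun w hw => by
        rw [hz u w (by simpa using hw), sub_self]
    have : μ = 0 := (mul_eq_zero.1 this).resolve_right hu
    rw [this]; positivity
  · push Not at hz
    obtain ⟨a, b, hab, hne⟩ := hz
    let S : Finset (Fin n × Fin n) := Finset.univ.filter fun p => H.Adj p.1 p.2
    obtain ⟨⟨u, v⟩, huv, hmax⟩ := S.exists_max_image (fun p => x p.1 - x p.2) ⟨(a,b), by simp [S, hab]⟩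
    simp only [S, Finset.mem_filter, Finset.mem_univ, true_and, Prod.forall] at huv hmax
    have hpos : 0 < x u - x v := by
      rcases lt_or_gt_of_ne hne with h1 | h1
      · have := hmax b a hab.symm; linarith
      · have := hmax a b hab; linarith
    have h1 : μ * x u ≤ H.degree u * (x u - x v) := by
      rw [hlap u]
      refine (Finset.sum_le_card_nsmul _ _ (x u - x v) fun w hw => hmax u w (by simpa using hw)).trans ?_
      simp
    have h2 : -(μ * x v) ≤ H.degree v * (x u - x v) := by
      rw [hlap v, ← Finset.sum_neg_distrib]
      refine (Finset.sum_le_card_nsmul _ _ (x u - x v) fun w hw => ?_).trans ?_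
      · have := hmax w v (by simpa using (show H.Adj v w by simpa using hw).symm)
        linarith
      simp
    have h3 : (H.degree u + H.degree v : ℝ) ≤ H.edgeFinset.card + 1 := by
      exact_mod_cast deg_add_le H u v huv
    have : μ * (x u - x v) ≤ (H.edgeFinset.card + 1) * (x u - x v) := by nlinarith
    exact le_of_mul_le_mul_right this hpos

lemma QF_le {n : ℕ} (H : SimpleGraph (Fin n)) [DecidableRel H.Adj] (x : Fin n → ℝ) :
    QF H x ≤ 2 * ((H.edgeFinset.card + 1) * ∑ u, x u ^2) := by
  set c : ℝ := H.edgeFinset.card + 1 with hc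
  have hM : (c • (1 : Matrix (Fin n) (Fin n) ℝ) - H.lapMatrix ℝ).IsHermitian := by
    refine Matrix.IsHermitian.sub ?_ (H.isHermitian_lapMatrix ℝ)
    simp [Matrix.IsHermitian]
  have hps : (c • (1 : Matrix (Fin n) (Fin n) ℝ) - H.lapMatrix ℝ).PosSemidef := by
    rw [hM.posSemidef_iff_eigenvalues_nonneg]
    intro i
    have h1 := hM.mulVec_eigenvectorBasis i
    have hne : (⇑(hM.eigenvectorBasis i) : Fin n → ℝ) ≠ 0 := by
      intro h0
      apply hM.eigenvectorBasis.orthonormal.ne_zero i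
      ext j
      exact congrFun h0 j
    have h2 : (H.lapMatrix ℝ).mulVec (hM.eigenvectorBasis i) =
        (c - hM.eigenvalues i) • ⇑(hM.eigenvectorBasis i) := by
      rw [Matrix.sub_mulVec, Matrix.smul_mulVec, Matrix.one_mulVec] at h1
      rw [sub_smul, ← h1, sub_sub_cancel]
    have := eig_le H _ hne _ h2
    simp only [Pi.zero_apply]
    linarith
  have := hps.dotProduct_mulVec_nonneg x
  rw [star_trivial, Matrix.sub_mulVec, Matrix.smul_mulVec, Matrix.one_mulVec, dotProduct_sub,
    dotProduct_smul] at this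
  rw [QF_eq]
  have h3 : x ⬝ᵥ x = ∑ u, x u ^2 := by simp [dotProduct, sq]
  rw [h3, smul_eq_mul] at this
  linarith

lemma dart_sum {n : ℕ} (H : SimpleGraph (Fin n)) [DecidableRel H.Adj] :
    ∑ u, ∑ w, (if H.Adj u w then (1:ℝ) else 0) = 2 * H.edgeFinset.card := by
  simp_rw [← SimpleGraph.degree_eq_sum_if_adj]
  exact_mod_cast H.sum_degrees_eq_twice_card_edges

lemma QF_compl {n : ℕ} (H : SimpleGraph (Fin n)) [DecidableRel H.Adj] (x : Fin n → ℝ) :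
    QF H x + QF Hᶜ x = 2 * n * ∑ u, x u ^2 - 2 * (∑ u, x u)^2 := by
  have : QF H x + QF Hᶜ x = ∑ u, ∑ w, (x u - x w)^2 := by
    unfold QF
    rw [← Finset.sum_add_distrib]
    refine Finset.sum_congr rfl fun u _ => ?_
    rw [← Finset.sum_add_distrib]
    refine Finset.sum_congr rfl fun w _ => ?_
    by_cases h : u = w
    · subst h; simp
    · by_cases h2 : H.Adj u w <;> simp [SimpleGraph.compl_adj, h, h2]
  rw [this]
  simp only [sub_sq, Finset.sum_add_distrib, Finset.sum_sub_distrib, Finset.sum_const,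
    Finset.card_univ, Fintype.card_fin, nsmul_eq_mul, ← Finset.mul_sum]
  have : ∑ i, 2 * x i * ∑ j, x j = 2 * (∑ i, x i)^2 := by
    rw [← Finset.sum_mul, ← Finset.mul_sum]; ring
  rw [this]
  ring

lemma card_compl_edges {n : ℕ} (H : SimpleGraph (Fin n)) [DecidableRel H.Adj] :
    (H.edgeFinset.card : ℝ) + Hᶜ.edgeFinset.card = n * (n-1) / 2 := by
  have h1 := dart_sum H
  have h2 := dart_sum Hᶜ
  have : ∑ u, ∑ w, (if H.Adj u w then (1:ℝ) else 0) + ∑ u, ∑ w, (if Hᶜ.Adj u w then (1:ℝ) else 0)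
      = ∑ u : Fin n, ∑ w : Fin n, (1 - if u = w then (1:ℝ) else 0) := by
    rw [← Finset.sum_add_distrib]
    refine Finset.sum_congr rfl fun u _ => ?_
    rw [← Finset.sum_add_distrib]
    refine Finset.sum_congr rfl fun w _ => ?_
    by_cases h : u = w
    · subst h; simp
    · by_cases h2 : H.Adj u w <;> simp [SimpleGraph.compl_adj, h, h2]
  simp only [Finset.sum_sub_distrib, Finset.sum_ite_eq, Finset.mem_univ, if_true, Finset.sum_const,
    Finset.card_univ, Fintype.card_fin, nsmul_eq_mul, mul_one] at this
  linarith

lemma QF_shift {n : ℕ} (H : SimpleGraph (Fin n)) [DecidableRel H.Adj] (x : Fin n → ℝ) (c : ℝ) :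
    QF H (fun u => x u - c) = QF H x := by
  unfold QF; simp

lemma family_bound {n : ℕ} (H : SimpleGraph (Fin n)) [DecidableRel H.Adj] (I : Finset (Fin n))
    (y : Fin n → Fin n → ℝ)
    (hB : ∀ α : Fin n → ℝ, ∑ w, (∑ i ∈ I, α i * y i w)^2 ≤ ∑ i ∈ I, α i ^2)
    (ht : 2 ≤ ∑ i ∈ I, ∑ u, y i u ^2) :
    ∑ i ∈ I, QF H (y i) ≤ 2 * H.edgeFinset.card + 2 * (∑ i ∈ I, ∑ u, y i u ^2)^2 := by
  have hτ : ∑ u, ∑ i ∈ I, y i u * y i u = ∑ i ∈ I, ∑ u, y i u ^2 := by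
    rw [Finset.sum_comm]; simp only [sq]
  have := proj_bound H (fun u w => ∑ i ∈ I, y i u * y i w)
    (fun u w => Finset.sum_congr rfl fun i _ => mul_comm _ _)
    (fun u => by simpa only [sq] using hB (fun i => y i u)) (by rw [hτ]; exact ht)
  rw [hτ] at this
  have e : ∑ i ∈ I, QF H (y i) = ∑ u, ∑ w, (if H.Adj u w then
      ((∑ i ∈ I, y i u * y i u) + (∑ i ∈ I, y i w * y i w) - 2 * (∑ i ∈ I, y i u * y i w) - 1) else 0)
      + 2 * H.edgeFinset.card := by
    rw [← dart_sum, ← Finset.sum_add_distrib]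
    unfold QF
    rw [Finset.sum_comm]
    refine Finset.sum_congr rfl fun u _ => ?_
    rw [Finset.sum_comm, ← Finset.sum_add_distrib]
    refine Finset.sum_congr rfl fun w _ => ?_
    split_ifs
    · rw [sub_add_cancel, Finset.mul_sum, ← Finset.sum_add_distrib, ← Finset.sum_sub_distrib]
      exact Finset.sum_congr rfl fun i _ => by ring
    · simp
  rw [e]; linarith

lemma bessel {n : ℕ} (I : Finset (Fin n)) (v : Fin n → Fin n → ℝ)
    (ho : ∀ i j, ∑ u, v i u * v j u = if i = j then 1 else 0) (α : Fin n → ℝ) :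
    ∑ w, (∑ i ∈ I, α i * v i w)^2 = ∑ i ∈ I, α i ^2 := by
  simp only [sq, Finset.sum_mul_sum]
  rw [Finset.sum_comm]
  refine Finset.sum_congr rfl fun i hi => ?_
  rw [Finset.sum_comm]
  have : ∀ j ∈ I, ∑ w, α i * v i w * (α j * v j w) = if i = j then α i * α j else 0 := fun j _ => by
    have := ho i j
    calc _ = α i * α j * ∑ u, v i u * v j u := by
          rw [Finset.mul_sum]; exact Finset.sum_congr rfl fun _ _ => by ring
      _ = _ := by rw [this]; split_ifs <;> simp
  rw [Finset.sum_congr rfl this, Finset.sum_ite_eq, if_pos hi]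

lemma center_le {n : ℕ} (hn : 0 < n) (z : Fin n → ℝ) :
    ∑ w, (z w - (∑ u, z u)/n)^2 = ∑ w, z w ^2 - (∑ u, z u)^2/n := by
  have : (n:ℝ) ≠ 0 := by positivity
  simp only [sub_sq, Finset.sum_add_distrib, Finset.sum_sub_distrib, Finset.sum_const,
    Finset.card_univ, Fintype.card_fin, nsmul_eq_mul, ← Finset.sum_mul, ← Finset.mul_sum]
  field_simp
  ring

theorem key {n : ℕ} (G : SimpleGraph (Fin n)) [DecidableRel G.Adj] (lam : Fin n → ℝ)
    (v : Fin n → Fin n → ℝ) (hlam : ∀ i, QF G (v i) = 2 * lam i)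
    (ho : ∀ i j, ∑ u, v i u * v j u = if i = j then 1 else 0)
    (hc : ∀ u w, ∑ i, v i u * v i w = if u = w then 1 else 0)
    (I : Finset (Fin n)) (k m : ℕ) (hI : I.card = k) (hk1 : 1 ≤ k) (hm : n = k + m + 1) :
    ∑ i ∈ I, lam i ≤ G.edgeFinset.card + (k+1) * k / 2 + min ((m:ℝ) * (m-1)/2) ((k:ℝ) * (k-1)/2) := by
  have hn0 : 0 < n := by omega
  have hnR : (n:ℝ) = k + m + 1 := by exact_mod_cast hm
  have hnp : (0:ℝ) < n := by positivity
  have hk1' : (1:ℝ) ≤ k := by exact_mod_cast hk1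
  have hm0 : (0:ℝ) ≤ m := by positivity
  have hnorm : ∀ i, ∑ u, v i u ^2 = 1 := fun i => by simpa [sq] using ho i i
  have hS : ∑ i ∈ I, QF G (v i) = 2 * ∑ i ∈ I, lam i := by
    rw [Finset.mul_sum]; exact Finset.sum_congr rfl fun i _ => hlam i
  -- first bound
  have hfirst : ∑ i ∈ I, lam i ≤ G.edgeFinset.card + (k:ℝ)^2 := by
    rcases hk1.eq_or_lt with h | h
    · subst h
      obtain ⟨i, rfl⟩ := Finset.card_eq_one.1 hI
      have := QF_le G (v i)
      rw [hnorm, hlam] at this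
      simp; linarith
    · have ht : ∑ i ∈ I, ∑ u, v i u ^2 = k := by simp [hnorm, hI]
      have hk2 : (2:ℝ) ≤ k := by exact_mod_cast h
      have := family_bound G I v (fun α => (bessel I v ho α).le) (by rw [ht]; exact hk2)
      rw [ht, hS] at this
      linarith
  by_cases hmk : k ≤ m
  · have : (k:ℝ) ≤ m := by exact_mod_cast hmk
    rw [min_eq_right (by nlinarith)]
    nlinarith
  push Not at hmk
  have hmk' : (m:ℝ) + 1 ≤ k := by exact_mod_cast hmk
  rw [min_eq_left (by nlinarith)]
  -- total sums
  have htot : ∀ (H : SimpleGraph (Fin n)) [DecidableRel H.Adj],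
      ∑ i, QF H (v i) = 4 * H.edgeFinset.card := fun H _ => by
    have e : (4:ℝ) * H.edgeFinset.card = 2 * (2 * H.edgeFinset.card) := by ring
    rw [e, ← dart_sum, Finset.mul_sum]
    unfold QF
    rw [Finset.sum_comm]
    refine Finset.sum_congr rfl fun u _ => ?_
    rw [Finset.sum_comm, Finset.mul_sum]
    refine Finset.sum_congr rfl fun w _ => ?_
    split_ifs with h
    · have h1 : ∑ i, (v i u - v i w)^2 = ∑ i, v i u * v i u - 2 * ∑ i, v i u * v i w + ∑ i, v i w * v i w := by
        rw [Finset.mul_sum, ← Finset.sum_sub_distrib, ← Finset.sum_add_distrib]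
        exact Finset.sum_congr rfl fun i _ => by ring
      rw [h1, hc, hc, hc]; simp [h.ne]; norm_num
    · simp
  have hQ0 : ∀ (H : SimpleGraph (Fin n)) [DecidableRel H.Adj] (x : Fin n → ℝ), 0 ≤ QF H x := fun H _ x =>
    Finset.sum_nonneg fun u _ => Finset.sum_nonneg fun w _ => by split_ifs <;> positivity
  have hee := card_compl_edges G
  set e : ℝ := ((G.edgeFinset.card : ℕ) : ℝ) with he
  set e' : ℝ := ((Gᶜ.edgeFinset.card : ℕ) : ℝ) with he'
  have he'0 : 0 ≤ e' := by positivity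
  have htriv : ∑ i ∈ I, lam i ≤ 2 * e := by
    have h1 : ∑ i ∈ I, QF G (v i) ≤ ∑ i, QF G (v i) :=
      Finset.sum_le_sum_of_subset_of_nonneg (Finset.subset_univ _) fun i _ _ => hQ0 G _
    rw [hS, htot] at h1
    linarith
  -- the vector of ones
  set t : Fin n → ℝ := fun i => ∑ u, v i u with ht
  have htt : ∑ i, t i ^2 = n := by
    simp only [ht, sq, Finset.sum_mul_sum]
    rw [Finset.sum_comm]
    have : ∀ u : Fin n, ∑ i, ∑ w, v i u * v i w = 1 := fun u => by
      rw [Finset.sum_comm]; simp [hc]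
    simp [this]
  set θ : ℝ := (∑ i ∈ I, t i ^2) / n with hθ
  have hθn : ∑ i ∈ I, t i ^2 = n * θ := by rw [hθ]; field_simp
  have hθ0 : 0 ≤ θ := div_nonneg (Finset.sum_nonneg fun _ _ => sq_nonneg _) hnp.le
  have hθ1 : θ ≤ 1 := by
    rw [hθ, div_le_one hnp, ← htt]
    exact Finset.sum_le_sum_of_subset_of_nonneg (Finset.subset_univ _) fun i _ _ => sq_nonneg _
  have hsplit : ∑ i ∈ I, QF Gᶜ (v i) + ∑ i ∈ Iᶜ, QF Gᶜ (v i) = 4 * e' := by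
    rw [Finset.sum_add_sum_compl, htot]
  have htsplit : ∑ i ∈ I, t i ^2 + ∑ i ∈ Iᶜ, t i ^2 = n := by
    rw [Finset.sum_add_sum_compl, htt]
  have hcomp : 2 * ∑ i ∈ I, lam i + ∑ i ∈ I, QF Gᶜ (v i) = 2 * n * k - 2 * (n * θ) := by
    rw [← hS, ← Finset.sum_add_distrib, ← hθn]
    simp only [QF_compl, hnorm, Finset.sum_sub_distrib, Finset.sum_const, hI, nsmul_eq_mul,
      ← Finset.mul_sum, ht]
    ring
  set y : Fin n → Fin n → ℝ := fun i u => v i u - t i / n with hy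
  have hQy : ∑ i ∈ Iᶜ, QF Gᶜ (v i) = ∑ i ∈ Iᶜ, QF Gᶜ (y i) :=
    Finset.sum_congr rfl fun i _ => (QF_shift _ _ _).symm
  have hcard : ((Iᶜ).card : ℝ) = m + 1 := by
    rw [Finset.card_compl, hI, Fintype.card_fin, hm]
    have : k + m + 1 - k = m + 1 := by omega
    rw [this]; push_cast; ring
  have hτ : ∑ i ∈ Iᶜ, ∑ u, y i u ^2 = m + θ := by
    have : ∀ i, ∑ u, y i u ^2 = 1 - t i ^2/n := fun i => by
      simp only [hy, ht]
      rw [center_le hn0, hnorm]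
    simp only [this, Finset.sum_sub_distrib, Finset.sum_const, nsmul_eq_mul, hcard, ← Finset.sum_div]
    have : ∑ i ∈ Iᶜ, t i ^2 = n - n * θ := by linarith
    rw [this]; field_simp; ring
  have hbes : ∀ α : Fin n → ℝ, ∑ w, (∑ i ∈ Iᶜ, α i * y i w)^2 ≤ ∑ i ∈ Iᶜ, α i ^2 := fun α => by
    rw [← bessel Iᶜ v ho α]
    have h1 := center_le hn0 (fun w => ∑ i ∈ Iᶜ, α i * v i w)
    have h2 : ∀ w, ∑ i ∈ Iᶜ, α i * y i w =
        ∑ i ∈ Iᶜ, α i * v i w - (∑ u, ∑ i ∈ Iᶜ, α i * v i u)/n := fun w => by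
      rw [Finset.sum_comm, Finset.sum_div, ← Finset.sum_sub_distrib]
      refine Finset.sum_congr rfl fun i _ => ?_
      rw [← Finset.mul_sum]
      simp only [hy, ht]; ring
    simp only [h2, h1]
    have : 0 ≤ (∑ u, ∑ i ∈ Iᶜ, α i * v i u)^2/(n:ℝ) := by positivity
    linarith
  have hmain : 2 * ∑ i ∈ I, lam i = 2*n*k - 2*(n*θ) - 4*e' + ∑ i ∈ Iᶜ, QF Gᶜ (y i) := by
    rw [← hQy]; linarith
  have hm3 : m = 0 ∨ m = 1 ∨ 2 ≤ m := by omega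
  rcases hm3 with h | h | h
  · have hmr : (m:ℝ) = 0 := by simp [h]
    rw [hmr] at hnR ⊢
    rw [hnR] at hee
    nlinarith
  · have hmr : (m:ℝ) = 1 := by simp [h]
    have hb : ∑ i ∈ Iᶜ, QF Gᶜ (y i) ≤ 2 * ((e' + 1) * (m + θ)) := by
      rw [← hτ, Finset.mul_sum, Finset.mul_sum]
      exact Finset.sum_le_sum fun i _ => QF_le _ _
    rw [hmr] at hnR hb ⊢
    rw [hnR] at hee hmain
    by_cases hsm : e ≤ (k+1)*k/2
    · linarith
    · push Not at hsm
      have h5 : e' + 1 ≤ k + 2 := by nlinarith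
      nlinarith [mul_nonneg hθ0 (sub_nonneg.2 h5)]
  · have h2 : (2:ℝ) ≤ m := by exact_mod_cast h
    have hb := family_bound Gᶜ Iᶜ y hbes (by rw [hτ]; linarith)
    rw [hτ, ← he'] at hb
    have h6 : 0 ≤ θ * (n - 2*m - θ) := mul_nonneg hθ0 (by rw [hnR]; linarith)
    rw [hnR] at hee hmain h6
    linarith

/-- for a graph `G` on `n` vertices and `1 ≤ k ≤ n-1`,
`∑_{i=1}^k λ_i(L(G)) ≤ |E| + C(k+1,2) + min{C(n−k−1,2), C(k,2)}`. -/
theorem sum_lapEigs_le_choose_bound {n : ℕ} (G : SimpleGraph (Fin n)) [DecidableRel G.Adj]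
    (k : ℕ) (hk1 : 1 ≤ k) (hk2 : k ≤ n - 1) :
    ∑ i ∈ Finset.Icc 1 k, ithLargest (lapEigs G) i ≤
      (G.edgeFinset.card : ℝ) + ((k + 1).choose 2 : ℝ) +
        min ((n - k - 1).choose 2 : ℝ) ((k.choose 2 : ℝ)) := by
  set hA := (SimpleGraph.posSemidef_lapMatrix ℝ G).isHermitian with hhA
  set v : Fin n → Fin n → ℝ := fun i u => hA.eigenvectorBasis i u with hv
  have ho : ∀ i j, ∑ u, v i u * v j u = if i = j then 1 else 0 := fun i j => by
    have := (orthonormal_iff_ite.1 hA.eigenvectorBasis.orthonormal) i j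
    rw [PiLp.inner_apply] at this
    rw [← this]
    exact Finset.sum_congr rfl fun u _ => by simp [hv, mul_comm]
  have hc : ∀ u w, ∑ i, v i u * v i w = if u = w then 1 else 0 := by
    have h1 : (Matrix.of v) * (Matrix.of v).transpose = 1 := by
      ext i j
      simp only [Matrix.mul_apply, Matrix.transpose_apply, Matrix.of_apply, Matrix.one_apply]
      exact ho i j
    have h2 := mul_eq_one_comm.1 h1
    intro u w
    have := congrFun (congrFun h2 u) w
    simpa only [Matrix.mul_apply, Matrix.transpose_apply, Matrix.of_apply, Matrix.one_apply] using this
  have hlam : ∀ i, QF G (v i) = 2 * lapEigs G i := fun i => by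
    rw [QF_eq]
    have h1 : (G.lapMatrix ℝ).mulVec (v i) = lapEigs G i • v i := hA.mulVec_eigenvectorBasis i
    rw [h1, dotProduct_smul, smul_eq_mul]
    have h2 : v i ⬝ᵥ v i = 1 := by simpa [dotProduct] using ho i i
    rw [h2, mul_one]
  have hn : 0 < n := by omega
  obtain ⟨m, hm⟩ : ∃ m, n = k + m + 1 := ⟨n - k - 1, by omega⟩
  have hmm : n - k - 1 = m := by omega
  set g : ℕ → Fin n := fun i => if h : 1 ≤ i ∧ i ≤ n then
    Tuple.sort (lapEigs G) (Fin.rev ⟨i - 1, by omega⟩) else ⟨0, hn⟩ with hg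
  have hinj : Set.InjOn g (Finset.Icc 1 k) := by
    intro i hi j hj hij
    simp only [Finset.coe_Icc, Set.mem_Icc] at hi hj
    have h1 : 1 ≤ i ∧ i ≤ n := by omega
    have h2 : 1 ≤ j ∧ j ≤ n := by omega
    simp only [hg, dif_pos h1, dif_pos h2] at hij
    have := Fin.rev_injective ((Tuple.sort (lapEigs G)).injective hij)
    rw [Fin.mk.injEq] at this
    omega
  have hsum : ∑ i ∈ Finset.Icc 1 k, ithLargest (lapEigs G) i =
      ∑ j ∈ (Finset.Icc 1 k).image g, lapEigs G j := by
    rw [Finset.sum_image hinj]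
    refine Finset.sum_congr rfl fun i hi => ?_
    rw [Finset.mem_Icc] at hi
    have h1 : 1 ≤ i ∧ i ≤ n := by omega
    simp only [ithLargest, hg, dif_pos h1]
  have hcard : ((Finset.Icc 1 k).image g).card = k := by
    rw [Finset.card_image_of_injOn hinj]; simp
  rw [hsum, hmm]
  have := key G (lapEigs G) v hlam ho hc _ k m hcard hk1 hm
  simp only [Nat.cast_choose_two]
  push_cast
  rwa [add_sub_cancel_right]
end

section
/- Let G = (V,E) be a finite simple graph with |V| = n, and let k be an integer with 1 ≤ k ≤ n/2. Then ∑_{i=1}^{k} λ_i(L(G)) ≤ |E| + max{ |E(G[S])| : S ⊆ V, |S| = 2k }, where G[S] denotes the subgraph of G induced by S and E(G[S]) its edge set. -/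
open Finset

lemma aux_diag {n : ℕ} (A : Matrix (Fin n) (Fin n) ℝ) (hA : A.IsHermitian) (v : Fin n) :
    ∑ i, hA.eigenvalues i * (hA.eigenvectorBasis i v) ^ 2 = A v v := by
  have h := OrthonormalBasis.sum_inner_mul_inner hA.eigenvectorBasis
    (EuclideanSpace.single v (1:ℝ)) (WithLp.toLp 2 (fun u => A v u))
  have h2 : inner ℝ (EuclideanSpace.single v (1:ℝ)) (WithLp.toLp 2 (fun u => A v u)) = A v v := by
    simp [EuclideanSpace.inner_single_left]
  rw [h2] at h
  rw [← h]
  apply Finset.sum_congr rfl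
  intro i _
  have h3 := congrFun (hA.mulVec_eigenvectorBasis i) v
  simp only [Matrix.mulVec, dotProduct, Pi.smul_apply, smul_eq_mul] at h3
  have h4 : inner ℝ (hA.eigenvectorBasis i) (WithLp.toLp 2 (fun u => A v u))
      = hA.eigenvalues i * hA.eigenvectorBasis i v := by
    rw [← h3]
    simp [PiLp.inner_apply]
  rw [h4]
  simp [EuclideanSpace.inner_single_left]
  ring

lemma aux_norm {n : ℕ} (A : Matrix (Fin n) (Fin n) ℝ) (hA : A.IsHermitian) (i : Fin n) :
    ∑ v, (hA.eigenvectorBasis i v) ^ 2 = 1 := by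
  have h := hA.eigenvectorBasis.orthonormal.1 i
  have h2 := EuclideanSpace.real_norm_sq_eq (hA.eigenvectorBasis i)
  rw [h] at h2
  linarith

lemma aux_lap {n : ℕ} (G : SimpleGraph (Fin n)) [DecidableRel G.Adj] (x : Fin n → ℝ) (l : ℝ)
    (hx : (G.lapMatrix ℝ).mulVec x = l • x) (hn : ∑ v, x v ^ 2 = 1) (hl : 0 ≤ l) :
    ∑ v, l * x v ^ 2 / (G.degree v : ℝ) ≤ 2 := by
  rcases hl.eq_or_lt with rfl | hl
  · simp
  have hv : ∀ v, l * x v = ∑ u ∈ G.neighborFinset v, (x v - x u) := by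
    intro v
    have := congrFun hx v
    rw [SimpleGraph.lapMatrix_mulVec_apply] at this
    simp only [Pi.smul_apply, smul_eq_mul] at this
    rw [← this]
    simp
  have key : ∀ v, (l * x v) ^ 2 / (G.degree v : ℝ) ≤ ∑ u ∈ G.neighborFinset v, (x v - x u) ^ 2 := by
    intro v
    apply div_le_of_le_mul₀ (by positivity) (Finset.sum_nonneg fun _ _ => sq_nonneg _)
    rw [hv v, mul_comm]
    have := sq_sum_le_card_mul_sum_sq (s := G.neighborFinset v) (f := fun u => x v - x u)
    simpa using this
  have hq : ∑ v, ∑ u ∈ G.neighborFinset v, (x v - x u) ^ 2 = 2 * l := by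
    have h1 := SimpleGraph.lapMatrix_toLinearMap₂' ℝ G x
    rw [Matrix.toLinearMap₂'_apply', hx] at h1
    have h2 : x ⬝ᵥ (l • x) = l := by
      simp only [dotProduct, Pi.smul_apply, smul_eq_mul]
      calc _ = l * ∑ v, x v ^ 2 := by rw [Finset.mul_sum]; exact Finset.sum_congr rfl fun _ _ => by ring
        _ = l := by rw [hn, mul_one]
    rw [h2] at h1
    have h3 : ∑ v, ∑ u ∈ G.neighborFinset v, (x v - x u) ^ 2 =
        ∑ i, ∑ j, if G.Adj i j then (x i - x j) ^ 2 else 0 := by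
      refine Finset.sum_congr rfl fun v _ => ?_
      rw [← Finset.sum_filter]
      refine Finset.sum_congr ?_ fun _ _ => rfl
      ext; simp
    rw [h3]; linarith
  have h5 : l * ∑ v, l * x v ^ 2 / (G.degree v : ℝ) ≤ 2 * l := by
    rw [← hq, Finset.mul_sum]
    refine Finset.sum_le_sum fun v _ => ?_
    refine le_trans (le_of_eq ?_) (key v)
    ring
  nlinarith

lemma aux_top_s6 {n : ℕ} (d : Fin n → ℝ) (m : ℕ) (hm : m ≤ n) :
    ∃ S : Finset (Fin n), S.card = m ∧ ∀ u ∈ S, ∀ v ∉ S, d v ≤ d u := by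
  have hne : ((Finset.univ : Finset (Fin n)).powersetCard m).Nonempty := by
    apply Finset.powersetCard_nonempty.2; simpa using hm
  obtain ⟨S, hS, hmax⟩ := Finset.exists_max_image _ (fun S => ∑ v ∈ S, d v) hne
  have hc : S.card = m := (Finset.mem_powersetCard.1 hS).2
  refine ⟨S, hc, fun u hu v hv => ?_⟩
  have hv' : v ∉ S.erase u := fun h => hv (Finset.mem_of_mem_erase h)
  have := hmax (insert v (S.erase u)) (by
    rw [Finset.mem_powersetCard]
    refine ⟨Finset.subset_univ _, ?_⟩
    rw [Finset.card_insert_of_notMem hv', Finset.card_erase_of_mem hu]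
    have := Finset.card_pos.2 ⟨u, hu⟩
    omega)
  rw [Finset.sum_insert hv'] at this
  have h2 := Finset.add_sum_erase S d hu
  linarith

lemma aux_weight_s6 {n : ℕ} (d c : Fin n → ℝ) (m : ℕ) (hm1 : 1 ≤ m) (hm : m ≤ n)
    (hd : ∀ v, 0 ≤ d v) (hc0 : ∀ v, 0 ≤ c v) (hc1 : ∀ v, c v ≤ 1) (hc : ∑ v, c v ≤ m) :
    ∃ S : Finset (Fin n), S.card = m ∧ ∑ v, d v * c v ≤ ∑ v ∈ S, d v := by
  obtain ⟨S, hS, hmax⟩ := aux_top_s6 d m hm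
  refine ⟨S, hS, ?_⟩
  obtain ⟨w, hw, hmin⟩ := Finset.exists_min_image S d (Finset.card_pos.1 (by omega))
  have h1 : ∑ v, (d v - d w) * c v ≤ ∑ v, if v ∈ S then d v - d w else 0 := by
    refine Finset.sum_le_sum fun v _ => ?_
    split_ifs with h
    · nlinarith [hmin v h, hc1 v]
    · nlinarith [hmax w hw v h, hc0 v]
  rw [← Finset.sum_filter] at h1
  simp only [Finset.filter_univ_mem, Finset.sum_sub_distrib, sub_mul, Finset.sum_const, hS, nsmul_eq_mul,
    ← Finset.mul_sum] at h1
  nlinarith [hd w]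

lemma aux_edges_s6 {n : ℕ} (G : SimpleGraph (Fin n)) [DecidableRel G.Adj] (S : Finset (Fin n)) :
    ∑ v ∈ S, G.degree v ≤ G.edgeFinset.card +
      (G.edgeFinset.filter (fun e => ∀ v ∈ e, v ∈ S)).card := by
  have h1 : ∑ v ∈ S, G.degree v = ∑ e ∈ G.edgeFinset, (S.filter (fun v => v ∈ e)).card := by
    refine Eq.trans ?_ (Finset.sum_card_bipartiteAbove_eq_sum_card_bipartiteBelow (fun v e => v ∈ e))
    refine Finset.sum_congr rfl fun v _ => ?_
    rw [← SimpleGraph.card_incidenceFinset_eq_degree, SimpleGraph.incidenceFinset_eq_filter]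
    rfl
  rw [h1, Finset.card_filter, Finset.card_eq_sum_ones, ← Finset.sum_add_distrib]
  refine Finset.sum_le_sum fun e he => ?_
  induction e using Sym2.ind with
  | _ a b =>
    have hsub : S.filter (fun v => v ∈ s(a,b)) ⊆ {a, b} := by
      intro v; simp
    by_cases h : ∀ v ∈ s(a,b), v ∈ S
    · rw [if_pos h]
      exact (Finset.card_le_card hsub).trans Finset.card_le_two
    · rw [if_neg h]
      simp only [Sym2.mem_iff, forall_eq_or_imp, forall_eq, not_and_or] at h
      rw [add_zero, Finset.card_le_one]
      simp only [Finset.mem_filter, Sym2.mem_iff]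
      grind

lemma aux_sum_s6 {n : ℕ} (f : Fin n → ℝ) (k : ℕ) (hk : k ≤ n) :
    ∃ T : Finset (Fin n), T.card = k ∧ ∑ i ∈ Finset.Icc 1 k, ithLargest f i = ∑ j ∈ T, f j := by
  let g : Fin k → Fin n := fun i => Tuple.sort f (Fin.rev ⟨i, by omega⟩)
  have hg : Function.Injective g := by
    intro a b h
    have h2 := Fin.rev_injective ((Tuple.sort f).injective h)
    ext; simpa using h2
  refine ⟨Finset.univ.image g, by rw [Finset.card_image_of_injective _ hg]; simp, ?_⟩
  rw [Finset.sum_image (fun a _ b _ h => hg h)]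
  rw [← Finset.Ico_add_one_right_eq_Icc, Finset.sum_Ico_eq_sum_range, Nat.add_sub_cancel, ← Fin.sum_univ_eq_sum_range (fun i => ithLargest f (1 + i))]
  refine Finset.sum_congr rfl fun i _ => ?_
  have : 1 ≤ 1 + (i:ℕ) ∧ 1 + (i:ℕ) ≤ n := by omega
  simp only [ithLargest, dif_pos this, g]
  simp

/-- for a graph `G` on `n` vertices and `1 ≤ k ≤ n/2`,
`∑_{i=1}^k λ_i(L(G)) ≤ |E| + max{|E(G[S])| : S ⊆ V, |S| = 2k}`, where `E(G[S])`
is the set of edges of `G` contained in `S`. -/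
theorem sum_lapEigs_le_max_induced {n : ℕ} (G : SimpleGraph (Fin n)) [DecidableRel G.Adj]
    (k : ℕ) (hk1 : 1 ≤ k) (hk2 : k ≤ n / 2) :
    ∑ i ∈ Finset.Icc 1 k, ithLargest (lapEigs G) i ≤
      (G.edgeFinset.card : ℝ) +
        (((((Finset.univ : Finset (Fin n)).powersetCard (2 * k)).sup
          (fun S => (G.edgeFinset.filter (fun e => ∀ v ∈ e, v ∈ S)).card) : ℕ)) : ℝ) := by
  have hn : k ≤ n := by omega
  have h2n : 2 * k ≤ n := by omega
  obtain ⟨T, hT, hsum⟩ := aux_sum_s6 (lapEigs G) k hn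
  rw [hsum]
  have hP := SimpleGraph.posSemidef_lapMatrix ℝ G
  let x : Fin n → Fin n → ℝ := fun i v => hP.isHermitian.eigenvectorBasis i v
  have hl0 : ∀ i, 0 ≤ lapEigs G i := fun i => hP.eigenvalues_nonneg i
  have hx1 : ∀ i, ∑ v, x i v ^ 2 = 1 := fun i => aux_norm _ hP.isHermitian i
  have hd : ∀ v, ∑ i, lapEigs G i * x i v ^ 2 = (G.degree v : ℝ) := by
    intro v
    have := aux_diag _ hP.isHermitian v
    simp only [SimpleGraph.lapMatrix, SimpleGraph.degMatrix, Matrix.sub_apply,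
      Matrix.diagonal_apply_eq, SimpleGraph.adjMatrix_apply, SimpleGraph.irrefl, if_false,
      sub_zero] at this
    exact this
  have hle : ∀ v, ∑ i ∈ T, lapEigs G i * x i v ^ 2 ≤ (G.degree v : ℝ) := by
    intro v
    rw [← hd v]
    exact Finset.sum_le_sum_of_subset_of_nonneg (Finset.subset_univ _)
      fun i _ _ => mul_nonneg (hl0 i) (sq_nonneg _)
  have hnn : ∀ v, 0 ≤ ∑ i ∈ T, lapEigs G i * x i v ^ 2 := fun v =>
    Finset.sum_nonneg fun i _ => mul_nonneg (hl0 i) (sq_nonneg _)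
  obtain ⟨S, hS, hle2⟩ := aux_weight_s6 (fun v => (G.degree v : ℝ))
    (fun v => (∑ i ∈ T, lapEigs G i * x i v ^ 2) / (G.degree v : ℝ)) (2 * k) (by omega) h2n
    (fun v => by positivity) (fun v => div_nonneg (hnn v) (by positivity))
    (fun v => div_le_one_of_le₀ (hle v) (by positivity))
    (by
      simp only [Finset.sum_div]
      rw [Finset.sum_comm]
      calc _ ≤ ∑ i ∈ T, (2:ℝ) := Finset.sum_le_sum fun i _ =>
            aux_lap G (x i) (lapEigs G i) (hP.isHermitian.mulVec_eigenvectorBasis i) (hx1 i) (hl0 i)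
        _ = _ := by simp [hT, mul_comm])
  have heq : ∑ j ∈ T, lapEigs G j = ∑ v, (G.degree v : ℝ) *
      ((∑ i ∈ T, lapEigs G i * x i v ^ 2) / (G.degree v : ℝ)) := by
    have : ∀ v, (G.degree v : ℝ) * ((∑ i ∈ T, lapEigs G i * x i v ^ 2) / (G.degree v : ℝ))
        = ∑ i ∈ T, lapEigs G i * x i v ^ 2 := by
      intro v
      by_cases h : (G.degree v : ℝ) = 0
      · have h1 := hle v
        have h2 := hnn v
        rw [h] at h1 ⊢
        linarith
      · field_simp
    simp only [this]
    rw [Finset.sum_comm]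
    refine Finset.sum_congr rfl fun i _ => ?_
    rw [← Finset.mul_sum, hx1, mul_one]
  rw [heq]
  refine hle2.trans ?_
  have h3 := aux_edges_s6 G S
  have h4 := Finset.le_sup (f := fun S : Finset (Fin n) =>
    (G.edgeFinset.filter (fun e => ∀ v ∈ e, v ∈ S)).card)
    (Finset.mem_powersetCard.2 ⟨Finset.subset_univ S, hS⟩)
  have h5 := h3.trans (Nat.add_le_add_left h4 _)
  exact_mod_cast h5
end

section
/- Let k ≥ 1 and let G = (V,E) be a finite simple graph with |V| ≥ k that is a forest (contains no cycles). Then ∑_{i=1}^{k} λ_i(L(G)) ≤ |E| + 2k − 1. -/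
open Finset

section helper
open Classical

variable {V : Type} [Fintype V]

noncomputable def qf (G : SimpleGraph V) (x : V → ℝ) : ℝ :=
  ∑ i, ∑ j, if G.Adj i j then (x i - x j) ^ 2 else 0

noncomputable def ne2 (G : SimpleGraph V) : ℝ :=
  ∑ i, ∑ j, if G.Adj i j then 1 else 0

noncomputable def spp (G : SimpleGraph V) (x : V → ℝ) : ℝ :=
  ∑ i, if ∃ j, G.Adj i j then x i ^ 2 else 0

def GoodG (G : SimpleGraph V) : Prop :=
  ∃ W : List (V → ℝ), 2 * (W.map (fun w => ∑ v, w v ^ 2)).sum ≤ ne2 G - 2 ∧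
    ∀ x, qf G x ≤ 4 * spp G x + 2 * (W.map (fun w => (∑ v, w v * x v) ^ 2)).sum

def restr (G : SimpleGraph V) (S : Set V) : SimpleGraph V where
  Adj a b := G.Adj a b ∧ a ∈ S ∧ b ∈ S
  symm := ⟨fun _ _ h => ⟨h.1.symm, h.2.2, h.2.1⟩⟩
  loopless := ⟨fun _ h => h.1.ne rfl⟩

lemma restr_le (G : SimpleGraph V) (S : Set V) : restr G S ≤ G := fun _ _ h => h.1

lemma split_good (G : SimpleGraph V) (S : Set V) (hS : ∀ a b, G.Adj a b → (a ∈ S ↔ b ∈ S))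
    (h1 : GoodG (restr G S)) (h2 : GoodG (restr G Sᶜ)) :
    ∃ W : List (V → ℝ), 2 * (W.map (fun w => ∑ v, w v ^ 2)).sum ≤ ne2 G - 4 ∧
    ∀ x, qf G x ≤ 4 * spp G x + 2 * (W.map (fun w => (∑ v, w v * x v) ^ 2)).sum := by
  obtain ⟨W1, t1, q1⟩ := h1
  obtain ⟨W2, t2, q2⟩ := h2
  have en : ne2 G = ne2 (restr G S) + ne2 (restr G Sᶜ) := by
    unfold ne2
    simp only [← Finset.sum_add_distrib]
    refine Finset.sum_congr rfl fun i _ => Finset.sum_congr rfl fun j _ => ?_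
    have := hS i j
    simp only [restr, Set.mem_compl_iff]
    by_cases h : G.Adj i j <;> by_cases h' : i ∈ S <;> by_cases h'' : j ∈ S <;> simp_all
  have eq : ∀ x, qf G x = qf (restr G S) x + qf (restr G Sᶜ) x := by
    intro x
    unfold qf
    simp only [← Finset.sum_add_distrib]
    refine Finset.sum_congr rfl fun i _ => Finset.sum_congr rfl fun j _ => ?_
    have := hS i j
    simp only [restr, Set.mem_compl_iff]
    by_cases h : G.Adj i j <;> by_cases h' : i ∈ S <;> by_cases h'' : j ∈ S <;> simp_all
  have es : ∀ x, spp (restr G S) x + spp (restr G Sᶜ) x ≤ spp G x := by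
    intro x
    unfold spp
    simp only [← Finset.sum_add_distrib]
    refine Finset.sum_le_sum fun i _ => ?_
    by_cases h' : i ∈ S
    · have e2 : ¬ ∃ j, (restr G Sᶜ).Adj i j := by rintro ⟨j, hj⟩; exact hj.2.1 h'
      rw [if_neg e2, add_zero]
      by_cases h : ∃ j, (restr G S).Adj i j
      · have h3 : ∃ j, G.Adj i j := h.imp fun _ h => h.1
        rw [if_pos h, if_pos h3]
      · rw [if_neg h]; split_ifs <;> positivity
    · have e2 : ¬ ∃ j, (restr G S).Adj i j := by rintro ⟨j, hj⟩; exact h' hj.2.1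
      rw [if_neg e2, zero_add]
      by_cases h : ∃ j, (restr G Sᶜ).Adj i j
      · have h3 : ∃ j, G.Adj i j := h.imp fun _ h => h.1
        rw [if_pos h, if_pos h3]
      · rw [if_neg h]; split_ifs <;> positivity
  refine ⟨W1 ++ W2, ?_, fun x => ?_⟩
  · rw [List.map_append, List.sum_append, en]; linarith
  · rw [List.map_append, List.sum_append, eq]
    linarith [q1 x, q2 x, es x]

lemma del_good (G : SimpleGraph V) (u v : V) (huv : G.Adj u v) (H : SimpleGraph V)
    (hH : ∀ a b, H.Adj a b ↔ G.Adj a b ∧ ¬ (a = u ∧ b = v) ∧ ¬ (a = v ∧ b = u))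
    (h : ∃ W : List (V → ℝ), 2 * (W.map (fun w => ∑ v, w v ^ 2)).sum ≤ ne2 H - 4 ∧
    ∀ x, qf H x ≤ 4 * spp H x + 2 * (W.map (fun w => (∑ v, w v * x v) ^ 2)).sum) :
    GoodG G := by
  obtain ⟨W, t, q⟩ := h
  have huv' : u ≠ v := huv.ne
  have key : ∀ f : V → V → ℝ, (∑ i, ∑ j, if G.Adj i j then f i j else 0) =
      (∑ i, ∑ j, if H.Adj i j then f i j else 0) + f u v + f v u := by
    intro f
    have e1 : f u v = ∑ i, ∑ j, if i = u then (if j = v then f i j else 0) else 0 := by simp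
    have e2 : f v u = ∑ i, ∑ j, if i = v then (if j = u then f i j else 0) else 0 := by simp
    rw [e1, e2]
    simp only [← Finset.sum_add_distrib]
    refine Finset.sum_congr rfl fun i _ => Finset.sum_congr rfl fun j _ => ?_
    have := hH i j
    have h2 := huv.symm
    by_cases h1 : i = u <;> by_cases h3 : j = v <;> by_cases h4 : i = v <;> by_cases h5 : j = u <;>
      simp_all
  have en : ne2 G = ne2 H + 2 := by
    unfold ne2
    rw [key (fun _ _ => 1)]; ring
  have eq : ∀ x, qf G x = qf H x + 2 * (x u - x v) ^ 2 := by
    intro x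
    unfold qf
    rw [key (fun i j => (x i - x j) ^ 2)]; ring
  have es : ∀ x, spp H x ≤ spp G x := by
    intro x
    refine Finset.sum_le_sum fun i _ => ?_
    by_cases h : ∃ j, H.Adj i j
    · have h3 : ∃ j, G.Adj i j := h.imp fun _ h => ((hH _ _).1 h).1
      rw [if_pos h, if_pos h3]
    · rw [if_neg h]; split_ifs <;> positivity
  let w : V → ℝ := fun i => if i = u then 1 else if i = v then -1 else 0
  have hw : ∀ x : V → ℝ, ∑ i, w i * x i = x u - x v := by
    intro x
    have : ∀ i, w i * x i = (if i = u then x i else 0) - (if i = v then x i else 0) := by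
      intro i
      simp only [w]
      by_cases h1 : i = u <;> by_cases h2 : i = v <;> simp_all
    simp [this, Finset.sum_sub_distrib]
  have hw2 : ∑ i, w i ^ 2 = 2 := by
    have := hw w
    simp only [sq, this]
    simp [w, huv'.symm]; norm_num
  refine ⟨w :: W, ?_, fun x => ?_⟩
  · rw [List.map_cons, List.sum_cons, en, hw2]; linarith
  · rw [List.map_cons, List.sum_cons, eq, hw]
    linarith [q x, es x]

lemma star_good (G : SimpleGraph V) (u v : V) (huv : G.Adj u v)
    (hG : ∀ a b, G.Adj a b → a = u ∨ b = u) : GoodG G := by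
  let N : Finset V := Finset.univ.filter (fun a => G.Adj u a)
  have huN : u ∉ N := by simp [N]
  have key : ∀ f : V → V → ℝ, (∑ i, ∑ j, if G.Adj i j then f i j else 0) =
      ∑ a ∈ N, (f u a + f a u) := by
    intro f
    have e1 : ∑ a ∈ N, f u a = ∑ i, ∑ j, if i = u then (if G.Adj u j then f i j else 0) else 0 := by
      rw [Finset.sum_comm]
      simp [N, Finset.sum_filter]
    have e2 : ∑ a ∈ N, f a u = ∑ i, ∑ j, if j = u then (if G.Adj u i then f i j else 0) else 0 := by
      simp [N, Finset.sum_filter]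
    rw [Finset.sum_add_distrib, e1, e2]
    simp only [← Finset.sum_add_distrib]
    refine Finset.sum_congr rfl fun i _ => Finset.sum_congr rfl fun j _ => ?_
    have := hG i j
    by_cases h1 : i = u <;> by_cases h3 : j = u
    · subst h1; subst h3; simp
    · subst h1; simp [h3]
    · subst h3; simp [h1, G.adj_comm]
    · simp_all
  set d : ℝ := (N.card : ℝ) with hd
  have hd1 : 1 ≤ d := by
    rw [hd]; exact_mod_cast Finset.card_pos.2 ⟨v, by simp [N, huv]⟩
  have en : ne2 G = 2 * d := by
    unfold ne2
    rw [key (fun _ _ => 1), Finset.sum_const, nsmul_eq_mul]; ring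
  have eq : ∀ x : V → ℝ, qf G x = 2 * (d * x u ^ 2 - 2 * x u * ∑ a ∈ N, x a + ∑ a ∈ N, x a ^ 2) := by
    intro x
    unfold qf
    rw [key (fun i j => (x i - x j) ^ 2)]
    have : ∀ a, (x u - x a) ^ 2 + (x a - x u) ^ 2 =
      2 * x u ^ 2 - (4 * x u) * x a + 2 * x a ^ 2 := by intro a; ring
    simp only [this, Finset.sum_add_distrib, Finset.sum_sub_distrib, ← Finset.mul_sum,
      Finset.sum_const, nsmul_eq_mul]
    rw [← hd]; ring
  have es : ∀ x : V → ℝ, spp G x = x u ^ 2 + ∑ a ∈ N, x a ^ 2 := by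
    intro x
    have e1 : x u ^ 2 = ∑ i, if i = u then x i ^ 2 else 0 := by simp
    rw [e1, Finset.sum_filter, ← Finset.sum_add_distrib]
    refine Finset.sum_congr rfl fun i _ => ?_
    by_cases h1 : i = u
    · subst h1
      rw [if_pos ⟨v, huv⟩]; simp
    · have : (∃ j, G.Adj i j) ↔ G.Adj u i := by
        constructor
        · rintro ⟨j, hj⟩
          rcases hG i j hj with h | h
          · exact absurd h h1
          · exact h ▸ hj.symm
        · intro h; exact ⟨u, h.symm⟩
      simp [h1, this]
  let c : ℝ := Real.sqrt ((d - 1) / (d * (d + 1)))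
  have hc : c ^ 2 = (d - 1) / (d * (d + 1)) := by
    apply Real.sq_sqrt
    apply div_nonneg <;> nlinarith
  let w : V → ℝ := fun i => if i = u then c * d else if i ∈ N then -c else 0
  have hw : ∀ x : V → ℝ, ∑ i, w i * x i = c * (d * x u - ∑ a ∈ N, x a) := by
    intro x
    have : ∀ i, w i * x i = (if i = u then c * d * x i else 0) - c * (if i ∈ N then x i else 0) := by
      intro i
      simp only [w]
      by_cases h1 : i = u
      · subst h1; simp [huN]
      · by_cases h2 : i ∈ N <;> simp [h1, h2]
    simp only [this, Finset.sum_sub_distrib, ← Finset.mul_sum]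
    simp; ring
  have hw2 : ∑ i, w i ^ 2 = d - 1 := by
    have h1 := hw w
    simp only [sq, h1]
    have h2 : ∑ a ∈ N, w a = - (d * c) := by
      have : ∀ a ∈ N, w a = -c := by
        intro a ha
        have : a ≠ u := fun h => huN (h ▸ ha)
        simp [w, ha, this]
      rw [Finset.sum_congr rfl this, Finset.sum_const, nsmul_eq_mul, ← hd]; ring
    have h3 : w u = c * d := by simp [w]
    rw [h2, h3]
    have : c * (d * (c * d) - -(d * c)) = c ^ 2 * (d * (d + 1)) := by ring
    rw [this, hc]
    field_simp
  refine ⟨[w], ?_, fun x => ?_⟩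
  · simp only [List.map_cons, List.map_nil, List.sum_cons, List.sum_nil, hw2, en]; linarith
  · simp only [List.map_cons, List.map_nil, List.sum_cons, List.sum_nil, hw, eq, es]
    have cs : (∑ a ∈ N, x a) ^ 2 ≤ d * ∑ a ∈ N, x a ^ 2 := sq_sum_le_card_mul_sum_sq
    generalize (∑ a ∈ N, x a) = s at *
    generalize (∑ a ∈ N, x a ^ 2) = Q at *
    generalize x u = t at *
    rw [mul_pow, hc]
    have hQ : s ^ 2 / d ≤ Q := by rw [div_le_iff₀ (by linarith)]; linarith
    have hd0 : d ≠ 0 := by linarith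
    have hd2 : d + 1 ≠ 0 := by linarith
    have id : (2 - d) * t ^ 2 + 2 * t * s + s ^ 2 / d + (d - 1) / (d * (d + 1)) * (d * t - s) ^ 2
        = 2 / (d + 1) * (t + s) ^ 2 := by
      field_simp; ring
    have : 0 ≤ 2 / (d + 1) * (t + s) ^ 2 := by
      have : 0 < d + 1 := by linarith
      positivity
    linarith

lemma forest_good (G : SimpleGraph V) : G.IsAcyclic → (∃ u v, G.Adj u v) → GoodG G := by
  induction G using WellFoundedLT.induction with
  | _ G ih =>
  intro hac hne
  have lt_of : ∀ H : SimpleGraph V, H ≤ G → (∃ a b, G.Adj a b ∧ ¬ H.Adj a b) → H < G := by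
    rintro H hle ⟨a, b, h1, h2⟩
    refine lt_of_le_of_ne hle ?_
    rintro rfl; exact h2 h1
  by_cases hA : ∃ S : Set V, (∀ a b, G.Adj a b → (a ∈ S ↔ b ∈ S)) ∧
      (∃ a b, G.Adj a b ∧ a ∈ S) ∧ (∃ a b, G.Adj a b ∧ a ∉ S)
  · obtain ⟨S, hS, ⟨a, b, hab, ha⟩, ⟨a', b', hab', ha'⟩⟩ := hA
    obtain ⟨W, t, q⟩ := split_good G S hS
      (ih _ (lt_of _ (restr_le _ _) ⟨a', b', hab', fun h => ha' h.2.1⟩)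
        (hac.anti (restr_le _ _)) ⟨a, b, hab, ha, (hS _ _ hab).1 ha⟩)
      (ih _ (lt_of _ (restr_le _ _) ⟨a, b, hab, fun h => h.2.1 ha⟩)
        (hac.anti (restr_le _ _)) ⟨a', b', hab', ha', fun h => ha' ((hS _ _ hab').2 h)⟩)
    exact ⟨W, by linarith, q⟩
  by_cases hB : ∃ u v, G.Adj u v ∧ (∃ a, a ≠ v ∧ G.Adj u a) ∧ (∃ b, b ≠ u ∧ G.Adj v b)
  · obtain ⟨u, v, huv, ⟨a, hav, hua⟩, ⟨b, hbu, hvb⟩⟩ := hB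
    have hbr := (SimpleGraph.isAcyclic_iff_forall_adj_isBridge.1 hac) huv
    rw [SimpleGraph.isBridge_iff] at hbr
    set H := G.deleteEdges {s(u, v)} with hHdef
    have hH : ∀ a b, H.Adj a b ↔ G.Adj a b ∧ ¬ (a = u ∧ b = v) ∧ ¬ (a = v ∧ b = u) := by
      intro a b
      simp [hHdef, SimpleGraph.deleteEdges_adj]
    have hHG : H ≤ G := fun a b h => ((hH a b).1 h).1
    have hnr : ¬ H.Reachable u v := hbr
    let S : Set V := {x | H.Reachable u x}
    have hS : ∀ a b, H.Adj a b → (a ∈ S ↔ b ∈ S) := fun a b h =>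
      ⟨fun h' => SimpleGraph.Reachable.trans h' h.reachable,
        fun h' => SimpleGraph.Reachable.trans h' h.symm.reachable⟩
    have hua' : H.Adj u a := (hH _ _).2 ⟨hua, fun h => hav h.2, fun h => huv.ne h.1⟩
    have hvb' : H.Adj v b := (hH _ _).2 ⟨hvb, fun h => huv.ne h.1.symm, fun h => hbu h.2⟩
    have huS : u ∈ S := SimpleGraph.Reachable.refl _
    have hvS : v ∉ S := hnr
    refine del_good G u v huv H hH (split_good H S hS
      (ih _ (lt_of _ ((restr_le _ _).trans hHG) ⟨u, v, huv, fun h => hvS h.2.2⟩)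
        (hac.anti ((restr_le _ _).trans hHG)) ⟨u, a, hua', huS, (hS _ _ hua').1 huS⟩)
      (ih _ (lt_of _ ((restr_le _ _).trans hHG) ⟨u, v, huv, fun h => h.2.1 huS⟩)
        (hac.anti ((restr_le _ _).trans hHG)) ⟨v, b, hvb', hvS, fun h => hvS ((hS _ _ hvb').2 h)⟩))
  push Not at hB
  have hC : ∃ u v, G.Adj u v ∧ ∀ a, G.Adj u a → ∀ b, G.Adj a b → b = u := by
    have step : ∀ u v a, G.Adj u v → G.Adj u a → a ≠ v →
        ∀ a', G.Adj u a' → ∀ b, G.Adj a' b → b = u := by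
      intro u v a huv hua hav a' hua' b hb
      by_contra hbu
      by_cases h : a' = v
      · exact hB u a' hua' ⟨a, h ▸ hav, hua⟩ b hbu hb
      · exact hB u a' hua' ⟨v, Ne.symm h, huv⟩ b hbu hb
    obtain ⟨u, v, huv⟩ := hne
    by_cases h1 : ∃ a, a ≠ v ∧ G.Adj u a
    · obtain ⟨a, h, h'⟩ := h1
      exact ⟨u, v, huv, step u v a huv h' h⟩
    by_cases h2 : ∃ a, a ≠ u ∧ G.Adj v a
    · obtain ⟨a, h, h'⟩ := h2
      exact ⟨v, u, huv.symm, step v u a huv.symm h' h⟩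
    push Not at h1 h2
    refine ⟨u, v, huv, fun a ha b hb => ?_⟩
    have : a = v := by by_contra h; exact h1 a h ha
    subst this
    by_contra h; exact h2 b h hb
  obtain ⟨u, v, huv, hstar⟩ := hC
  refine star_good G u v huv fun a b hab => ?_
  by_contra hcon
  push Not at hcon
  refine hA ⟨{x | x = u ∨ G.Adj u x}, ?_, ⟨u, v, huv, Or.inl rfl⟩, ⟨a, b, hab, ?_⟩⟩
  · have : ∀ a b, G.Adj a b → (a = u ∨ G.Adj u a) → (b = u ∨ G.Adj u b) := by
      rintro a b hab (rfl | h)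
      · exact Or.inr hab
      · exact Or.inl (hstar a h b hab)
    exact fun a b hab => ⟨this a b hab, this b a hab.symm⟩
  · rintro (h | h)
    · exact hcon.1 h
    · exact hcon.2 (hstar a h b hab)

end helper

/-- for `k ≥ 1` and a forest `G` with at least `k` vertices,
`∑_{i=1}^k λ_i(L(G)) ≤ |E| + 2k − 1`. -/
theorem sum_lapEigs_le_of_isAcyclic {n : ℕ} (G : SimpleGraph (Fin n)) [DecidableRel G.Adj]
    (hG : G.IsAcyclic) (k : ℕ) (hk1 : 1 ≤ k) (hk2 : k ≤ n) :
    ∑ i ∈ Finset.Icc 1 k, ithLargest (lapEigs G) i ≤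
      (G.edgeFinset.card : ℝ) + 2 * (k : ℝ) - 1 := by
  classical
  set hH := (SimpleGraph.posSemidef_lapMatrix ℝ G).isHermitian with hHdef
  let g : ℕ → Fin n := fun i => if h : 1 ≤ i ∧ i ≤ n then
    Tuple.sort (lapEigs G) (Fin.rev ⟨i - 1, by omega⟩) else ⟨0, by omega⟩
  have hg : ∀ i ∈ Finset.Icc 1 k, ithLargest (lapEigs G) i = lapEigs G (g i) := by
    intro i hi
    rw [Finset.mem_Icc] at hi
    have h : 1 ≤ i ∧ i ≤ n := ⟨hi.1, hi.2.trans hk2⟩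
    simp only [ithLargest, g, dif_pos h]
  have hinj : Set.InjOn g (Finset.Icc 1 k : Finset ℕ) := by
    intro i hi j hj hij
    rw [Finset.mem_coe, Finset.mem_Icc] at hi hj
    have h : 1 ≤ i ∧ i ≤ n := ⟨hi.1, hi.2.trans hk2⟩
    have h' : 1 ≤ j ∧ j ≤ n := ⟨hj.1, hj.2.trans hk2⟩
    simp only [g, dif_pos h, dif_pos h'] at hij
    have := Fin.rev_injective ((Tuple.sort (lapEigs G)).injective hij)
    simp only [Fin.mk.injEq] at this
    omega
  rw [Finset.sum_congr rfl hg]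
  let x : Fin n → Fin n → ℝ := fun i => hH.eigenvectorBasis i
  have hon : Orthonormal ℝ hH.eigenvectorBasis := hH.eigenvectorBasis.orthonormal
  have hnorm : ∀ i, ∑ v, x i v ^ 2 = 1 := by
    intro i
    have h1 := hon.1 i
    have h2 := EuclideanSpace.norm_sq_eq (hH.eigenvectorBasis i)
    rw [h1] at h2
    simp only [Real.norm_eq_abs, sq_abs] at h2
    simp only [x]
    rw [← h2]; norm_num
  have hq : ∀ i, 2 * lapEigs G i = qf G (x i) := by
    intro i
    have h1 := SimpleGraph.lapMatrix_toLinearMap₂' ℝ G (x i)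
    rw [Matrix.toLinearMap₂'_apply'] at h1
    have h2 := hH.mulVec_eigenvectorBasis i
    have h3 : (G.lapMatrix ℝ).mulVec (x i) = lapEigs G i • (x i) := h2
    rw [h3, dotProduct_smul] at h1
    have h4 : (x i) ⬝ᵥ (x i) = 1 := by
      rw [← hnorm i]; simp only [dotProduct, sq]
    rw [h4, smul_eq_mul, mul_one] at h1
    rw [h1]
    unfold qf
    rw [mul_div_cancel₀ _ (by norm_num : (2:ℝ) ≠ 0)]
    refine Finset.sum_congr rfl fun i _ => Finset.sum_congr rfl fun j _ => ?_
    congr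
  have hbes : ∀ w : Fin n → ℝ, ∑ i ∈ Finset.Icc 1 k, (∑ v, w v * x (g i) v) ^ 2 ≤ ∑ v, w v ^ 2 := by
    intro w
    have h1 := hon.sum_inner_products_le (WithLp.toLp 2 w) (s := (Finset.Icc 1 k).image g)
    rw [Finset.sum_image hinj, EuclideanSpace.norm_sq_eq] at h1
    simpa [PiLp.inner_apply, x] using h1
  have hcard : (G.edgeFinset.card : ℝ) * 2 = ne2 G := by
    have h1 := G.sum_degrees_eq_twice_card_edges
    have h2 : ((∑ v, G.degree v : ℕ) : ℝ) = ne2 G := by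
      unfold ne2
      push_cast
      refine Finset.sum_congr rfl fun i _ => ?_
      have h3 := SimpleGraph.degree_eq_sum_if_adj (R := ℝ) G i
      convert h3
    rw [← h2, h1]; push_cast; ring
  have hk1' : (1 : ℝ) ≤ k := by exact_mod_cast hk1
  by_cases hne : ∃ u v, G.Adj u v
  · obtain ⟨W, t, q⟩ := forest_good G hG hne
    have hsp : ∀ i, spp G (x i) ≤ 1 := by
      intro i
      rw [← hnorm i]
      refine Finset.sum_le_sum fun v _ => ?_
      split_ifs
      · exact le_rfl
      · positivity
    have hW : ∀ W : List (Fin n → ℝ), ∑ i ∈ Finset.Icc 1 k,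
        (W.map (fun w => (∑ v, w v * x (g i) v) ^ 2)).sum ≤
        (W.map (fun w => ∑ v, w v ^ 2)).sum := by
      intro W
      induction W with
      | nil => simp
      | cons w W ih =>
        simp only [List.map_cons, List.sum_cons, Finset.sum_add_distrib]
        linarith [hbes w]
    have h1 : ∑ i ∈ Finset.Icc 1 k, 2 * lapEigs G (g i) ≤ ∑ i ∈ Finset.Icc 1 k,
        (4 + 2 * (W.map (fun w => (∑ v, w v * x (g i) v) ^ 2)).sum) := by
      refine Finset.sum_le_sum fun i _ => ?_
      rw [hq]
      linarith [q (x (g i)), hsp (g i)]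
    rw [← Finset.mul_sum, Finset.sum_add_distrib, ← Finset.mul_sum, Finset.sum_const,
      Nat.card_Icc, nsmul_eq_mul] at h1
    have := hW W
    simp only [Nat.add_sub_cancel] at h1
    linarith
  · push Not at hne
    have h0 : ∀ i, lapEigs G i = 0 := by
      intro i
      have := hq i
      simp [qf, hne] at this
      exact this
    simp only [h0, Finset.sum_const_zero]
    have : (0 : ℝ) ≤ G.edgeFinset.card := by positivity
    linarith
end
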